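/- Fix θ ∈ ℝ and for a C² function u of (x, y, t) ∈ ℝ³ write u_X = cosθ·∂_x u − sinθ·∂_y u, u_Y = sinθ·∂_x u + cosθ·∂_y u, with u_XX, u_XY, u_Xt, u_YY, u_tt the corresponding second derivatives. Let F : ℝ³ → ℝ be any smooth ℤ³-periodic function satisfying the normalization ∫_{[0,1]³} (e^{F} − 1) dx dy dt = 0. Then there exists a smooth ℤ³-periodic function u : ℝ³ → ℝ satisfying, at every point, (u_XX + 1)(u_YY + u_tt + u_t + 1) − u_XY² − u_Xt² = e^F together with u_XX + 1 > 0 and u_YY + u_tt + u_t + 1 > 0. -/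

import Mathlib

open MeasureTheory

/-- The partial derivative of `w : ℝ³ → ℝ` in the `i`-th coordinate direction
(coordinates `(x, y, t)` correspond to indices `0, 1, 2`). -/
noncomputable def pd (i : Fin 3) (w : EuclideanSpace ℝ (Fin 3) → ℝ) :
    EuclideanSpace ℝ (Fin 3) → ℝ :=
  fun x => fderiv ℝ w x (EuclideanSpace.single i (1 : ℝ))

/-- The derivative `w_X = cos θ ∂_x w − sin θ ∂_y w`. -/
noncomputable def Xd (θ : ℝ) (w : EuclideanSpace ℝ (Fin 3) → ℝ) :
    EuclideanSpace ℝ (Fin 3) → ℝ :=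
  fun x => Real.cos θ * pd 0 w x - Real.sin θ * pd 1 w x

/-- The derivative `w_Y = sin θ ∂_x w + cos θ ∂_y w`. -/
noncomputable def Yd (θ : ℝ) (w : EuclideanSpace ℝ (Fin 3) → ℝ) :
    EuclideanSpace ℝ (Fin 3) → ℝ :=
  fun x => Real.sin θ * pd 0 w x + Real.cos θ * pd 1 w x

namespace KodairaThurston

open Filter Topology Set
open scoped ContDiff

/-- Euclidean three-space. -/
abbrev E3 := EuclideanSpace ℝ (Fin 3)

/-- The algebra of smooth `ℤ³`-periodic functions on `ℝ³`. -/
def smoothPeriodic : Subalgebra ℝ (E3 → ℝ) where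
  carrier := {f | ContDiff ℝ ∞ f ∧ ∀ (x a : E3), (∀ i, ∃ k : ℤ, a i = (k : ℝ)) → f (x + a) = f x}
  mul_mem' := fun {f g} hf hg =>
    ⟨hf.1.mul hg.1, fun x a ha => by simp [hf.2 x a ha, hg.2 x a ha]⟩
  add_mem' := fun {f g} hf hg =>
    ⟨hf.1.add hg.1, fun x a ha => by simp [hf.2 x a ha, hg.2 x a ha]⟩
  algebraMap_mem' := fun r => ⟨contDiff_const, fun _ _ _ => rfl⟩

/-- Smooth functions on the torus `ℝ³ / ℤ³`. -/
def TF : Type := smoothPeriodic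

namespace TF

noncomputable instance : CommRing TF := inferInstanceAs (CommRing smoothPeriodic)
noncomputable instance : Algebra ℝ TF := inferInstanceAs (Algebra ℝ smoothPeriodic)

instance : FunLike TF E3 ℝ := ⟨fun f => f.1, Subtype.val_injective⟩

lemma smooth (f : TF) : ContDiff ℝ ∞ (f : E3 → ℝ) := f.2.1
lemma periodic (f : TF) (x a : E3) (ha : ∀ i, ∃ k : ℤ, a i = (k : ℝ)) : f (x + a) = f x :=
  f.2.2 x a ha
lemma cont (f : TF) : Continuous (f : E3 → ℝ) := f.smooth.continuous
lemma diff (f : TF) (x : E3) : DifferentiableAt ℝ (f : E3 → ℝ) x :=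
  f.smooth.differentiable (by simp) x

@[ext] lemma ext {f g : TF} (h : ∀ x, f x = g x) : f = g := DFunLike.ext _ _ h

@[simp] lemma add_apply (f g : TF) (x : E3) : (f + g) x = f x + g x := rfl
@[simp] lemma mul_apply (f g : TF) (x : E3) : (f * g) x = f x * g x := rfl
@[simp] lemma sub_apply (f g : TF) (x : E3) : (f - g) x = f x - g x := rfl
@[simp] lemma neg_apply (f : TF) (x : E3) : (-f) x = -f x := rfl
@[simp] lemma one_apply (x : E3) : (1 : TF) x = 1 := rfl
@[simp] lemma zero_apply (x : E3) : (0 : TF) x = 0 := rfl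
@[simp] lemma smul_apply (c : ℝ) (f : TF) (x : E3) : (c • f) x = c * f x := rfl
@[simp] lemma algebraMap_apply (c : ℝ) (x : E3) : (algebraMap ℝ TF c) x = c := rfl

/-- Evaluation at a point, as an algebra homomorphism. -/
def ev (x : E3) : TF →ₐ[ℝ] ℝ where
  toFun f := f x
  map_one' := rfl
  map_mul' _ _ := rfl
  map_zero' := rfl
  map_add' _ _ := rfl
  commutes' _ := rfl

@[simp] lemma sum_apply {ι : Type*} (s : Finset ι) (f : ι → TF) (x : E3) :
    (∑ i ∈ s, f i) x = ∑ i ∈ s, f i x := by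
  exact map_sum (ev x) f s

/-- Postcomposition with a smooth function. -/
def comp (φ : ℝ → ℝ) (hφ : ContDiff ℝ ∞ φ) (f : TF) : TF :=
  ⟨fun x => φ (f x), hφ.comp f.smooth, fun x a ha => by simp only [f.periodic x a ha]⟩

@[simp] lemma comp_apply (φ : ℝ → ℝ) (hφ : ContDiff ℝ ∞ φ) (f : TF) (x : E3) :
    comp φ hφ f x = φ (f x) := rfl

/-- The reciprocal of a nowhere vanishing function. -/
noncomputable def inv (f : TF) (hf : ∀ x, f x ≠ 0) : TF :=
  ⟨fun x => (f x)⁻¹, f.smooth.inv hf, fun x a ha => by simp only [f.periodic x a ha]⟩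

@[simp] lemma inv_apply (f : TF) (hf : ∀ x, f x ≠ 0) (x : E3) : inv f hf x = (f x)⁻¹ := rfl

lemma mul_inv (f : TF) (hf : ∀ x, f x ≠ 0) : f * inv f hf = 1 := by
  ext x; simp [hf x]

lemma exists_cube_rep (x : E3) :
    ∃ y : E3, (∀ i, y i ∈ Icc (0 : ℝ) 1) ∧ ∀ f : TF, f x = f y := by
  refine ⟨WithLp.toLp 2 (fun i => Int.fract (x i)), fun i => ?_, fun f => ?_⟩
  · exact ⟨Int.fract_nonneg _, (Int.fract_lt_one _).le⟩
  · rw [← f.periodic (WithLp.toLp 2 (fun i => Int.fract (x i)))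
      (WithLp.toLp 2 (fun i => (⌊x i⌋ : ℝ))) (fun i => ⟨⌊x i⌋, rfl⟩)]
    congr 1
    refine PiLp.ext fun i => ?_
    simp

lemma isCompact_cube : IsCompact {y : E3 | ∀ i, y i ∈ Icc (0 : ℝ) 1} := by
  have h : IsCompact (Set.pi univ (fun _ : Fin 3 => Icc (0 : ℝ) 1)) :=
    isCompact_univ_pi fun _ => isCompact_Icc
  have h2 := h.image (PiLp.continuous_toLp 2 (fun _ : Fin 3 => ℝ))
  convert h2 using 1
  ext y
  constructor
  · intro hy
    exact ⟨fun i => y i, fun i _ => hy i, rfl⟩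
  · rintro ⟨z, hz, rfl⟩ i
    exact hz i trivial

lemma exists_max (f : TF) : ∃ x, ∀ y, f y ≤ f x := by
  obtain ⟨x, -, hx⟩ := isCompact_cube.exists_isMaxOn
    ⟨0, fun i => by simp⟩ f.cont.continuousOn
  refine ⟨x, fun y => ?_⟩
  obtain ⟨z, hz, hzf⟩ := exists_cube_rep y
  rw [hzf]
  exact hx hz

lemma bdd (f : TF) : ∃ C, ∀ x, |f x| ≤ C := by
  obtain ⟨x, hx⟩ := f.exists_max
  obtain ⟨y, hy⟩ := (-f).exists_max
  refine ⟨max (f x) (-f y), fun z => abs_le.2 ⟨?_, (hx z).trans (le_max_left _ _)⟩⟩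
  have := hy z
  simp only [neg_apply] at this
  linarith [le_max_right (f x) (-f y)]

/-- The supremum norm. -/
noncomputable def sn (f : TF) : ℝ := ⨆ x, |f x|

lemma bddAbove_abs (f : TF) : BddAbove (range fun x => |f x|) := by
  obtain ⟨C, hC⟩ := f.bdd
  exact ⟨C, by rintro _ ⟨x, rfl⟩; exact hC x⟩

lemma abs_le_sn (f : TF) (x : E3) : |f x| ≤ sn f := le_ciSup f.bddAbove_abs x
lemma sn_le {f : TF} {C : ℝ} (h : ∀ x, |f x| ≤ C) : sn f ≤ C := ciSup_le h
lemma sn_nonneg (f : TF) : 0 ≤ sn f := (abs_nonneg (f 0)).trans (f.abs_le_sn 0)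

/-- The directional derivative. -/
noncomputable def dFun (e : E3) (f : TF) : TF :=
  ⟨fun x => fderiv ℝ (f : E3 → ℝ) x e,
    (f.smooth.fderiv_right (m := ∞) (by simp)).clm_apply contDiff_const, fun x a ha => by
      change fderiv ℝ (f : E3 → ℝ) (x + a) e = fderiv ℝ (f : E3 → ℝ) x e
      have : (fun y => f (y + a)) = (f : E3 → ℝ) := funext fun y => f.periodic y a ha
      rw [← fderiv_comp_add_right a, this]⟩

/-- The directional derivative along a constant vector field, as a derivation. -/
noncomputable def d (e : E3) : Derivation ℝ TF TF where
  toFun := dFun e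
  map_add' f g := by
    ext x
    change fderiv ℝ ((f : E3 → ℝ) + (g : E3 → ℝ)) x e = _
    rw [fderiv_add (f.diff x) (g.diff x)]; rfl
  map_smul' c f := by
    ext x
    change fderiv ℝ (c • (f : E3 → ℝ)) x e = _
    rw [fderiv_const_smul (f.diff x)]; rfl
  map_one_eq_zero' := by
    ext x
    change fderiv ℝ (fun _ : E3 => (1 : ℝ)) x e = _
    simp
  leibniz' f g := by
    ext x
    change fderiv ℝ ((f : E3 → ℝ) * (g : E3 → ℝ)) x e = _
    rw [fderiv_mul (f.diff x) (g.diff x)]; rfl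

lemma d_apply (e : E3) (f : TF) (x : E3) : d e f x = fderiv ℝ (f : E3 → ℝ) x e := rfl

lemma d_comm (e e' : E3) (f : TF) : d e (d e' f) = d e' (d e f) := by
  have key : ∀ v w x, d v (d w f) x = fderiv ℝ (fderiv ℝ (f : E3 → ℝ)) x v w := by
    intro v w x
    have h1 : DifferentiableAt ℝ (fderiv ℝ (f : E3 → ℝ)) x :=
      ((f.smooth.fderiv_right (m := ∞) (by simp)).differentiable (by simp)) x
    change fderiv ℝ (fun y => fderiv ℝ (f : E3 → ℝ) y w) x v = _
    rw [fderiv_clm_apply h1 (differentiableAt_const _)]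
    simp
  ext x
  rw [key, key]
  exact (f.smooth.contDiffAt.isSymmSndFDerivAt (n := ∞) 
    (by simpa using WithTop.coe_le_coe.2 (le_top : (2 : ℕ∞) ≤ ⊤))) e e'

lemma d_add_dir (e e' : E3) (f : TF) : d (e + e') f = d e f + d e' f := by
  ext x; simp [d_apply]

lemma d_smul_dir (c : ℝ) (e : E3) (f : TF) : d (c • e) f = c • d e f := by
  ext x; simp [d_apply]

/-- Translation. -/
def tr (s : E3) : TF →ₐ[ℝ] TF where
  toFun f := ⟨fun x => f (x + s), f.smooth.comp (contDiff_id.add contDiff_const),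
    fun x a ha => by
      change f (x + a + s) = f (x + s)
      rw [add_right_comm, f.periodic _ a ha]⟩
  map_one' := rfl
  map_mul' _ _ := rfl
  map_zero' := rfl
  map_add' _ _ := rfl
  commutes' _ := rfl

@[simp] lemma tr_apply (s : E3) (f : TF) (x : E3) : tr s f x = f (x + s) := rfl

lemma tr_add (s s' : E3) (f : TF) : tr s (tr s' f) = tr (s + s') f := by
  ext x; simp [add_assoc]

lemma tr_zero (f : TF) : tr 0 f = f := by
  ext x; simp

lemma d_tr (e s : E3) (f : TF) : d e (tr s f) = tr s (d e f) := by
  ext x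
  change fderiv ℝ (fun y => f (y + s)) x e = _
  rw [fderiv_comp_add_right]; rfl

lemma hasDerivAt_line (f : TF) (x e : E3) (s : ℝ) :
    HasDerivAt (fun s : ℝ => f (x + s • e)) (d e f (x + s • e)) s := by
  have h1 : HasDerivAt (fun s : ℝ => x + s • e) e s := by
    simpa using ((hasDerivAt_id s).smul_const e).const_add x
  exact (f.diff _).hasFDerivAt.comp_hasDerivAt s h1

lemma d_eq_zero_of_max {f : TF} {x : E3} (hx : ∀ y, f y ≤ f x) (e : E3) : d e f x = 0 := by
  have : IsLocalMax (f : E3 → ℝ) x := Eventually.of_forall hx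
  rw [d_apply, this.fderiv_eq_zero]; rfl

lemma dd_nonpos_of_max {f : TF} {x : E3} (hx : ∀ y, f y ≤ f x) (e : E3) :
    d e (d e f) x ≤ 0 := by
  by_contra! h
  set g : ℝ → ℝ := fun s => f (x + s • e) with hg
  have d1 : deriv g = fun s => d e f (x + s • e) := funext fun s => (f.hasDerivAt_line x e s).deriv
  have d2 : deriv (deriv g) = fun s => d e (d e f) (x + s • e) := by
    rw [d1]; exact funext fun s => ((d e f).hasDerivAt_line x e s).deriv
  have hmin : IsLocalMin g 0 := by
    refine isLocalMin_of_deriv_deriv_pos (by rw [d2]; simpa using h) ?_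
      (f.hasDerivAt_line x e 0).continuousAt
    rw [d1]; simpa using d_eq_zero_of_max hx e
  have hconst : g =ᶠ[𝓝 0] fun _ => g 0 := by
    filter_upwards [hmin] with s hs
    refine le_antisymm ?_ hs
    simpa [hg] using hx (x + s • e)
  have h3 : deriv g =ᶠ[𝓝 0] fun _ => 0 := by
    filter_upwards [hconst.deriv] with s hs
    rw [hs]; simp
  have h4 := h3.deriv_eq
  rw [d2] at h4
  simp at h4
  linarith

/-! ### The integral over the torus -/

attribute [local instance] instMeasureSpaceUnitAddCircle

local instance : Measure.IsAddHaarMeasure (volume : Measure UnitAddCircle) :=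
  inferInstanceAs (Measure.IsAddHaarMeasure AddCircle.haarAddCircle)

local instance : IsProbabilityMeasure (volume : Measure UnitAddCircle) :=
  inferInstanceAs (IsProbabilityMeasure AddCircle.haarAddCircle)

/-- The projection from `ℝ³` to the torus. -/
def proj (x : E3) : UnitAddTorus (Fin 3) := fun i => (x i : UnitAddCircle)

lemma proj_add (x y : E3) : proj (x + y) = proj x + proj y := rfl

lemma isOpenQuotientMap_proj : IsOpenQuotientMap proj := by
  have h1 : IsOpenQuotientMap (Pi.map fun _ : Fin 3 => ((↑) : ℝ → UnitAddCircle)) :=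
    IsOpenQuotientMap.piMap fun _ => QuotientAddGroup.isOpenQuotientMap_mk
  have h2 : IsOpenQuotientMap (WithLp.ofLp : E3 → (Fin 3 → ℝ)) :=
    (EuclideanSpace.equiv (Fin 3) ℝ).toHomeomorph.isOpenQuotientMap
  exact h1.comp h2

lemma eq_of_proj_eq (f : TF) {x y : E3} (h : proj x = proj y) : f x = f y := by
  have : ∀ i, ∃ k : ℤ, (x - y) i = k := by
    intro i
    have hi : ((x i : ℝ) : UnitAddCircle) = (y i : ℝ) := congrFun h i
    rw [QuotientAddGroup.eq_iff_sub_mem] at hi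
    obtain ⟨k, hk⟩ := AddSubgroup.mem_zmultiples_iff.1 hi
    exact ⟨k, by simpa using hk.symm⟩
  rw [← f.periodic y (x - y) this]; simp

/-- The function on the torus induced by a periodic function. -/
noncomputable def lift (f : TF) (z : UnitAddTorus (Fin 3)) : ℝ :=
  f (Function.surjInv isOpenQuotientMap_proj.surjective z)

lemma lift_proj (f : TF) (x : E3) : lift f (proj x) = f x :=
  f.eq_of_proj_eq (Function.surjInv_eq _ _)

lemma continuous_lift (f : TF) : Continuous (lift f) := by
  rw [isOpenQuotientMap_proj.isQuotientMap.continuous_iff]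
  have : lift f ∘ proj = f := funext f.lift_proj
  rw [this]; exact f.cont

lemma integrable_lift (f : TF) : Integrable (lift f) :=
  f.continuous_lift.integrable_of_hasCompactSupport (HasCompactSupport.of_compactSpace _)

/-- The integral over the torus. -/
noncomputable def I : TF →ₗ[ℝ] ℝ where
  toFun f := ∫ z, lift f z
  map_add' f g := integral_add f.integrable_lift g.integrable_lift
  map_smul' c _ := integral_const_mul c _

lemma I_def (f : TF) : I f = ∫ z, lift f z := rfl

@[simp] lemma I_one : I 1 = 1 := by
  have : lift 1 = fun _ => 1 := rfl
  simp [I_def, this]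

@[simp] lemma I_algebraMap (c : ℝ) : I (algebraMap ℝ TF c) = c := by
  rw [Algebra.algebraMap_eq_smul_one]; simp

lemma I_mono {f g : TF} (h : ∀ x, f x ≤ g x) : I f ≤ I g :=
  integral_mono f.integrable_lift g.integrable_lift fun _ => h _

lemma I_nonneg {f : TF} (h : ∀ x, 0 ≤ f x) : 0 ≤ I f := integral_nonneg fun _ => h _

lemma eq_zero_of_I_sq {f : TF} (h : I (f * f) = 0) : f = 0 := by
  have hc := (f * f).continuous_lift
  have h0 : ∀ z, 0 ≤ lift (f * f) z := fun _ => mul_self_nonneg _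
  rw [I_def, integral_eq_zero_iff_of_nonneg h0 (f * f).integrable_lift] at h
  have := Measure.eq_of_ae_eq h hc continuous_const
  ext x
  have h2 := congrFun this (proj x)
  rw [lift_proj] at h2
  simpa using h2

lemma I_tr (s : E3) (f : TF) : I (tr s f) = I f := by
  have : lift (tr s f) = fun z => lift f (z + proj s) := by
    funext z
    obtain ⟨x, rfl⟩ := isOpenQuotientMap_proj.surjective z
    rw [lift_proj, ← proj_add, lift_proj]; rfl
  rw [I_def, this]
  exact integral_add_right_eq_self _ _

@[simp] lemma I_d (e : E3) (f : TF) : I (d e f) = 0 := by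
  obtain ⟨C, hC⟩ := (d e f).bdd
  have key := hasDerivAt_integral_of_dominated_loc_of_deriv_le (μ := volume) (x₀ := (0 : ℝ))
    (F := fun s z => lift (tr (s • e) f) z) (F' := fun s z => lift (tr (s • e) (d e f)) z)
    (s := univ) (bound := fun _ => C) univ_mem
    (Eventually.of_forall fun s => (continuous_lift _).aestronglyMeasurable)
    (integrable_lift _) (continuous_lift _).aestronglyMeasurable
    (Eventually.of_forall fun z s _ => hC _) (integrable_const _)
    (Eventually.of_forall fun z s _ => f.hasDerivAt_line _ e s)
  have h2 := key.2
  simp only [← I_def, I_tr] at h2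
  exact h2.unique (hasDerivAt_const _ _)

lemma I_eq_integral (f : TF) :
    I f = ∫ x in {x : E3 | ∀ i, 0 ≤ x i ∧ x i ≤ 1}, f x := by
  rw [I_def, UnitAddTorus.integral_preimage _ 0]
  have h1 := (EuclideanSpace.volume_preserving_symm_measurableEquiv_toLp (Fin 3))
  have h2 : ∫ x in {x : E3 | ∀ i, 0 ≤ x i ∧ x i ≤ 1}, f x =
      ∫ y in {y : Fin 3 → ℝ | ∀ i, 0 ≤ y i ∧ y i ≤ 1}, f (WithLp.toLp 2 y) := by
    rw [← h1.setIntegral_preimage_emb (MeasurableEquiv.measurableEmbedding _)]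
    rfl
  rw [h2]
  have h3 : {y : Fin 3 → ℝ | ∀ i, 0 ≤ y i ∧ y i ≤ 1} = Icc 0 1 := by
    ext y; simp [Pi.le_def, forall_and]
  have h4 : {y : Fin 3 → ℝ | ∀ i, y i ∈ Ioc ((0 : Fin 3 → ℝ) i) ((0 : Fin 3 → ℝ) i + 1)} =
      Set.pi univ fun i => Ioc ((0 : Fin 3 → ℝ) i) ((1 : Fin 3 → ℝ) i) := by
    ext y; simp [Set.mem_pi]
  rw [h3, h4]
  have h5 : ∀ y : Fin 3 → ℝ, (lift f fun i => (y i : UnitAddCircle)) = f (WithLp.toLp 2 y) :=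
    fun y => f.lift_proj (WithLp.toLp 2 y)
  simp only [h5]
  exact setIntegral_congr_set Measure.univ_pi_Ioc_ae_eq_Icc

end TF
end KodairaThurston

namespace KodairaThurston

open Filter Topology Set
open scoped ContDiff ComplexConjugate

namespace TF

/-! ### The `L²` norm -/

/-- The `L²` norm. -/
noncomputable def N (f : TF) : ℝ := √(I (f * f))

lemma I_sq_nonneg (f : TF) : 0 ≤ I (f * f) := I_nonneg fun x => mul_self_nonneg (f x)
lemma N_nonneg (f : TF) : 0 ≤ N f := Real.sqrt_nonneg _
lemma N_sq (f : TF) : N f ^ 2 = I (f * f) := Real.sq_sqrt f.I_sq_nonneg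

lemma I_cauchy (f g : TF) : |I (f * g)| ≤ N f * N g := by
  have h : ∀ t : ℝ, 0 ≤ N g ^ 2 * (t * t) + 2 * I (f * g) * t + N f ^ 2 := by
    intro t
    have h1 := I_sq_nonneg (f + t • g)
    have h2 : (f + t • g) * (f + t • g) = f * f + (2 * t) • (f * g) + (t * t) • (g * g) := by
      simp only [Algebra.smul_def, map_mul, map_ofNat]; ring
    rw [h2] at h1
    simp only [map_add, map_smul, smul_eq_mul] at h1
    rw [N_sq, N_sq]; linarith
  have h2 := discrim_le_zero h
  have h3 : I (f * g) ^ 2 ≤ (N f * N g) ^ 2 := by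
    simp only [discrim] at h2; nlinarith
  exact abs_le_of_sq_le_sq h3 (mul_nonneg f.N_nonneg g.N_nonneg)

lemma N_add_le (f g : TF) : N (f + g) ≤ N f + N g := by
  refine abs_le_of_sq_le_sq' ?_ (add_nonneg f.N_nonneg g.N_nonneg) |>.2
  have h := (abs_le.1 (I_cauchy f g)).2
  have h2 : (f + g) * (f + g) = f * f + (f * g + f * g) + g * g := by ring
  rw [N_sq, h2]
  simp only [map_add]
  nlinarith [N_sq f, N_sq g]

lemma N_smul (c : ℝ) (f : TF) : N (c • f) = |c| * N f := by
  have h : (c • f) * (c • f) = (c * c) • (f * f) := by rw [smul_mul_smul_comm]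
  rw [N, h, map_smul, smul_eq_mul, Real.sqrt_mul (mul_self_nonneg c), Real.sqrt_mul_self_eq_abs, N]

lemma N_neg (f : TF) : N (-f) = N f := by simp [N]

lemma N_sub_le (f g : TF) : N (f - g) ≤ N f + N g := by
  rw [sub_eq_add_neg, ← N_neg g]; exact N_add_le _ _

lemma N_mono {f g : TF} (h : ∀ x, |f x| ≤ |g x|) : N f ≤ N g :=
  Real.sqrt_le_sqrt (I_mono fun x => by simpa using abs_le_iff_mul_self_le.1 (h x))

@[simp] lemma N_algebraMap (c : ℝ) : N (algebraMap ℝ TF c) = |c| := by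
  rw [N, ← map_mul, I_algebraMap, Real.sqrt_mul_self_eq_abs]

@[simp] lemma N_zero : N 0 = 0 := by simp [N]

lemma N_le_of_abs_le {f : TF} {C : ℝ} (h : ∀ x, |f x| ≤ C) : N f ≤ C := by
  have hC : 0 ≤ C := (abs_nonneg _).trans (h 0)
  have := N_mono (f := f) (g := algebraMap ℝ TF C) fun x => by
    simpa [abs_of_nonneg hC] using h x
  simpa [abs_of_nonneg hC] using this

lemma N_mul_le {f g : TF} {C : ℝ} (h : ∀ x, |f x| ≤ C) : N (f * g) ≤ C * N g := by
  have hC : 0 ≤ C := (abs_nonneg _).trans (h 0)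
  have := N_mono (f := f * g) (g := C • g) fun x => by
    simp only [mul_apply, smul_apply, abs_mul, abs_of_nonneg hC]
    exact mul_le_mul_of_nonneg_right (h x) (abs_nonneg _)
  rwa [N_smul, abs_of_nonneg hC] at this

lemma eq_zero_of_N {f : TF} (h : N f = 0) : f = 0 :=
  eq_zero_of_I_sq (by rw [← N_sq, h]; simp)

lemma N_tr (s : E3) (f : TF) : N (tr s f) = N f := by
  rw [N, ← map_mul, I_tr, N]

lemma I_le_N (f : TF) : |I f| ≤ N f := by
  have := I_cauchy f 1
  have h1 : N 1 = 1 := by simpa using N_algebraMap 1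
  rwa [mul_one, h1, mul_one] at this

/-- Integration by parts. -/
lemma I_parts (e : E3) (f g : TF) : I (d e f * g) = -I (f * d e g) := by
  have h := I_d e (f * g)
  rw [Derivation.leibniz] at h
  simp only [smul_eq_mul, map_add] at h
  rw [mul_comm (d e f)]; linarith

/-- The Laplacian. -/
noncomputable def lap : TF →ₗ[ℝ] TF :=
  ∑ i : Fin 3, (d (EuclideanSpace.single i 1)).toLinearMap ∘ₗ
    (d (EuclideanSpace.single i 1)).toLinearMap

lemma lap_apply (f : TF) :
    lap f = ∑ i : Fin 3, d (EuclideanSpace.single i 1) (d (EuclideanSpace.single i 1) f) := by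
  simp [lap]

lemma d_lap (e : E3) (f : TF) : d e (lap f) = lap (d e f) := by
  simp only [lap_apply, map_sum, d_comm e]

lemma lap_tr (s : E3) (f : TF) : lap (tr s f) = tr s (lap f) := by
  simp only [lap_apply, map_sum, d_tr]

lemma I_lap_mul (f g : TF) : I (lap f * g) = I (f * lap g) := by
  simp only [lap_apply, Finset.sum_mul, Finset.mul_sum, map_sum]
  refine Finset.sum_congr rfl fun i _ => ?_
  rw [I_parts, I_parts, neg_neg]

@[simp] lemma I_lap (f : TF) : I (lap f) = 0 := by simp [lap_apply]

/-! ### Fourier series -/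

/-- The pairing of an integer frequency with a vector. -/
noncomputable def ip (k : Fin 3 → ℤ) (x : E3) : ℝ := 2 * Real.pi * ∑ i, (k i : ℝ) * x i

lemma ip_add (k : Fin 3 → ℤ) (x y : E3) : ip k (x + y) = ip k x + ip k y := by
  simp [ip, mul_add, Finset.sum_add_distrib]

lemma ip_smul (k : Fin 3 → ℤ) (c : ℝ) (x : E3) : ip k (c • x) = c * ip k x := by
  simp only [ip, PiLp.smul_apply, smul_eq_mul, Fin.sum_univ_three]; ring

lemma ip_single (k : Fin 3 → ℤ) (i : Fin 3) :
    ip k (EuclideanSpace.single i 1) = 2 * Real.pi * k i := by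
  simp [ip]

lemma ip_lattice (k : Fin 3 → ℤ) (a : E3) (ha : ∀ i, ∃ k : ℤ, a i = (k : ℝ)) :
    ∃ n : ℤ, ip k a = n * (2 * Real.pi) := by
  choose m hm using ha
  exact ⟨∑ i, k i * m i, by simp [ip, hm]; ring⟩

/-- The pairing as a continuous linear functional. -/
noncomputable def ipL (k : Fin 3 → ℤ) : E3 →L[ℝ] ℝ :=
  LinearMap.toContinuousLinearMap
    { toFun := ip k, map_add' := ip_add k, map_smul' := fun c x => ip_smul k c x }

lemma ipL_apply (k : Fin 3 → ℤ) (x : E3) : ipL k x = ip k x := rfl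

/-- The cosine mode. -/
noncomputable def ck (k : Fin 3 → ℤ) : TF :=
  ⟨fun x => Real.cos (ip k x), Real.contDiff_cos.comp (ipL k).contDiff, fun x a ha => by
    obtain ⟨n, hn⟩ := ip_lattice k a ha
    change Real.cos (ip k (x + a)) = Real.cos (ip k x)
    rw [ip_add, hn, Real.cos_add_int_mul_two_pi]⟩

/-- The sine mode. -/
noncomputable def sk (k : Fin 3 → ℤ) : TF :=
  ⟨fun x => Real.sin (ip k x), Real.contDiff_sin.comp (ipL k).contDiff, fun x a ha => by
    obtain ⟨n, hn⟩ := ip_lattice k a ha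
    change Real.sin (ip k (x + a)) = Real.sin (ip k x)
    rw [ip_add, hn, Real.sin_add_int_mul_two_pi]⟩

lemma ck_apply (k : Fin 3 → ℤ) (x : E3) : ck k x = Real.cos (ip k x) := rfl
lemma sk_apply (k : Fin 3 → ℤ) (x : E3) : sk k x = Real.sin (ip k x) := rfl

lemma d_ck (e : E3) (k : Fin 3 → ℤ) : d e (ck k) = -ip k e • sk k := by
  ext x
  have h : HasFDerivAt (fun x => Real.cos (ip k x)) (-Real.sin (ip k x) • ipL k) x :=
    (ipL k).hasFDerivAt.cos
  change fderiv ℝ (fun x => Real.cos (ip k x)) x e = _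
  rw [h.fderiv]
  simp [ipL_apply, sk_apply, mul_comm]

lemma d_sk (e : E3) (k : Fin 3 → ℤ) : d e (sk k) = ip k e • ck k := by
  ext x
  have h : HasFDerivAt (fun x => Real.sin (ip k x)) (Real.cos (ip k x) • ipL k) x :=
    (ipL k).hasFDerivAt.sin
  change fderiv ℝ (fun x => Real.sin (ip k x)) x e = _
  rw [h.fderiv]
  simp [ipL_apply, ck_apply, mul_comm]

/-- The eigenvalue of `-Δ` at a frequency. -/
noncomputable def wt (k : Fin 3 → ℤ) : ℝ := ∑ i : Fin 3, (2 * Real.pi * k i) ^ 2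

lemma wt_nonneg (k : Fin 3 → ℤ) : 0 ≤ wt k := Finset.sum_nonneg fun _ _ => sq_nonneg _

lemma lap_ck (k : Fin 3 → ℤ) : lap (ck k) = -wt k • ck k := by
  simp only [lap_apply, d_ck, d_sk, Derivation.map_smul, ip_single, smul_smul, wt, ← Finset.sum_smul,
    Fin.sum_univ_three]
  congr 1; ring

lemma lap_sk (k : Fin 3 → ℤ) : lap (sk k) = -wt k • sk k := by
  simp only [lap_apply, d_ck, d_sk, Derivation.map_smul, ip_single, smul_smul, wt, ← Finset.sum_smul,
    Fin.sum_univ_three]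
  congr 1; ring

lemma sum_sq_le_wt (k : Fin 3 → ℤ) (i : Fin 3) : (k i : ℝ) ^ 2 ≤ wt k := by
  have h1 : (2 * Real.pi * k i) ^ 2 ≤ wt k :=
    Finset.single_le_sum (f := fun i => (2 * Real.pi * k i : ℝ) ^ 2) (fun _ _ => sq_nonneg _)
      (Finset.mem_univ i)
  have h2 : (1 : ℝ) ≤ (2 * Real.pi) ^ 2 := by nlinarith [Real.pi_gt_three]
  rw [mul_pow] at h1
  nlinarith [sq_nonneg (k i : ℝ)]

lemma one_le_wt {k : Fin 3 → ℤ} (hk : k ≠ 0) : 1 ≤ wt k := by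
  obtain ⟨i, hi⟩ := Function.ne_iff.1 hk
  have h : (1 : ℤ) ≤ (k i) ^ 2 := by
    have := sq_pos_of_ne_zero (show k i ≠ 0 from hi); omega
  exact le_trans (by exact_mod_cast h) (sum_sq_le_wt k i)

lemma summable_inv_wt : Summable fun k : Fin 3 → ℤ => ((1 + wt k) ^ 2)⁻¹ := by
  have h1 : Summable fun a : ℤ => (1 + (a : ℝ) ^ 2) ^ (-(2 / 3) : ℝ) := by
    have h := (Real.summable_abs_int_rpow (b := 4 / 3) (by norm_num))
    refine Summable.of_norm_bounded_eventually h ?_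
    have : ∀ᶠ a : ℤ in cofinite, a ≠ 0 := (finite_singleton (0 : ℤ)).compl_mem_cofinite
    filter_upwards [this] with a ha
    have ha' : 0 < |(a : ℝ)| := abs_pos.2 (by exact_mod_cast ha)
    rw [Real.norm_of_nonneg (by positivity)]
    calc (1 + (a : ℝ) ^ 2) ^ (-(2 / 3) : ℝ) ≤ (|(a : ℝ)| ^ (2 : ℝ)) ^ (-(2 / 3) : ℝ) := by
          refine Real.rpow_le_rpow_of_nonpos (by positivity) ?_ (by norm_num)
          rw [Real.rpow_two, sq_abs]; linarith
      _ = |(a : ℝ)| ^ (-(4 / 3) : ℝ) := by rw [← Real.rpow_mul ha'.le]; norm_num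
  have h2 := (h1.mul_of_nonneg (h1.mul_of_nonneg h1 (fun _ => by positivity)
    (fun _ => by positivity)) (fun _ => by positivity) (fun _ => by positivity))
  have h3 := h2.comp_injective (i := fun k : Fin 3 → ℤ => (k 0, k 1, k 2)) (by
    intro k l h
    simp only [Prod.mk.injEq] at h
    funext i
    fin_cases i
    exacts [h.1, h.2.1, h.2.2])
  refine Summable.of_nonneg_of_le (fun _ => by positivity) (fun k => ?_) h3
  have hw := wt_nonneg k
  have h4 : ∀ i, (1 + wt k) ^ (-(2 / 3) : ℝ) ≤ (1 + (k i : ℝ) ^ 2) ^ (-(2 / 3) : ℝ) := fun i =>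
    Real.rpow_le_rpow_of_nonpos (by positivity) (by linarith [sum_sq_le_wt k i]) (by norm_num)
  have h5 : ((1 + wt k) ^ 2)⁻¹ = (1 + wt k) ^ (-(2 / 3) : ℝ) *
      ((1 + wt k) ^ (-(2 / 3) : ℝ) * (1 + wt k) ^ (-(2 / 3) : ℝ)) := by
    rw [← Real.rpow_add (by positivity), ← Real.rpow_add (by positivity), ← Real.rpow_two,
      ← Real.rpow_neg (by positivity)]
    norm_num
  rw [h5]
  exact mul_le_mul (h4 0) (mul_le_mul (h4 1) (h4 2) (by positivity) (by positivity))
    (by positivity) (by positivity)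

attribute [local instance] instMeasureSpaceUnitAddCircle

local instance : Measure.IsAddHaarMeasure (volume : Measure UnitAddCircle) :=
  inferInstanceAs (Measure.IsAddHaarMeasure AddCircle.haarAddCircle)

local instance : IsProbabilityMeasure (volume : Measure UnitAddCircle) :=
  inferInstanceAs (IsProbabilityMeasure AddCircle.haarAddCircle)

lemma mFourier_proj (k : Fin 3 → ℤ) (x : E3) :
    UnitAddTorus.mFourier k (proj x) = (ck k x : ℂ) + (sk k x : ℂ) * Complex.I := by
  have : UnitAddTorus.mFourier k (proj x) = ∏ i, fourier (k i) ((x i : ℝ) : UnitAddCircle) := rfl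
  rw [this]
  simp only [fourier_coe_apply]
  rw [← Complex.exp_sum, ck_apply, sk_apply, Complex.ofReal_cos, Complex.ofReal_sin,
    ← Complex.exp_mul_I]
  congr 1
  simp [ip, Fin.sum_univ_three]; ring

/-- The complexified function on the torus. -/
noncomputable def liftC (f : TF) : C(UnitAddTorus (Fin 3), ℂ) :=
  ⟨fun z => (lift f z : ℂ), Complex.continuous_ofReal.comp f.continuous_lift⟩

/-- The Fourier coefficients. -/
noncomputable def fc (f : TF) (k : Fin 3 → ℤ) : ℂ := UnitAddTorus.mFourierCoeff (liftC f) k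

lemma fc_eq (f : TF) (k : Fin 3 → ℤ) :
    fc f k = (I (f * ck k) : ℂ) - (I (f * sk k) : ℂ) * Complex.I := by
  have h : ∀ z, UnitAddTorus.mFourier (-k) z • liftC f z =
      ((lift (f * ck k) z : ℝ) : ℂ) - ((lift (f * sk k) z : ℝ) : ℂ) * Complex.I := by
    intro z
    obtain ⟨x, rfl⟩ := isOpenQuotientMap_proj.surjective z
    rw [UnitAddTorus.mFourier_neg, mFourier_proj]
    simp [liftC, lift_proj]
    ring
  rw [fc, UnitAddTorus.mFourierCoeff]
  simp_rw [h]
  have hi : ∀ g : TF, Integrable (fun z => ((lift g z : ℝ) : ℂ)) := fun g =>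
    (integrable_lift g).ofReal (𝕜 := ℂ)
  rw [integral_sub (hi _) ((hi _).mul_const _), integral_mul_const, I_def, I_def, ← integral_complex_ofReal,
    ← integral_complex_ofReal]

lemma fc_d (e : E3) (f : TF) (k : Fin 3 → ℤ) : fc (d e f) k = ip k e * Complex.I * fc f k := by
  have h1 : I (d e f * ck k) = ip k e * I (f * sk k) := by
    rw [I_parts, d_ck, mul_smul_comm, map_smul, smul_eq_mul]; ring
  have h2 : I (d e f * sk k) = -(ip k e * I (f * ck k)) := by
    rw [I_parts, d_sk, mul_smul_comm, map_smul, smul_eq_mul]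
  rw [fc_eq, fc_eq, h1, h2]
  push_cast
  linear_combination ((ip k e) * I (f * sk k) : ℂ) * Complex.I_sq

lemma fc_sub (f g : TF) (k : Fin 3 → ℤ) : fc (f - g) k = fc f k - fc g k := by
  simp only [fc_eq, sub_mul, map_sub]; push_cast; ring

lemma fc_smul (c : ℝ) (f : TF) (k : Fin 3 → ℤ) : fc (c • f) k = c * fc f k := by
  simp only [fc_eq, smul_mul_assoc, map_smul, smul_eq_mul]; push_cast; ring

lemma fc_lap (f : TF) (k : Fin 3 → ℤ) : fc (lap f) k = -wt k * fc f k := by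
  have h1 : I (lap f * ck k) = -wt k * I (f * ck k) := by
    rw [I_lap_mul, lap_ck, mul_smul_comm, map_smul, smul_eq_mul]
  have h2 : I (lap f * sk k) = -wt k * I (f * sk k) := by
    rw [I_lap_mul, lap_sk, mul_smul_comm, map_smul, smul_eq_mul]
  rw [fc_eq, fc_eq, h1, h2]; push_cast; ring

lemma fc_zero (f : TF) : fc f 0 = I f := by
  have h1 : ck 0 = 1 := by ext x; simp [ck_apply, ip]
  have h2 : sk 0 = 0 := by ext x; simp [sk_apply, ip]
  simp [fc_eq, h1, h2]

lemma parseval (f : TF) : HasSum (fun k => ‖fc f k‖ ^ 2) (I (f * f)) := by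
  have h := UnitAddTorus.hasSum_sq_mFourierCoeff (ContinuousMap.toLp 2 volume ℂ (liftC f))
  simp only [UnitAddTorus.mFourierCoeff_toLp] at h
  suffices hI : I (f * f) = ∫ z, ‖(ContinuousMap.toLp 2 volume ℂ (liftC f)) z‖ ^ 2 by
    rw [hI]; exact h
  rw [I_def]
  refine integral_congr_ae ?_
  filter_upwards [ContinuousMap.coeFn_toLp (p := 2) (𝕜 := ℂ) volume (liftC f)] with z hz
  rw [hz]
  change lift f z * lift f z = ‖(lift f z : ℂ)‖ ^ 2
  rw [Complex.norm_real, Real.norm_eq_abs, sq_abs, sq]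

/-- The weighted Wiener bound. -/
lemma wiener {M : ℝ} (hM : 1 ≤ M) (f : TF) :
    Summable (fun k => ‖fc f k‖) ∧
      ∑' k, ‖fc f k‖ ≤ √(∑' k, ((M + wt k) ^ 2)⁻¹) * N (M • f - lap f) := by
  have hs : Summable fun k : Fin 3 → ℤ => ((M + wt k) ^ 2)⁻¹ := by
    refine summable_inv_wt.of_nonneg_of_le (fun _ => by positivity) fun k => ?_
    have := wt_nonneg k
    gcongr
  have hp := parseval (M • f - lap f)
  have hfc : ∀ k, ‖fc (M • f - lap f) k‖ = (M + wt k) * ‖fc f k‖ := by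
    intro k
    have h : fc (M • f - lap f) k = ((M + wt k : ℝ) : ℂ) * fc f k := by
      rw [fc_sub, fc_smul, fc_lap]; push_cast; ring
    rw [h, norm_mul, Complex.norm_real, Real.norm_of_nonneg (by linarith [wt_nonneg k])]
  have hb : ∀ t : ℝ, 0 < t → ∀ k, ‖fc f k‖ ≤
      t / 2 * ((M + wt k) ^ 2)⁻¹ + (1 / (2 * t)) * ‖fc (M • f - lap f) k‖ ^ 2 := by
    intro t ht k
    have hw : 0 < M + wt k := by linarith [wt_nonneg k]
    rw [hfc]
    have h := sq_nonneg (t * (M + wt k)⁻¹ - (M + wt k) * ‖fc f k‖)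
    have h2 : t * ‖fc f k‖ ≤ t ^ 2 / 2 * ((M + wt k) ^ 2)⁻¹ +
        1 / 2 * ((M + wt k) * ‖fc f k‖) ^ 2 := by
      have h3 : t * (M + wt k)⁻¹ * ((M + wt k) * ‖fc f k‖) = t * ‖fc f k‖ := by field_simp
      rw [← inv_pow]
      nlinarith
    have h4 : t / 2 * ((M + wt k) ^ 2)⁻¹ + 1 / (2 * t) * ((M + wt k) * ‖fc f k‖) ^ 2 =
      (t ^ 2 / 2 * ((M + wt k) ^ 2)⁻¹ + 1 / 2 * ((M + wt k) * ‖fc f k‖) ^ 2) / t := by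
      field_simp
    rw [h4, le_div_iff₀ ht]; linarith
  have hsum : Summable fun k => ‖fc f k‖ :=
    ((hs.mul_left (1 / 2)).add (hp.summable.mul_left (1 / (2 * 1)))).of_nonneg_of_le
      (fun _ => norm_nonneg _) (hb 1 one_pos)
  refine ⟨hsum, ?_⟩
  set σ := ∑' k : Fin 3 → ℤ, ((M + wt k) ^ 2)⁻¹
  have hσ : 0 < σ := hs.tsum_pos (fun _ => by positivity) 0
    (by have := wt_nonneg 0; positivity)
  set n := N (M • f - lap f)
  have hn : 0 ≤ n := N_nonneg _
  have hle : ∀ t : ℝ, 0 < t → ∑' k, ‖fc f k‖ ≤ t / 2 * σ + 1 / (2 * t) * n ^ 2 := by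
    intro t ht
    have := hsum.tsum_le_tsum (hb t ht)
      ((hs.mul_left (t / 2)).add (hp.summable.mul_left (1 / (2 * t))))
    rwa [(hs.mul_left (t / 2)).tsum_add (hp.summable.mul_left (1 / (2 * t))), tsum_mul_left,
      tsum_mul_left, hp.tsum_eq, ← N_sq] at this
  have hsq : 0 < √σ := Real.sqrt_pos.2 hσ
  refine le_of_forall_pos_le_add fun ε hε => ?_
  set δ := ε / √σ
  have hδ : 0 < δ := by positivity
  refine (hle ((n + δ) / √σ) (by positivity)).trans ?_
  have e1 : (n + δ) / √σ / 2 * σ = (n + δ) * √σ / 2 := by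
    nth_rw 2 [← Real.mul_self_sqrt hσ.le]; field_simp
  have e2 : 1 / (2 * ((n + δ) / √σ)) * n ^ 2 ≤ √σ * n / 2 := by
    have : 1 / (2 * ((n + δ) / √σ)) * n ^ 2 = √σ * (n ^ 2 / (n + δ)) / 2 := by field_simp
    rw [this]
    have h : n ^ 2 / (n + δ) ≤ n := by
      rw [div_le_iff₀ (by positivity)]; nlinarith
    gcongr
  have e3 : δ * √σ = ε := by simp only [δ]; field_simp
  nlinarith

lemma abs_le_tsum_fc (f : TF) (x : E3) : |f x| ≤ ∑' k, ‖fc f k‖ := by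
  have hs := (wiener le_rfl f).1
  have h := UnitAddTorus.hasSum_mFourier_series_apply_of_summable (f := liftC f) hs.of_norm
    (proj x)
  have hn : ∀ k, ‖UnitAddTorus.mFourierCoeff (liftC f) k • UnitAddTorus.mFourier k (proj x)‖ ≤
      ‖fc f k‖ := by
    intro k
    rw [norm_smul]
    refine mul_le_of_le_one_right (norm_nonneg _) ?_
    exact ((UnitAddTorus.mFourier k).norm_coe_le_norm _).trans_eq UnitAddTorus.mFourier_norm
  have h2 := tsum_of_norm_bounded hs.hasSum hn
  rw [h.tsum_eq] at h2
  have h3 : ‖liftC f (proj x)‖ = |f x| := by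
    change ‖((lift f (proj x) : ℝ) : ℂ)‖ = _
    rw [Complex.norm_real, lift_proj, Real.norm_eq_abs]
  rwa [h3] at h2

/-- `Λ = 1 - Δ`. -/
noncomputable def Lam : TF →ₗ[ℝ] TF := LinearMap.id - lap

lemma Lam_apply (f : TF) : Lam f = f - lap f := rfl

lemma exists_abs_le_N_Lam : ∃ C, 0 < C ∧ ∀ (f : TF) x, |f x| ≤ C * N (Lam f) := by
  refine ⟨√(∑' k, ((1 + wt k) ^ 2)⁻¹) + 1, by positivity, fun f x => ?_⟩
  have h := (abs_le_tsum_fc f x).trans (wiener le_rfl f).2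
  rw [one_smul, ← Lam_apply] at h
  nlinarith [N_nonneg (Lam f)]

lemma exists_abs_le_eps {ε : ℝ} (hε : 0 < ε) :
    ∃ C, 0 < C ∧ ∀ (f : TF) x, |f x| ≤ ε * N (lap f) + C * N f := by
  have ht : Tendsto (fun n : ℕ => ∑' k : Fin 3 → ℤ, (((n + 1 : ℝ) + wt k) ^ 2)⁻¹) atTop
      (𝓝 (∑' k : Fin 3 → ℤ, 0)) := by
    refine tendsto_tsum_of_dominated_convergence summable_inv_wt (fun k => ?_)
      (Eventually.of_forall fun n k => ?_)
    · refine tendsto_inv_atTop_zero.comp ((tendsto_pow_atTop two_ne_zero).comp ?_)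
      exact tendsto_atTop_add_const_right _ _
        (tendsto_atTop_add_const_right _ _ tendsto_natCast_atTop_atTop)
    · have := wt_nonneg k
      rw [Real.norm_of_nonneg (by positivity)]
      gcongr
      linarith [Nat.cast_nonneg (α := ℝ) n]
  rw [tsum_zero] at ht
  obtain ⟨n, hn⟩ := (ht.eventually (gt_mem_nhds (show (0 : ℝ) < ε ^ 2 by positivity))).exists
  have hs : √(∑' k : Fin 3 → ℤ, (((n + 1 : ℝ) + wt k) ^ 2)⁻¹) ≤ ε := by
    rw [Real.sqrt_le_left hε.le]; exact hn.le
  refine ⟨ε * (n + 1), by positivity, fun f x => ?_⟩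
  have h1 := (abs_le_tsum_fc f x).trans
    (wiener (M := n + 1) (by linarith [Nat.cast_nonneg (α := ℝ) n]) f).2
  have h2 : N ((n + 1 : ℝ) • f - lap f) ≤ (n + 1) * N f + N (lap f) := by
    refine (N_sub_le _ _).trans_eq ?_
    rw [N_smul, abs_of_nonneg (by positivity)]
  calc |f x| ≤ _ := h1
    _ ≤ ε * ((n + 1) * N f + N (lap f)) := mul_le_mul hs h2 (N_nonneg _) hε.le
    _ = _ := by ring

lemma poincare {f : TF} (hf : I f = 0) :
    I (f * f) ≤ ∑ i : Fin 3,
      I (d (EuclideanSpace.single i 1) f * d (EuclideanSpace.single i 1) f) := by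
  have h := hasSum_sum (s := Finset.univ) fun (i : Fin 3) _ =>
    parseval (d (EuclideanSpace.single i 1) f)
  refine hasSum_le (fun k => ?_) (parseval f) h
  have h1 : ∑ i : Fin 3, ‖fc (d (EuclideanSpace.single i 1) f) k‖ ^ 2 = wt k * ‖fc f k‖ ^ 2 := by
    rw [wt, Finset.sum_mul]
    refine Finset.sum_congr rfl fun i _ => ?_
    rw [fc_d, ip_single, norm_mul, norm_mul, Complex.norm_I, Complex.norm_real, mul_one, mul_pow,
      Real.norm_eq_abs, sq_abs]
  rw [h1]
  rcases eq_or_ne k 0 with rfl | hk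
  · rw [fc_zero, hf]; simp
  · nlinarith [one_le_wt hk, sq_nonneg ‖fc f k‖]

lemma N_le_N_lap {f : TF} (hf : I f = 0) : N f ≤ N (lap f) := by
  refine Real.sqrt_le_sqrt (hasSum_le (fun k => ?_) (parseval f) (parseval (lap f)))
  rw [fc_lap]
  rcases eq_or_ne k 0 with rfl | hk
  · rw [fc_zero, hf]; simp
  · have h : ‖(-wt k : ℂ)‖ = wt k := by
      rw [norm_neg, Complex.norm_real, Real.norm_of_nonneg (wt_nonneg k)]
    rw [norm_mul, h]
    gcongr
    nlinarith [one_le_wt hk, norm_nonneg (fc f k)]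

lemma exists_abs_le_N_lap : ∃ C, 0 < C ∧ ∀ f : TF, I f = 0 → ∀ x, |f x| ≤ C * N (lap f) := by
  obtain ⟨C, hC, h⟩ := exists_abs_le_N_Lam
  refine ⟨C * 2, by positivity, fun f hf x => (h f x).trans ?_⟩
  have h1 := N_sub_le f (lap f)
  have h2 := N_le_N_lap hf
  rw [Lam_apply, mul_assoc]
  gcongr; linarith

/-! ### Density of trigonometric polynomials -/

/-- The partial sums of the Fourier series. -/
noncomputable def partialSum (s : Finset (Fin 3 → ℤ)) (f : TF) : TF :=
  ∑ k ∈ s, (I (f * ck k) • ck k + I (f * sk k) • sk k)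

lemma partialSum_lap (s : Finset (Fin 3 → ℤ)) (f : TF) :
    partialSum s (lap f) = lap (partialSum s f) := by
  simp only [partialSum, map_sum, map_add, map_smul, lap_ck, lap_sk, I_lap_mul, mul_smul_comm,
    smul_smul, smul_eq_mul, mul_comm (-wt _)]

lemma partialSum_sub (s : Finset (Fin 3 → ℤ)) (f g : TF) :
    partialSum s (f - g) = partialSum s f - partialSum s g := by
  simp only [partialSum, sub_mul, map_sub, sub_smul, ← Finset.sum_sub_distrib]
  exact Finset.sum_congr rfl fun _ _ => by abel

lemma partialSum_Lam (s : Finset (Fin 3 → ℤ)) (f : TF) :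
    partialSum s (Lam f) = Lam (partialSum s f) := by
  rw [Lam_apply, Lam_apply, partialSum_sub, partialSum_lap]

lemma exists_partialSum_N (f : TF) {ε : ℝ} (hε : 0 < ε) :
    ∃ s, N (f - partialSum s f) ≤ ε := by
  have hs := (wiener le_rfl f).1
  have h := UnitAddTorus.hasSum_mFourier_series_of_summable (f := liftC f) hs.of_norm
  obtain ⟨s, hs⟩ := (h.eventually (Metric.closedBall_mem_nhds _ hε)).exists
  refine ⟨s, N_le_of_abs_le fun x => ?_⟩
  rw [dist_eq_norm] at hs
  have h1 := ((∑ k ∈ s, UnitAddTorus.mFourierCoeff (liftC f) k • UnitAddTorus.mFourier k -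
    liftC f).norm_coe_le_norm (proj x)).trans hs
  refine le_trans ?_ h1
  refine le_trans (le_of_eq ?_) (Complex.abs_re_le_norm _)
  rw [← abs_neg]
  congr 1
  have h2 : liftC f (proj x) = (f x : ℂ) := by
    change ((lift f (proj x) : ℝ) : ℂ) = _
    rw [lift_proj]
  simp only [ContinuousMap.sub_apply, ContinuousMap.coe_sum, Finset.sum_apply,
    ContinuousMap.smul_apply, mFourier_proj, h2, sub_apply, neg_sub, Complex.sub_re, Complex.re_sum,
    Complex.ofReal_re, partialSum, sum_apply, add_apply, smul_apply]
  congr 1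
  refine Finset.sum_congr rfl fun k _ => ?_
  change _ = (fc f k • ((ck k x : ℂ) + (sk k x : ℂ) * Complex.I)).re
  rw [fc_eq]
  simp

lemma exists_partialSum (f : TF) {ε : ℝ} (hε : 0 < ε) :
    ∃ s, N (Lam (f - partialSum s f)) ≤ ε := by
  obtain ⟨s, hs⟩ := exists_partialSum_N (Lam f) hε
  exact ⟨s, by rwa [map_sub, ← partialSum_Lam]⟩

/-- The range of a constant coefficient operator contains all trigonometric polynomials. -/
lemma exists_solve_partialSum (e : E3) (s : Finset (Fin 3 → ℤ)) (f : TF) :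
    ∃ h : TF, lap h + d e h + algebraMap ℝ TF (I h) = partialSum s f := by
  let L : TF →ₗ[ℝ] TF :=
    lap + (d e).toLinearMap + (Algebra.linearMap ℝ TF) ∘ₗ I
  have hL : ∀ h, L h = lap h + d e h + algebraMap ℝ TF (I h) := fun h => rfl
  suffices hmem : ∀ k, ck k ∈ LinearMap.range L ∧ sk k ∈ LinearMap.range L by
    have : partialSum s f ∈ LinearMap.range L := Submodule.sum_mem _ fun k _ =>
      Submodule.add_mem _ (Submodule.smul_mem _ _ (hmem k).1) (Submodule.smul_mem _ _ (hmem k).2)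
    obtain ⟨h, hh⟩ := this
    exact ⟨h, by rw [← hL, hh]⟩
  intro k
  rcases eq_or_ne k 0 with rfl | hk
  · have h1 : ck 0 = 1 := by ext x; simp [ck_apply, ip]
    have h2 : sk 0 = 0 := by ext x; simp [sk_apply, ip]
    have h3 : d e (1 : TF) = 0 := (d e).map_one_eq_zero
    have h4 : ∀ e, d e (1 : TF) = 0 := fun e => (d e).map_one_eq_zero
    refine ⟨⟨1, ?_⟩, h2 ▸ Submodule.zero_mem _⟩
    rw [hL, h1, lap_apply]
    simp [h4]
  · have hw := one_le_wt hk
    have e1 : ck k = -(wt k)⁻¹ • lap (ck k) := by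
      rw [lap_ck, smul_smul]; field_simp; simp
    have e2 : sk k = -(wt k)⁻¹ • lap (sk k) := by
      rw [lap_sk, smul_smul]; field_simp; simp
    have i1 : I (ck k) = 0 := by rw [e1, map_smul, I_lap, smul_zero]
    have i2 : I (sk k) = 0 := by rw [e2, map_smul, I_lap, smul_zero]
    have l1 : L (ck k) = -wt k • ck k + -ip k e • sk k := by
      rw [hL, i1, lap_ck, d_ck]; simp
    have l2 : L (sk k) = -wt k • sk k + ip k e • ck k := by
      rw [hL, i2, lap_sk, d_sk]; simp
    set w := wt k
    set p := ip k e
    have hd : w ^ 2 + p ^ 2 ≠ 0 := by positivity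
    constructor
    · refine ⟨(w ^ 2 + p ^ 2)⁻¹ • (-w • ck k + p • sk k), ?_⟩
      rw [map_smul, map_add, map_smul, map_smul, l1, l2]
      ext x
      simp only [smul_apply, add_apply]
      field_simp
      ring
    · refine ⟨(w ^ 2 + p ^ 2)⁻¹ • (-w • sk k + -p • ck k), ?_⟩
      rw [map_smul, map_add, map_smul, map_smul, l1, l2]
      ext x
      simp only [smul_apply, add_apply]
      field_simp
      ring

end TF
end KodairaThurston

namespace KodairaThurston

open Filter Topology Set

/-- The unit vector along `X`. -/
noncomputable def eX (θ : ℝ) : E3 :=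
  Real.cos θ • EuclideanSpace.single 0 1 + (-Real.sin θ) • EuclideanSpace.single 1 1

/-- The unit vector along `Y`. -/
noncomputable def eY (θ : ℝ) : E3 :=
  Real.sin θ • EuclideanSpace.single 0 1 + Real.cos θ • EuclideanSpace.single 1 1

/-- The unit vector along `t`. -/
noncomputable def eT : E3 := EuclideanSpace.single 2 1

namespace TF

/-- The derivation `∂_X`. -/
noncomputable def DX (θ : ℝ) : Derivation ℝ TF TF := d (eX θ)

/-- The derivation `∂_Y`. -/
noncomputable def DY (θ : ℝ) : Derivation ℝ TF TF := d (eY θ)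

/-- The derivation `∂_t`. -/
noncomputable def DT : Derivation ℝ TF TF := d eT

variable (θ : ℝ)

lemma DY_DX (f : TF) : DY θ (DX θ f) = DX θ (DY θ f) := d_comm _ _ _
lemma DT_DX (f : TF) : DT (DX θ f) = DX θ (DT f) := d_comm _ _ _
lemma DT_DY (f : TF) : DT (DY θ f) = DY θ (DT f) := d_comm _ _ _
lemma d_DX (e : E3) (f : TF) : d e (DX θ f) = DX θ (d e f) := d_comm _ _ _
lemma d_DY (e : E3) (f : TF) : d e (DY θ f) = DY θ (d e f) := d_comm _ _ _
lemma d_DT (e : E3) (f : TF) : d e (DT f) = DT (d e f) := d_comm _ _ _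

@[simp] lemma two_apply (x : E3) : (2 : TF) x = 2 := by
  rw [← one_add_one_eq_two, add_apply, one_apply, one_add_one_eq_two]

lemma sum_frame (F : E3 → TF)
    (hF : ∀ a b : ℝ, ∀ i j, F (a • EuclideanSpace.single i 1 + b • EuclideanSpace.single j 1) =
      a ^ 2 • F (EuclideanSpace.single i 1) + b ^ 2 • F (EuclideanSpace.single j 1) +
      (a * b) • (F (EuclideanSpace.single i 1 + EuclideanSpace.single j 1) -
        F (EuclideanSpace.single i 1) - F (EuclideanSpace.single j 1))) :
    ∑ i : Fin 3, F (EuclideanSpace.single i 1) = F (eX θ) + F (eY θ) + F eT := by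
  rw [Fin.sum_univ_three, eX, eY, eT, hF, hF]
  have h := Real.sin_sq_add_cos_sq θ
  ext x
  simp only [add_apply, smul_apply, sub_apply]
  linear_combination (-F (EuclideanSpace.single 0 1) x - F (EuclideanSpace.single 1 1) x) * h

lemma lap_eq (f : TF) : lap f = DX θ (DX θ f) + DY θ (DY θ f) + DT (DT f) := by
  rw [lap_apply]
  refine sum_frame θ (fun e => d e (d e f)) fun a b i j => ?_
  ext x
  simp only [d_add_dir, d_smul_dir, map_add, Derivation.map_smul, add_apply, smul_apply, sub_apply]
  rw [d_comm (EuclideanSpace.single j 1) (EuclideanSpace.single i 1)]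
  ring

lemma sum_d_mul_d (f : TF) : ∑ i : Fin 3, d (EuclideanSpace.single i 1) f *
    d (EuclideanSpace.single i 1) f = DX θ f * DX θ f + DY θ f * DY θ f + DT f * DT f := by
  refine sum_frame θ (fun e => d e f * d e f) fun a b i j => ?_
  ext x
  simp only [d_add_dir, d_smul_dir, add_apply, smul_apply, sub_apply, mul_apply]
  ring

/-! ### The operators appearing in the equation -/

/-- `h ↦ h_XX`. -/
noncomputable def La : TF →ₗ[ℝ] TF := (DX θ).toLinearMap ∘ₗ (DX θ).toLinearMap
/-- `h ↦ h_YY + h_tt + h_t`. -/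
noncomputable def Lb : TF →ₗ[ℝ] TF :=
  (DY θ).toLinearMap ∘ₗ (DY θ).toLinearMap + DT.toLinearMap ∘ₗ DT.toLinearMap + DT.toLinearMap
/-- `h ↦ h_XY`. -/
noncomputable def Lc : TF →ₗ[ℝ] TF := (DX θ).toLinearMap ∘ₗ (DY θ).toLinearMap
/-- `h ↦ h_Xt`. -/
noncomputable def Ld : TF →ₗ[ℝ] TF := (DX θ).toLinearMap ∘ₗ DT.toLinearMap

lemma La_apply (h : TF) : La θ h = DX θ (DX θ h) := rfl
lemma Lb_apply (h : TF) : Lb θ h = DY θ (DY θ h) + DT (DT h) + DT h := rfl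
lemma Lc_apply (h : TF) : Lc θ h = DX θ (DY θ h) := rfl
lemma Ld_apply (h : TF) : Ld θ h = DX θ (DT h) := rfl

lemma La_d (e : E3) (h : TF) : La θ (d e h) = d e (La θ h) := by
  simp only [La_apply, d_DX]
lemma Lb_d (e : E3) (h : TF) : Lb θ (d e h) = d e (Lb θ h) := by
  simp only [Lb_apply, map_add, d_DY, d_DT]
lemma Lc_d (e : E3) (h : TF) : Lc θ (d e h) = d e (Lc θ h) := by
  simp only [Lc_apply, d_DX, d_DY]
lemma Ld_d (e : E3) (h : TF) : Ld θ (d e h) = d e (Ld θ h) := by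
  simp only [Ld_apply, d_DX, d_DT]

/-- The linearised operator with coefficients `A, B, C, D`. -/
noncomputable def bil (u h : TF) : TF :=
  (1 + Lb θ u) * La θ h + (1 + La θ u) * Lb θ h - 2 * (Lc θ u * Lc θ h) - 2 * (Ld θ u * Ld θ h)

/-- The quadratic part of the equation. -/
noncomputable def quad (h : TF) : TF :=
  La θ h * Lb θ h - Lc θ h * Lc θ h - Ld θ h * Ld θ h

/-- The nonlinear operator of the equation. -/
noncomputable def MA (u : TF) : TF :=
  (1 + La θ u) * (1 + Lb θ u) - Lc θ u * Lc θ u - Ld θ u * Ld θ u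

lemma d_MA (e : E3) (u : TF) : d e (MA θ u) = bil θ u (d e u) := by
  simp only [MA, bil, map_sub, map_add, Derivation.leibniz, smul_eq_mul, La_d, Lb_d, Lc_d, Ld_d,
    Derivation.map_one_eq_zero]
  ring

lemma d_bil (e : E3) (u h : TF) : d e (bil θ u h) = bil θ u (d e h) +
    (Lb θ (d e u) * La θ h + La θ (d e u) * Lb θ h - 2 * (Lc θ (d e u) * Lc θ h)
      - 2 * (Ld θ (d e u) * Ld θ h)) := by
  have h2 : d e (2 : TF) = 0 := by
    have := (d e).map_natCast 2
    exact_mod_cast this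
  simp only [bil, map_sub, map_add, Derivation.leibniz, smul_eq_mul, La_d, Lb_d, Lc_d, Ld_d,
    Derivation.map_one_eq_zero, h2]
  ring

lemma dd_MA (e : E3) (u : TF) :
    d e (d e (MA θ u)) = bil θ u (d e (d e u)) + 2 * quad θ (d e u) := by
  rw [d_MA, d_bil, quad]; ring

lemma bil_add (u h k : TF) : bil θ u (h + k) = bil θ u h + bil θ u k := by
  simp only [bil, map_add]; ring

lemma bil_smul (u h : TF) (c : ℝ) : bil θ u (c • h) = c • bil θ u h := by
  simp only [bil, map_smul]
  simp only [Algebra.smul_def]; ring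

lemma bil_sub (u h k : TF) : bil θ u (h - k) = bil θ u h - bil θ u k := by
  simp only [bil, map_sub]; ring

lemma bil_self (u : TF) : bil θ u u = 2 * MA θ u - (2 + La θ u + Lb θ u) := by
  simp only [bil, MA]; ring

/-- The linearised operator is in divergence form. -/
lemma I_bil (u h : TF) : I (bil θ u h) = 0 := by
  have key : bil θ u h =
      DX θ (DX θ h + DY θ (DY θ u) * DX θ h - DX θ (DY θ u) * DY θ h + DT (DT u) * DX θ h
        - DX θ (DT u) * DT h + DT u * DX θ h + DX θ u * DT h)
      + DY θ (DY θ h + DX θ (DX θ u) * DY θ h - DX θ (DY θ u) * DX θ h)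
      + DT (DT h + h + DX θ (DX θ u) * DT h - DX θ (DT u) * DX θ h - DX θ u * DX θ h) := by
    simp only [bil, La_apply, Lb_apply, Lc_apply, Ld_apply, map_add, map_sub, Derivation.leibniz,
      smul_eq_mul, DY_DX, DT_DX]
    ring
  rw [key, map_add, map_add]
  simp only [DX, DY, DT, I_d, add_zero]

/-- A normalised elliptic solution of the equation with right-hand side `E`. -/
structure IsSol (E u : TF) : Prop where
  eq : MA θ u = E
  pos : ∀ x, 0 < (1 + La θ u) x
  mean : I u = 0

lemma quad_le_sq {A B C D a b c e E : ℝ} (hA : 0 < A) (hE : 0 < E)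
    (h : A * B - C * C - D * D = E) :
    2 * (a * b - c * c - e * e) ≤
      (B * a + A * b - 2 * (C * c) - 2 * (D * e)) ^ 2 / (2 * E) := by
  rw [le_div_iff₀ (by positivity)]
  set L := B * a + A * b - 2 * (C * c) - 2 * (D * e) with hL
  have key : A ^ 2 * (L ^ 2 - 4 * E * (a * b - c * c - e * e)) =
      (A * L - 2 * E * a) ^ 2 + 4 * E * ((A * c - C * a) ^ 2 + (A * e - D * a) ^ 2) := by
    rw [hL, ← h]; ring
  have h1 : 0 ≤ A ^ 2 * (L ^ 2 - 4 * E * (a * b - c * c - e * e)) := by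
    rw [key]; positivity
  have h2 := nonneg_of_mul_nonneg_right h1 (by positivity)
  linarith

lemma MA_apply (u : TF) (x : E3) : (1 + La θ u) x * (1 + Lb θ u) x - Lc θ u x * Lc θ u x -
    Ld θ u x * Ld θ u x = MA θ u x := rfl

lemma IsSol.pos' {θ : ℝ} {E u : TF} (hs : IsSol θ E u) (hE : ∀ x, 0 < E x) (x : E3) :
    0 < (1 + Lb θ u) x := by
  have h := MA_apply θ u x
  rw [hs.eq] at h
  have h1 := hs.pos x
  have h2 := hE x
  by_contra! h3
  nlinarith [mul_nonneg h1.le (neg_nonneg.2 h3), mul_self_nonneg (Lc θ u x),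
    mul_self_nonneg (Ld θ u x)]

lemma two_quad_le {θ : ℝ} {E u : TF} (hs : IsSol θ E u) (hE : ∀ x, 0 < E x) (e x : E3) :
    2 * quad θ (d e u) x ≤ (d e E x) ^ 2 / (2 * E x) := by
  have h := quad_le_sq (a := La θ (d e u) x) (b := Lb θ (d e u) x) (c := Lc θ (d e u) x)
    (e := Ld θ (d e u) x) (hs.pos x) (hE x) (by rw [MA_apply, hs.eq])
  have h2 : d e E = bil θ u (d e u) := by rw [← hs.eq, d_MA]
  rw [h2]
  exact h

/-- The linearised operator is nonpositive at a maximum. -/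
lemma bil_nonpos_of_max {θ : ℝ} {E u : TF} (hs : IsSol θ E u) (hE : ∀ x, 0 < E x)
    {h : TF} {x : E3} (hx : ∀ y, h y ≤ h x) : bil θ u h x ≤ 0 := by
  set A := (1 + La θ u) x with hA
  set B := (1 + Lb θ u) x with hB
  set C := Lc θ u x with hC
  set D := Ld θ u x with hD
  have hA0 : 0 < A := hs.pos x
  have hEq : A * B - C * C - D * D = E x := by rw [hA, hB, hC, hD, MA_apply, hs.eq]
  have h1 := dd_nonpos_of_max hx (eX θ)
  have h2 := dd_nonpos_of_max hx ((-C) • eX θ + A • eY θ)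
  have h3 := dd_nonpos_of_max hx ((-D) • eX θ + A • eT)
  have h4 := d_eq_zero_of_max hx eT
  simp only [d_add_dir, d_smul_dir, map_add, Derivation.map_smul, add_apply, smul_apply] at h2 h3
  rw [d_comm (eY θ) (eX θ)] at h2
  rw [d_comm eT (eX θ)] at h3
  have h5 : bil θ u h x = B * d (eX θ) (d (eX θ) h) x + A * (d (eY θ) (d (eY θ) h) x +
      d eT (d eT h) x + d eT h x) - 2 * (C * d (eX θ) (d (eY θ) h) x)
      - 2 * (D * d (eX θ) (d eT h) x) := rfl
  have h6 : A * bil θ u h x ≤ 0 := by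
    have : A * bil θ u h x = E x * d (eX θ) (d (eX θ) h) x +
        (-C * (-C * d (eX θ) (d (eX θ) h) x + A * d (eX θ) (d (eY θ) h) x) +
          A * (-C * d (eX θ) (d (eY θ) h) x + A * d (eY θ) (d (eY θ) h) x)) +
        (-D * (-D * d (eX θ) (d (eX θ) h) x + A * d (eX θ) (d eT h) x) +
          A * (-D * d (eX θ) (d eT h) x + A * d eT (d eT h) x)) := by
      rw [h5, h4, ← hEq]; ring
    rw [this]
    have := mul_nonpos_of_nonneg_of_nonpos (hE x).le h1
    linarith
  by_contra! h7
  nlinarith [mul_pos hA0 h7]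

lemma N_lap_le (u : TF) : N (lap u) ≤ N (lap u + DT u) := by
  have h0 : I (lap u * DT u) = 0 := by
    have h1 : I (lap u * DT u) = -I (lap u * DT u) := by
      nth_rw 1 [mul_comm]
      rw [DT, I_parts, d_lap, mul_comm u, I_lap_mul, mul_comm (lap u)]
    linarith
  refine Real.sqrt_le_sqrt ?_
  have h2 : (lap u + DT u) * (lap u + DT u) =
      lap u * lap u + (lap u * DT u + lap u * DT u) + DT u * DT u := by ring
  rw [h2, map_add, map_add, map_add, h0]
  linarith [I_sq_nonneg (DT u)]

/-- The right-hand side bound in the maximum principle argument. -/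
noncomputable def rhsLap (E : TF) (x : E3) : ℝ :=
  (d (eX θ) (d (eX θ) E) x - (d (eX θ) E x) ^ 2 / (2 * E x)) +
  (d (eY θ) (d (eY θ) E) x - (d (eY θ) E x) ^ 2 / (2 * E x)) +
  (d eT (d eT E) x - (d eT E x) ^ 2 / (2 * E x)) + d eT E x

lemma trace_eq (u : TF) : 2 + La θ u + Lb θ u = 2 + (lap u + DT u) := by
  rw [lap_eq θ, La_apply, Lb_apply]; ring

lemma rhsLap_le_bil {θ : ℝ} {E u : TF} (hs : IsSol θ E u) (hE : ∀ x, 0 < E x) (x : E3) :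
    rhsLap θ E x ≤ bil θ u (2 + La θ u + Lb θ u) x := by
  have h0 : bil θ u 2 = 0 := by
    have : ∀ e, d e (2 : TF) = 0 := fun e => by exact_mod_cast (d e).map_natCast 2
    simp [bil, La, Lb, Lc, Ld, DX, DY, DT, this]
  have h1 : ∀ e, bil θ u (d e (d e u)) = d e (d e E) - 2 * quad θ (d e u) := fun e => by
    rw [← hs.eq, dd_MA]; ring
  have h2 : bil θ u (2 + La θ u + Lb θ u) =
      (d (eX θ) (d (eX θ) E) - 2 * quad θ (d (eX θ) u)) +
      (d (eY θ) (d (eY θ) E) - 2 * quad θ (d (eY θ) u)) +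
      (d eT (d eT E) - 2 * quad θ (d eT u)) + d eT E := by
    rw [trace_eq, lap_eq θ, bil_add, bil_add, bil_add, bil_add, h0, zero_add]
    rw [DX, DY, DT, h1, h1, h1, ← d_MA, hs.eq]
  rw [h2]
  simp only [add_apply, sub_apply, mul_apply, two_apply, rhsLap]
  linarith [two_quad_le hs hE (eX θ) x, two_quad_le hs hE (eY θ) x, two_quad_le hs hE eT x]

/-- The a priori bound on the trace. -/
lemma exists_trace_bound : ∃ C₁, 0 < C₁ ∧ ∀ {θ : ℝ} {E u : TF} {Λ₀ C₀ : ℝ}, IsSol θ E u →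
    (∀ x, 0 < E x) → (∀ x, E x ≤ Λ₀) → (∀ x, -C₀ ≤ rhsLap θ E x) →
    ∀ x, (1 + La θ u) x + (1 + Lb θ u) x ≤ 4 * Λ₀ + C₁ * C₀ + 2 := by
  obtain ⟨C, hC, hsup⟩ := exists_abs_le_N_lap
  refine ⟨8 * C, by positivity, fun {θ E u Λ₀ C₀} hs hE hΛ hC₀ => ?_⟩
  set T := 2 + La θ u + Lb θ u with hT
  have hTx : ∀ x, (1 + La θ u) x + (1 + Lb θ u) x = T x := fun x => by
    simp only [hT, add_apply, one_apply, two_apply]; ring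
  have hTpos : ∀ x, 0 < T x := fun x => by
    rw [← hTx]; exact add_pos (hs.pos x) (hs.pos' hE x)
  obtain ⟨x₁, hx₁⟩ := T.exists_max
  set K := 1 / (4 * C) with hK
  have hK0 : 0 < K := by positivity
  obtain ⟨x₀, hx₀⟩ := (T - K • u).exists_max
  have h1 := bil_nonpos_of_max hs hE hx₀
  rw [bil_sub, bil_smul, bil_self, hs.eq, ← hT] at h1
  have h2 := rhsLap_le_bil hs hE x₀
  rw [← hT] at h2
  simp only [sub_apply, smul_apply, mul_apply, two_apply] at h1
  have h3 : T x₀ ≤ 2 * Λ₀ + 4 * C * C₀ := by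
    have h4 : K * T x₀ ≤ K * (2 * E x₀) + C₀ := by nlinarith [hC₀ x₀]
    have h5 : K * T x₀ ≤ K * (2 * Λ₀ + 4 * C * C₀) := by
      have h6 : K * (4 * C) = 1 := by rw [hK]; field_simp
      have h7 : K * (4 * C * C₀) = C₀ := by linear_combination C₀ * h6
      have h8 := mul_le_mul_of_nonneg_left (hΛ x₀) hK0.le
      linarith
    exact le_of_mul_le_mul_left h5 hK0
  have h6 : N (lap u) ≤ T x₁ + 2 := by
    refine (N_lap_le u).trans (N_le_of_abs_le fun x => ?_)
    have : (lap u + DT u) x = T x - 2 := by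
      rw [hT, trace_eq]; simp
    rw [this, abs_le]
    constructor <;> linarith [hTpos x, hx₁ x, hTpos x₁]
  have h7 := hx₀ x₁
  simp only [sub_apply, smul_apply] at h7
  have h8 := abs_le.1 (hsup u hs.mean x₁)
  have h9 := abs_le.1 (hsup u hs.mean x₀)
  have h10 : K * (u x₁ - u x₀) ≤ (T x₁ + 2) / 2 := by
    calc K * (u x₁ - u x₀) ≤ K * (2 * (C * (T x₁ + 2))) := by
          refine mul_le_mul_of_nonneg_left ?_ hK0.le
          nlinarith
      _ = (T x₁ + 2) / 2 := by rw [hK]; field_simp; ring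
  intro x
  rw [hTx]
  have := hx₁ x
  linarith

end TF
end KodairaThurston

namespace KodairaThurston

open Filter Topology Set

namespace TF

/-! ### Uniformly bounded families -/

section Families

variable {ι κ : Type*}

/-- Uniform pointwise bound. -/
def BInf (f : ι → TF) : Prop := ∃ C, ∀ i x, |f i x| ≤ C
/-- Uniform `L⁴` bound. -/
def B4 (f : ι → TF) : Prop := ∃ C, ∀ i, I (f i * f i * (f i * f i)) ≤ C
/-- Uniform `L²` bound. -/
def B2 (f : ι → TF) : Prop := ∃ C, ∀ i, N (f i) ≤ C

lemma BInf.bound {f : ι → TF} (hf : BInf f) : ∃ C, 0 < C ∧ ∀ i x, |f i x| ≤ C := by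
  obtain ⟨C, hC⟩ := hf
  exact ⟨|C| + 1, by positivity, fun i x => (hC i x).trans (by linarith [le_abs_self C])⟩

lemma BInf.const (g : TF) : BInf fun _ : ι => g := by
  obtain ⟨C, hC⟩ := g.bdd
  exact ⟨C, fun _ => hC⟩

lemma BInf.add {f g : ι → TF} (hf : BInf f) (hg : BInf g) : BInf (f + g) := by
  obtain ⟨C, hC⟩ := hf
  obtain ⟨K, hK⟩ := hg
  exact ⟨C + K, fun i x => (abs_add_le _ _).trans (add_le_add (hC i x) (hK i x))⟩

lemma BInf.mul {f g : ι → TF} (hf : BInf f) (hg : BInf g) : BInf (f * g) := by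
  obtain ⟨C, hC0, hC⟩ := hf.bound
  obtain ⟨K, hK⟩ := hg
  exact ⟨C * K, fun i x => (abs_mul _ _).trans_le
    (mul_le_mul (hC i x) (hK i x) (abs_nonneg _) hC0.le)⟩

lemma BInf.neg {f : ι → TF} (hf : BInf f) : BInf (-f) := by
  obtain ⟨C, hC⟩ := hf
  exact ⟨C, fun i x => (abs_neg _).trans_le (hC i x)⟩

lemma B2.add {f g : ι → TF} (hf : B2 f) (hg : B2 g) : B2 (f + g) := by
  obtain ⟨C, hC⟩ := hf
  obtain ⟨K, hK⟩ := hg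
  exact ⟨C + K, fun i => (N_add_le _ _).trans (add_le_add (hC i) (hK i))⟩

lemma B2.neg {f : ι → TF} (hf : B2 f) : B2 (-f) := by
  obtain ⟨C, hC⟩ := hf
  exact ⟨C, fun i => (N_neg _).trans_le (hC i)⟩

lemma B2.of_sq {f : ι → TF} {C : ℝ} (h : ∀ i, I (f i * f i) ≤ C) : B2 f :=
  ⟨√C, fun i => Real.sqrt_le_sqrt (h i)⟩

lemma B2.sq {f : ι → TF} (hf : B2 f) : ∃ C, 0 ≤ C ∧ ∀ i, I (f i * f i) ≤ C := by
  obtain ⟨C, hC⟩ := hf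
  refine ⟨C ^ 2, sq_nonneg _, fun i => ?_⟩
  rw [← N_sq]
  exact pow_le_pow_left₀ (N_nonneg _) (hC i) 2

lemma BInf.mul_B2 {f g : ι → TF} (hf : BInf f) (hg : B2 g) : B2 (f * g) := by
  obtain ⟨C, hC0, hC⟩ := hf.bound
  obtain ⟨K, hK⟩ := hg
  exact ⟨C * K, fun i => (N_mul_le (hC i)).trans (mul_le_mul_of_nonneg_left (hK i) hC0.le)⟩

lemma B4_iff {f : ι → TF} : B4 f ↔ B2 (f * f) :=
  ⟨fun ⟨_, h⟩ => B2.of_sq h, fun h => by obtain ⟨C, -, hC⟩ := h.sq; exact ⟨C, hC⟩⟩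

lemma BInf.mul_B4 {f g : ι → TF} (hf : BInf f) (hg : B4 g) : B4 (f * g) := by
  rw [B4_iff] at hg ⊢
  have := (hf.mul hf).mul_B2 hg
  rwa [mul_mul_mul_comm] at this

lemma B2.mono {f g : ι → TF} (hg : B2 g) (h : ∀ i x, |f i x| ≤ |g i x|) : B2 f := by
  obtain ⟨C, hC⟩ := hg
  exact ⟨C, fun i => (N_mono (h i)).trans (hC i)⟩

lemma B4.mul {f g : ι → TF} (hf : B4 f) (hg : B4 g) : B2 (f * g) := by
  rw [B4_iff] at hf hg
  refine (hf.add hg).mono fun i x => ?_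
  simp only [Pi.mul_apply, Pi.add_apply, mul_apply, add_apply]
  rw [abs_of_nonneg (add_nonneg (mul_self_nonneg (f i x)) (mul_self_nonneg (g i x))), abs_le]
  constructor <;> nlinarith [sq_nonneg (f i x - g i x), sq_nonneg (f i x + g i x)]

lemma B4.add {f g : ι → TF} (hf : B4 f) (hg : B4 g) : B4 (f + g) := by
  rw [B4_iff]
  have h : (f + g) * (f + g) = f * f + g * g + (f * g + f * g) := by ring
  rw [h]
  exact ((B4_iff.1 hf).add (B4_iff.1 hg)).add ((hf.mul hg).add (hf.mul hg))

lemma B4.neg {f : ι → TF} (hf : B4 f) : B4 (-f) := by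
  rw [B4_iff] at *
  rwa [neg_mul_neg]

lemma BInf.B2 {f : ι → TF} (hf : BInf f) : B2 f := by
  obtain ⟨C, hC⟩ := hf
  exact ⟨C, fun i => N_le_of_abs_le (hC i)⟩

lemma BInf.B4 {f : ι → TF} (hf : BInf f) : B4 f := B4_iff.2 (hf.mul hf).B2

end Families

/-! ### Energy estimates for commuting frames -/

section Energy

variable {μ : TF →ₗ[ℝ] ℝ} (hμ : ∀ f : TF, (∀ x, 0 ≤ f x) → 0 ≤ μ f)

include hμ in
lemma functional_mono {f g : TF} (h : ∀ x, f x ≤ g x) : μ f ≤ μ g := by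
  have := hμ (g - f) fun x => sub_nonneg.2 (h x)
  rw [map_sub] at this
  linarith

lemma functional_parts {D : Derivation ℝ TF TF} (hD : ∀ f, μ (D f) = 0) (f g : TF) :
    μ (D f * g) = -μ (f * D g) := by
  have h := hD (f * g)
  rw [Derivation.leibniz, map_add, smul_eq_mul, smul_eq_mul, mul_comm g] at h
  linarith

include hμ in
lemma interpolation {D : Derivation ℝ TF TF} (hD : ∀ f, μ (D f) = 0) {f : TF} {s : ℝ}
    (hs : ∀ x, |f x| ≤ s) :
    μ (D f * D f * (D f * D f)) ≤ 9 * s ^ 2 * μ (D (D f) * D (D f)) := by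
  have h1 : μ (D f * D f * (D f * D f)) = -(3 * μ (f * (D f * D f * D (D f)))) := by
    rw [mul_assoc, functional_parts hD]
    simp only [Derivation.leibniz, smul_eq_mul]
    have : f * (D f * (D f * D (D f) + D f * D (D f)) + D f * D f * D (D f)) =
      (3 : ℝ) • (f * (D f * D f * D (D f))) := by
      ext x; simp only [mul_apply, add_apply, smul_apply]; ring
    rw [this, map_smul, smul_eq_mul]
  have h2 : -(3 * μ (f * (D f * D f * D (D f)))) ≤
      μ ((1 / 2 : ℝ) • (D f * D f * (D f * D f)) + (9 / 2 * s ^ 2) • (D (D f) * D (D f))) := by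
    rw [← neg_mul, ← smul_eq_mul, ← map_smul]
    refine functional_mono hμ fun x => ?_
    simp only [mul_apply, add_apply, smul_apply]
    have h3 : (f x) ^ 2 ≤ s ^ 2 := sq_le_sq' (by linarith [(abs_le.1 (hs x)).1]) (abs_le.1 (hs x)).2
    nlinarith [sq_nonneg (D f x * D f x + 3 * f x * D (D f) x),
      mul_le_mul_of_nonneg_right h3 (sq_nonneg (D (D f) x))]
  rw [← h1, map_add, map_smul, map_smul, smul_eq_mul, smul_eq_mul] at h2
  linarith

include hμ in
lemma energy {D₁ D₂ D₃ D : Derivation ℝ TF TF} (h₁ : ∀ f, μ (D₁ f) = 0) (h₂ : ∀ f, μ (D₂ f) = 0)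
    (h₃ : ∀ f, μ (D₃ f) = 0) (hD : D = D₁ ∨ D = D₂ ∨ D = D₃) {E q γ β : TF} {l : ℝ} (hl : 0 < l)
    (hl1 : l ≤ 1) (hE : ∀ x, l ≤ E x)
    (hq : D₁ (E * D₁ q) + D₂ (D₂ q) + D₃ (D₃ q) + D₃ q = D γ + D₁ β) :
    l ^ 2 * μ (D₁ q * D₁ q + D₂ q * D₂ q + D₃ q * D₃ q) ≤ 2 * μ (γ * γ) + 2 * μ (β * β) := by
  have hD0 : ∀ f, μ (D f) = 0 := by rcases hD with rfl | rfl | rfl <;> assumption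
  have h4 : μ (D₃ q * q) = 0 := by
    have := functional_parts h₃ q q
    rw [mul_comm q] at this
    linarith
  have h5 : μ (E * (D₁ q * D₁ q) + D₂ q * D₂ q + D₃ q * D₃ q) = μ (γ * D q + β * D₁ q) := by
    have h6 := congrArg (fun f => μ (f * q)) hq
    simp only [add_mul, map_add] at h6 ⊢
    rw [functional_parts h₁, functional_parts h₂, functional_parts h₃, functional_parts hD0,
      functional_parts h₁, h4, mul_assoc] at h6
    linarith
  have h6 : μ (l • (D₁ q * D₁ q + D₂ q * D₂ q + D₃ q * D₃ q)) ≤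
      μ (E * (D₁ q * D₁ q) + D₂ q * D₂ q + D₃ q * D₃ q) := by
    refine functional_mono hμ fun x => ?_
    simp only [mul_apply, add_apply, smul_apply]
    nlinarith [mul_le_mul_of_nonneg_right (hE x) (mul_self_nonneg (D₁ q x)),
      mul_le_mul_of_nonneg_right hl1 (mul_self_nonneg (D₂ q x)),
      mul_le_mul_of_nonneg_right hl1 (mul_self_nonneg (D₃ q x))]
  have h7 : μ (l • (γ * D q + β * D₁ q)) ≤ μ (γ * γ + β * β +
      (l ^ 2 / 2) • (D₁ q * D₁ q + D₂ q * D₂ q + D₃ q * D₃ q)) := by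
    refine functional_mono hμ fun x => ?_
    simp only [mul_apply, add_apply, smul_apply]
    have h8 : D q x * D q x ≤ D₁ q x * D₁ q x + D₂ q x * D₂ q x + D₃ q x * D₃ q x := by
      rcases hD with h | h | h <;> rw [h] <;>
        linarith [mul_self_nonneg (D₁ q x), mul_self_nonneg (D₂ q x), mul_self_nonneg (D₃ q x)]
    nlinarith [sq_nonneg (2 * γ x - l * D q x), sq_nonneg (2 * β x - l * D₁ q x),
      mul_le_mul_of_nonneg_left h8 (sq_nonneg l), mul_self_nonneg (D₂ q x),
      mul_self_nonneg (D₃ q x), mul_nonneg (sq_nonneg l) (mul_self_nonneg (D₂ q x)),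
      mul_nonneg (sq_nonneg l) (mul_self_nonneg (D₃ q x))]
  simp only [map_smul, map_add μ (γ * γ + β * β), map_add μ (γ * γ), smul_eq_mul] at h6 h7
  rw [h5] at h6
  nlinarith [mul_le_mul_of_nonneg_left h6 hl.le]

end Energy

/-! ### The adapted frame -/

section Frame

variable (θ : ℝ) (u : TF)

open Classical in
/-- The inverse of `1 + u_XX`. -/
noncomputable def mInv : TF :=
  if h : ∀ x, (1 + La θ u) x ≠ 0 then inv (1 + La θ u) h else 0

/-- The coefficients of the adapted frame. -/
noncomputable def rr : Fin 3 → TF := ![mInv θ u, -(mInv θ u * Lc θ u), -(mInv θ u * Ld θ u)]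

/-- The parts of the adapted frame transverse to `X`. -/
noncomputable def PP : Fin 3 → Derivation ℝ TF TF := ![0, DY θ, DT]

/-- The adapted frame, a triple of commuting derivations. -/
noncomputable def fr (j : Fin 3) : Derivation ℝ TF TF := PP θ j + rr θ u j • DX θ

lemma fr_apply (j : Fin 3) (f : TF) : fr θ u j f = PP θ j f + rr θ u j * DX θ f := rfl
lemma fr_zero (f : TF) : fr θ u 0 f = mInv θ u * DX θ f := by
  simp [fr_apply, PP, rr]
lemma fr_one (f : TF) : fr θ u 1 f = DY θ f - mInv θ u * Lc θ u * DX θ f := by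
  simp [fr_apply, PP, rr, sub_eq_add_neg]
lemma fr_two (f : TF) : fr θ u 2 f = DT f - mInv θ u * Ld θ u * DX θ f := by
  simp [fr_apply, PP, rr, sub_eq_add_neg]

variable {θ u} {E : TF} (hs : IsSol θ E u)
include hs

lemma IsSol.mul_mInv : (1 + La θ u) * mInv θ u = 1 := by
  have h : ∀ x, (1 + La θ u) x ≠ 0 := fun x => (hs.pos x).ne'
  rw [mInv, dif_pos h, mul_inv]

lemma IsSol.d_mInv (δ : Derivation ℝ TF TF) :
    δ (mInv θ u) = -(mInv θ u * mInv θ u * δ (La θ u)) := by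
  have h := hs.mul_mInv
  have h1 := congrArg δ h
  simp only [Derivation.leibniz, smul_eq_mul, map_add, Derivation.map_one_eq_zero] at h1
  linear_combination mInv θ u * h1 - δ (mInv θ u) * h

lemma IsSol.fr_rr (j k : Fin 3) : fr θ u j (rr θ u k) = fr θ u k (rr θ u j) := by
  have h1 : DY θ (La θ u) = DX θ (Lc θ u) := by simp only [La_apply, Lc_apply, DY_DX]
  have h2 : DT (La θ u) = DX θ (Ld θ u) := by simp only [La_apply, Ld_apply, DT_DX]
  have h3 : DY θ (Ld θ u) = DT (Lc θ u) := by simp only [Lc_apply, Ld_apply, DT_DX, DY_DX, DT_DY]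
  have h01 : fr θ u 0 (rr θ u 1) = fr θ u 1 (rr θ u 0) := by
    rw [fr_zero, fr_one]
    simp only [rr, Matrix.cons_val_zero, Matrix.cons_val_one, map_neg, Derivation.leibniz,
      smul_eq_mul, hs.d_mInv, h1]
    ring
  have h02 : fr θ u 0 (rr θ u 2) = fr θ u 2 (rr θ u 0) := by
    rw [fr_zero, fr_two]
    simp only [rr, Matrix.cons_val_zero, Matrix.cons_val, map_neg, Derivation.leibniz,
      smul_eq_mul, hs.d_mInv, h2]
    ring
  have h12 : fr θ u 1 (rr θ u 2) = fr θ u 2 (rr θ u 1) := by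
    rw [fr_one, fr_two]
    simp only [rr, Matrix.cons_val_one, Matrix.cons_val, map_neg, Derivation.leibniz,
      smul_eq_mul, hs.d_mInv, h1, h2, h3]
    ring
  fin_cases j <;> fin_cases k <;> first | rfl | assumption | (symm; assumption)

lemma IsSol.fr_comm (j k : Fin 3) (f : TF) : fr θ u j (fr θ u k f) = fr θ u k (fr θ u j f) := by
  have h1 := hs.fr_rr j k
  have h2 : PP θ j (PP θ k f) = PP θ k (PP θ j f) := by
    fin_cases j <;> fin_cases k <;> simp [PP, DT_DY]
  have h3 : ∀ j, PP θ j (DX θ f) = DX θ (PP θ j f) := by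
    intro j; fin_cases j <;> simp [PP, DT_DX, DY_DX]
  rw [fr_apply, fr_apply] at h1
  simp only [fr_apply, map_add, Derivation.leibniz, smul_eq_mul, h3]
  linear_combination h2 + DX θ f * h1

lemma IsSol.mul_mInv_eq : E * mInv θ u = 1 + Lb θ u -
    mInv θ u * (Lc θ u * Lc θ u + Ld θ u * Ld θ u) := by
  rw [← hs.eq, MA]
  linear_combination (1 + Lb θ u) * hs.mul_mInv

lemma IsSol.fr_rr_eq : fr θ u 0 (E * rr θ u 0) + fr θ u 1 (rr θ u 1) + fr θ u 2 (rr θ u 2) +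
    rr θ u 2 = 0 := by
  have h1 : DY θ (La θ u) = DX θ (Lc θ u) := by simp only [La_apply, Lc_apply, DY_DX]
  have h2 : DT (La θ u) = DX θ (Ld θ u) := by simp only [La_apply, Ld_apply, DT_DX]
  have h4 : DX θ (Lb θ u) = DY θ (Lc θ u) + DT (Ld θ u) + Ld θ u := by
    simp only [Lb_apply, Lc_apply, Ld_apply, map_add, DT_DX, DY_DX]
  rw [fr_zero, fr_one, fr_two]
  simp only [rr, Matrix.cons_val_zero, Matrix.cons_val_one, Matrix.cons_val, map_neg]
  rw [hs.mul_mInv_eq]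
  simp only [map_add, map_sub, Derivation.leibniz, Derivation.map_one_eq_zero,
      smul_eq_mul, hs.d_mInv, h1, h2, h4]
  ring

omit hs in
/-- The linearised operator in the adapted frame. -/
noncomputable def Lop (θ : ℝ) (E u h : TF) : TF :=
  fr θ u 0 (E * fr θ u 0 h) + fr θ u 1 (fr θ u 1 h) + fr θ u 2 (fr θ u 2 h) + fr θ u 2 h

lemma IsSol.mul_Lop (h : TF) : (1 + La θ u) * Lop θ E u h = bil θ u h := by
  have h1 := hs.fr_rr_eq
  have h2 : Lop θ E u h = E * mInv θ u * mInv θ u * DX θ (DX θ h) + DY θ (DY θ h) + DT (DT h) +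
      DT h - 2 * (mInv θ u * Lc θ u) * DX θ (DY θ h) - 2 * (mInv θ u * Ld θ u) * DX θ (DT h) +
      ((mInv θ u * Lc θ u) * (mInv θ u * Lc θ u) + (mInv θ u * Ld θ u) * (mInv θ u * Ld θ u)) *
        DX θ (DX θ h) := by
    rw [Lop]
    simp only [fr_zero, fr_one, fr_two, rr, Matrix.cons_val_zero, Matrix.cons_val_one,
      Matrix.cons_val, map_neg, map_sub, Derivation.leibniz, smul_eq_mul, DT_DX, DY_DX] at h1 ⊢
    linear_combination DX θ h * h1
  rw [h2, hs.mul_mInv_eq, bil, La_apply θ h, Lb_apply θ h, Lc_apply θ h, Ld_apply θ h]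
  have h3 := hs.mul_mInv
  set m := mInv θ u
  linear_combination (DX θ (DX θ h) * ((1 + Lb θ u)) - 2 * Lc θ u * DX θ (DY θ h)
    - 2 * Ld θ u * DX θ (DT h)) * h3

lemma IsSol.I_mul_fr (j : Fin 3) (f : TF) : I ((1 + La θ u) * fr θ u j f) = 0 := by
  have h1 : DY θ (La θ u) = DX θ (Lc θ u) := by simp only [La_apply, Lc_apply, DY_DX]
  have h2 : DT (La θ u) = DX θ (Ld θ u) := by simp only [La_apply, Ld_apply, DT_DX]
  have h3 := hs.mul_mInv
  have hX : ∀ f, I (DX θ f) = 0 := I_d _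
  have hY : ∀ f, I (DY θ f) = 0 := I_d _
  have hT : ∀ f, I (DT f) = 0 := I_d _
  have e0 : (1 + La θ u) * fr θ u 0 f = DX θ f := by
    rw [fr_zero]; linear_combination DX θ f * h3
  have e1 : (1 + La θ u) * fr θ u 1 f = DY θ ((1 + La θ u) * f) - DX θ (Lc θ u * f) := by
    rw [fr_one]
    simp only [Derivation.leibniz, map_add, Derivation.map_one_eq_zero, smul_eq_mul, h1]
    linear_combination -(Lc θ u * DX θ f) * h3
  have e2 : (1 + La θ u) * fr θ u 2 f = DT ((1 + La θ u) * f) - DX θ (Ld θ u * f) := by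
    rw [fr_two]
    simp only [Derivation.leibniz, map_add, Derivation.map_one_eq_zero, smul_eq_mul, h2]
    linear_combination -(Ld θ u * DX θ f) * h3
  fin_cases j
  · exact (congrArg I e0).trans (hX _)
  · refine (congrArg I e1).trans ?_
    rw [map_sub, hX, hY, sub_zero]
  · refine (congrArg I e2).trans ?_
    rw [map_sub, hX, hT, sub_zero]

lemma IsSol.fr_Lop (j : Fin 3) (h : TF) : Lop θ E u (fr θ u j h) =
    fr θ u j (Lop θ E u h) + fr θ u 0 (-(fr θ u j E * fr θ u 0 h)) := by
  have hc := hs.fr_comm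
  simp only [Lop, map_add, map_neg, hc j, Derivation.leibniz, smul_eq_mul]
  ring

lemma IsSol.Lop_rr (j : Fin 3) : Lop θ E u (rr θ u j) = fr θ u 0 (-(fr θ u j E * rr θ u 0)) := by
  have hc := hs.fr_comm
  have h1 := congrArg (fr θ u j) hs.fr_rr_eq
  simp only [map_add, map_zero] at h1
  rw [hc j 0, hc j 1, hc j 2, hs.fr_rr j 1, hs.fr_rr j 2] at h1
  rw [Derivation.leibniz, smul_eq_mul, smul_eq_mul, hs.fr_rr j 0, map_add] at h1
  rw [Lop, map_neg, mul_comm (fr θ u j E)]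
  linear_combination h1

end Frame

end TF
end KodairaThurston

namespace KodairaThurston

open Filter Topology Set

namespace TF

/-! ### A priori estimates for families of solutions -/

variable {ι κ : Type*}

/-- A family of solutions with uniformly controlled right-hand sides. -/
structure Fam (θ : ℝ) (E u : ι → TF) : Prop where
  sol : ∀ i, IsSol θ (E i) (u i)
  low : ∃ l, 0 < l ∧ l ≤ 1 ∧ ∀ i x, l ≤ E i x
  b0 : BInf E
  b1 : ∀ e, BInf fun i => d e (E i)
  b2 : ∀ e e', BInf fun i => d e (d e' (E i))

lemma BInf.comp {f : ι → TF} (hf : BInf f) (p : κ → ι) : BInf fun k => f (p k) := by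
  obtain ⟨C, hC⟩ := hf
  exact ⟨C, fun k => hC (p k)⟩

namespace Fam

variable {θ : ℝ} {E u : ι → TF} (H : Fam θ E u)
include H

lemma comp (p : κ → ι) : Fam θ (fun k => E (p k)) (fun k => u (p k)) where
  sol k := H.sol (p k)
  low := by
    obtain ⟨l, h, h1, h2⟩ := H.low
    exact ⟨l, h, h1, fun k => h2 (p k)⟩
  b0 := H.b0.comp p
  b1 e := (H.b1 e).comp p
  b2 e e' := (H.b2 e e').comp p

lemma pos (i : ι) (x : E3) : 0 < E i x := by
  obtain ⟨l, h, -, h2⟩ := H.low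
  exact h.trans_le (h2 i x)

lemma trace_bound : ∃ M, 1 ≤ M ∧ ∀ i x, (1 + La θ (u i)) x + (1 + Lb θ (u i)) x ≤ M := by
  obtain ⟨C₁, -, hT⟩ := exists_trace_bound
  obtain ⟨Λ, hΛ0, hΛ⟩ := H.b0.bound
  obtain ⟨l, hl, -, hlE⟩ := H.low
  have term : ∀ e, ∃ K, ∀ i x, -K ≤ d e (d e (E i)) x - (d e (E i) x) ^ 2 / (2 * E i x) := by
    intro e
    obtain ⟨K1, hK1, h1⟩ := (H.b1 e).bound
    obtain ⟨K2, hK2, h2⟩ := (H.b2 e e).bound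
    refine ⟨K2 + K1 ^ 2 / (2 * l), fun i x => ?_⟩
    have h3 : (d e (E i) x) ^ 2 / (2 * E i x) ≤ K1 ^ 2 / (2 * l) := by
      refine div_le_div₀ (sq_nonneg _) ?_ (by positivity) (by linarith [hlE i x])
      rw [← sq_abs]
      exact pow_le_pow_left₀ (abs_nonneg _) (h1 i x) 2
    linarith [(abs_le.1 (h2 i x)).1]
  obtain ⟨a, ha⟩ := term (eX θ)
  obtain ⟨b, hb⟩ := term (eY θ)
  obtain ⟨c, hc⟩ := term eT
  obtain ⟨K, hK0, hK⟩ := (H.b1 eT).bound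
  refine ⟨max 1 (4 * Λ + C₁ * (a + b + c + K) + 2), le_max_left _ _, fun i x => ?_⟩
  refine le_trans (hT (H.sol i) (H.pos i) (fun x => (le_abs_self _).trans (hΛ i x))
    (fun x => ?_) x) (le_max_right _ _)
  have h1 := (abs_le.1 (hK i x)).1
  rw [rhsLap]
  linarith [ha i x, hb i x, hc i x]

lemma coeff_bounds : ∃ M, 1 ≤ M ∧ ∀ i x, (1 + La θ (u i)) x ≤ M ∧ |Lc θ (u i) x| ≤ M ∧
    |Ld θ (u i) x| ≤ M ∧ 0 < mInv θ (u i) x ∧ mInv θ (u i) x ≤ M := by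
  obtain ⟨M, hM1, hM⟩ := H.trace_bound
  obtain ⟨l, hl, hl1, hlE⟩ := H.low
  refine ⟨M / l, (one_le_div hl).2 (hl1.trans hM1), fun i x => ?_⟩
  have hMl : M ≤ M / l := le_div_self (by linarith) hl hl1
  have hA := (H.sol i).pos x
  have hB := (H.sol i).pos' (H.pos i) x
  have hAB := hM i x
  have hEq := MA_apply θ (u i) x
  rw [(H.sol i).eq] at hEq
  have hE := hlE i x
  have hm : (1 + La θ (u i)) x * mInv θ (u i) x = 1 := by
    rw [← mul_apply, (H.sol i).mul_mInv, one_apply]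
  have hm0 : 0 < mInv θ (u i) x := by
    by_contra! h
    linarith [mul_nonpos_of_nonneg_of_nonpos hA.le h]
  have hsq : Lc θ (u i) x ^ 2 + Ld θ (u i) x ^ 2 ≤ M ^ 2 := by
    nlinarith [mul_pos hA hB]
  refine ⟨by linarith, ?_, ?_, hm0, ?_⟩
  · exact (abs_le_of_sq_le_sq (by nlinarith [sq_nonneg (Ld θ (u i) x)]) (by linarith)).trans hMl
  · exact (abs_le_of_sq_le_sq (by nlinarith [sq_nonneg (Lc θ (u i) x)]) (by linarith)).trans hMl
  · rw [le_div_iff₀ hl]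
    have h1 : E i x * mInv θ (u i) x = (1 + Lb θ (u i)) x - mInv θ (u i) x *
        (Lc θ (u i) x * Lc θ (u i) x + Ld θ (u i) x * Ld θ (u i) x) := by
      have := congrArg (fun f : TF => f x) (H.sol i).mul_mInv_eq
      exact this
    nlinarith [mul_nonneg hm0.le (add_nonneg (mul_self_nonneg (Lc θ (u i) x))
      (mul_self_nonneg (Ld θ (u i) x))), mul_le_mul_of_nonneg_right hE hm0.le]

lemma bA : BInf fun i => 1 + La θ (u i) := by
  obtain ⟨M, -, hM⟩ := H.coeff_bounds
  exact ⟨M, fun i x => (abs_of_pos ((H.sol i).pos x)).trans_le (hM i x).1⟩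
lemma bC : BInf fun i => Lc θ (u i) := by
  obtain ⟨M, -, hM⟩ := H.coeff_bounds
  exact ⟨M, fun i x => (hM i x).2.1⟩
lemma bD : BInf fun i => Ld θ (u i) := by
  obtain ⟨M, -, hM⟩ := H.coeff_bounds
  exact ⟨M, fun i x => (hM i x).2.2.1⟩
lemma bm : BInf fun i => mInv θ (u i) := by
  obtain ⟨M, -, hM⟩ := H.coeff_bounds
  exact ⟨M, fun i x => (abs_of_pos (hM i x).2.2.2.1).trans_le (hM i x).2.2.2.2⟩

omit H in
/-- The measure invariant under the adapted frame. -/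
noncomputable def mu (θ : ℝ) (u : TF) : TF →ₗ[ℝ] ℝ := I ∘ₗ LinearMap.mulLeft ℝ (1 + La θ u)

omit H in
lemma mu_apply (u f : TF) : mu θ u f = I ((1 + La θ u) * f) := rfl

lemma mu_nonneg (i : ι) (f : TF) (hf : ∀ x, 0 ≤ f x) : 0 ≤ mu θ (u i) f :=
  I_nonneg fun x => mul_nonneg ((H.sol i).pos x).le (hf x)

lemma mu_fr (i : ι) (j : Fin 3) (f : TF) : mu θ (u i) (fr θ (u i) j f) = 0 :=
  (H.sol i).I_mul_fr j f

lemma mu_compare : ∃ M, 1 ≤ M ∧ ∀ i (f : TF), (∀ x, 0 ≤ f x) →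
    mu θ (u i) f ≤ M * I f ∧ I f ≤ M * mu θ (u i) f := by
  obtain ⟨M, h1, hM⟩ := H.coeff_bounds
  refine ⟨M, h1, fun i f hf => ⟨?_, ?_⟩⟩
  · rw [mu_apply, ← smul_eq_mul (a := M), ← map_smul]
    exact I_mono fun x => mul_le_mul_of_nonneg_right (hM i x).1 (hf x)
  · rw [mu_apply, ← smul_eq_mul (a := M), ← map_smul]
    refine I_mono fun x => ?_
    have h2 := congrArg (fun f : TF => f x) (H.sol i).mul_mInv
    simp only [mul_apply, one_apply] at h2
    simp only [smul_apply, mul_apply]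
    have h3 := mul_nonneg ((H.sol i).pos x).le (hf x)
    have h4 := mul_le_mul_of_nonneg_right (hM i x).2.2.2.2 h3
    calc f x = mInv θ (u i) x * ((1 + La θ (u i)) x * f x) := by
          linear_combination -f x * h2
      _ ≤ _ := h4

lemma B2_of_mu {f : ι → TF} {C : ℝ} (h : ∀ i, mu θ (u i) (f i * f i) ≤ C) : B2 f := by
  obtain ⟨M, h1, hM⟩ := H.mu_compare
  refine B2.of_sq (C := M * C) fun i => (hM i _ fun x => mul_self_nonneg (f i x)).2.trans ?_
  exact mul_le_mul_of_nonneg_left (h i) (by linarith)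

lemma mu_of_B2 {f : ι → TF} (h : B2 f) : ∃ C, 0 ≤ C ∧ ∀ i, mu θ (u i) (f i * f i) ≤ C := by
  obtain ⟨M, h1, hM⟩ := H.mu_compare
  obtain ⟨C, hC0, hC⟩ := h.sq
  exact ⟨M * C, by positivity, fun i => (hM i _ fun x => mul_self_nonneg (f i x)).1.trans
    (mul_le_mul_of_nonneg_left (hC i) (by linarith))⟩

omit H in
/-- The adapted frame acting on families. -/
noncomputable def FD (θ : ℝ) (u : ι → TF) (j : Fin 3) (f : ι → TF) : ι → TF :=
  fun i => fr θ (u i) j (f i)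

section
omit H
variable (j : Fin 3) (f g : ι → TF)
lemma FD_add : FD θ u j (f + g) = FD θ u j f + FD θ u j g := funext fun _ => map_add _ _ _
lemma FD_neg : FD θ u j (-f) = -FD θ u j f := funext fun _ => map_neg _ _
lemma FD_mul : FD θ u j (f * g) = f * FD θ u j g + g * FD θ u j f :=
  funext fun _ => Derivation.leibniz _ _ _
end

omit H in
lemma le_sum_three {F : Fin 3 → ℝ} (hF : ∀ k, 0 ≤ F k) (j : Fin 3) : F j ≤ F 0 + F 1 + F 2 := by
  rw [← Fin.sum_univ_three]
  exact Finset.single_le_sum (fun k _ => hF k) (Finset.mem_univ j)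

lemma energy_B2 {q γ β : ι → TF} (e : Fin 3) (hq : ∀ i, Lop θ (E i) (u i) (q i) =
    fr θ (u i) e (γ i) + fr θ (u i) 0 (β i)) (hγ : B2 γ) (hβ : B2 β) (j : Fin 3) :
    B2 (FD θ u j q) := by
  obtain ⟨l, hl, hl1, hlE⟩ := H.low
  obtain ⟨a, ha0, ha⟩ := H.mu_of_B2 hγ
  obtain ⟨b, hb0, hb⟩ := H.mu_of_B2 hβ
  refine H.B2_of_mu (C := (2 * a + 2 * b) / l ^ 2) fun i => ?_
  have h := energy (H.mu_nonneg i) (H.mu_fr i 0) (H.mu_fr i 1) (H.mu_fr i 2)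
    (D := fr θ (u i) e) (by fin_cases e <;> simp) hl hl1 (hlE i) (hq i)
  have h0 : ∀ k, 0 ≤ mu θ (u i) (fr θ (u i) k (q i) * fr θ (u i) k (q i)) := fun k =>
    H.mu_nonneg i _ fun x => mul_self_nonneg _
  have h1 : mu θ (u i) (FD θ u j q i * FD θ u j q i) ≤
      mu θ (u i) (fr θ (u i) 0 (q i) * fr θ (u i) 0 (q i) + fr θ (u i) 1 (q i) * fr θ (u i) 1 (q i)
        + fr θ (u i) 2 (q i) * fr θ (u i) 2 (q i)) := by
    rw [map_add, map_add]
    exact le_sum_three h0 j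
  rw [le_div_iff₀ (by positivity), mul_comm]
  calc _ ≤ _ := mul_le_mul_of_nonneg_left h1 (sq_nonneg l)
    _ ≤ _ := h
    _ ≤ _ := by linarith [ha i, hb i]

lemma B4_of_B2 {f : ι → TF} (hf : BInf f) (j : Fin 3) (h : B2 (FD θ u j (FD θ u j f))) :
    B4 (FD θ u j f) := by
  obtain ⟨s, hs0, hs⟩ := hf.bound
  obtain ⟨a, ha0, ha⟩ := H.mu_of_B2 h
  refine B4_iff.2 (H.B2_of_mu (C := 9 * s ^ 2 * a) fun i => ?_)
  refine (interpolation (H.mu_nonneg i) (H.mu_fr i j) (hs i)).trans ?_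
  exact mul_le_mul_of_nonneg_left (ha i) (by positivity)

omit H in
/-- Families with bounded values, first derivatives in `L⁴` and second derivatives in `L²`,
with respect to the adapted frame. -/
structure GG (θ : ℝ) (u f : ι → TF) : Prop where
  inf : BInf f
  b4 : ∀ j, B4 (FD θ u j f)
  b2 : ∀ j k, B2 (FD θ u j (FD θ u k f))

lemma GG_of {f : ι → TF} (hf : BInf f) (h : ∀ j k, B2 (FD θ u j (FD θ u k f))) : GG θ u f :=
  ⟨hf, fun j => H.B4_of_B2 hf j (h j j), h⟩

section
omit H
variable {f g : ι → TF}
lemma GG.add (hf : GG θ u f) (hg : GG θ u g) : GG θ u (f + g) where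
  inf := hf.inf.add hg.inf
  b4 j := by rw [FD_add]; exact (hf.b4 j).add (hg.b4 j)
  b2 j k := by rw [FD_add, FD_add]; exact (hf.b2 j k).add (hg.b2 j k)
lemma GG.neg (hf : GG θ u f) : GG θ u (-f) where
  inf := hf.inf.neg
  b4 j := by rw [FD_neg]; exact (hf.b4 j).neg
  b2 j k := by rw [FD_neg, FD_neg]; exact (hf.b2 j k).neg
lemma GG.mul (hf : GG θ u f) (hg : GG θ u g) : GG θ u (f * g) where
  inf := hf.inf.mul hg.inf
  b4 j := by rw [FD_mul]; exact (hf.inf.mul_B4 (hg.b4 j)).add (hg.inf.mul_B4 (hf.b4 j))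
  b2 j k := by
    simp only [FD_mul, FD_add]
    exact ((hf.inf.mul_B2 (hg.b2 j k)).add ((hg.b4 k).mul (hf.b4 j))).add
      ((hg.inf.mul_B2 (hf.b2 j k)).add ((hf.b4 k).mul (hg.b4 j)))
end

lemma bPP (e : E3) (k : Fin 3) : BInf fun i => PP θ k (d e (E i)) := by
  fin_cases k
  · exact ⟨0, fun i x => by simp [PP]⟩
  · exact H.b2 (eY θ) e
  · exact H.b2 eT e

lemma bPP0 (k : Fin 3) : BInf fun i => PP θ k (E i) := by
  fin_cases k
  · exact ⟨0, fun i x => by simp [PP]⟩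
  · exact H.b1 (eY θ)
  · exact H.b1 eT

lemma brr (k : Fin 3) : BInf fun i => rr θ (u i) k := by
  fin_cases k
  · exact H.bm
  · exact (H.bm.mul H.bC).neg
  · exact (H.bm.mul H.bD).neg

lemma bFD_E (j : Fin 3) : BInf (FD θ u j E) :=
  (H.bPP0 j).add ((H.brr j).mul (H.b1 (eX θ)))

lemma bFD_dE (j : Fin 3) (e : E3) : BInf (FD θ u j fun i => d e (E i)) :=
  (H.bPP e j).add ((H.brr j).mul (H.b2 (eX θ) e))

lemma bFD_PPE (j k : Fin 3) : BInf (FD θ u j fun i => PP θ k (E i)) := by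
  fin_cases k
  · exact ⟨0, fun i x => by simp [PP, FD]⟩
  · exact H.bFD_dE j (eY θ)
  · exact H.bFD_dE j eT

lemma FD_rr (j k : Fin 3) : B2 (FD θ u j fun i => rr θ (u i) k) := by
  refine H.energy_B2 0 (γ := 0) (β := -(FD θ u k E * fun i => rr θ (u i) 0)) (fun i => ?_)
    ⟨0, fun i => N_zero.le⟩ ((H.bFD_E k).mul (H.brr 0)).neg.B2 j
  rw [(H.sol i).Lop_rr]
  simp [FD]

lemma FD_FD_E (j k : Fin 3) : B2 (FD θ u j (FD θ u k E)) := by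
  have h : FD θ u k E = (fun i => PP θ k (E i)) +
      (fun i => rr θ (u i) k) * fun i => d (eX θ) (E i) := rfl
  rw [h, FD_add, FD_mul]
  exact (H.bFD_PPE j k).B2.add (((H.brr k).mul (H.bFD_dE j (eX θ))).B2.add
    ((H.b1 (eX θ)).mul_B2 (H.FD_rr j k)))

lemma GG_E : GG θ u E := H.GG_of H.b0 H.FD_FD_E

lemma GG_rr (l : Fin 3) : GG θ u fun i => rr θ (u i) l := by
  refine H.GG_of (H.brr l) fun j k => ?_
  refine H.energy_B2 0 (γ := 0) (β := FD θ u k (-(FD θ u l E * fun i => rr θ (u i) 0)) +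
    -(FD θ u k E * FD θ u 0 fun i => rr θ (u i) l)) (fun i => ?_) ⟨0, fun i => N_zero.le⟩ ?_ j
  · simp only [FD]
    rw [(H.sol i).fr_Lop, (H.sol i).Lop_rr, (H.sol i).fr_comm k 0]
    simp only [Pi.add_apply, Pi.zero_apply, map_add, map_zero, zero_add]
    rfl
  · rw [FD_neg, FD_mul]
    exact (((H.bFD_E l).mul_B2 (H.FD_rr k 0)).add ((H.brr 0).mul_B2 (H.FD_FD_E k l))).neg.add
      ((H.bFD_E k).mul_B2 (H.FD_rr 0 l)).neg

lemma GG_m : GG θ u fun i => mInv θ (u i) := H.GG_rr 0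

lemma GG_A : GG θ u fun i => 1 + La θ (u i) := by
  have hm := H.GG_m
  have h : ∀ j, FD θ u j (fun i => 1 + La θ (u i)) = -(((fun i => 1 + La θ (u i)) *
      fun i => 1 + La θ (u i)) * FD θ u j fun i => mInv θ (u i)) := fun j => by
    funext i
    have h1 := (H.sol i).mul_mInv
    have h2 := congrArg (fr θ (u i) j) h1
    simp only [Derivation.leibniz, smul_eq_mul, Derivation.map_one_eq_zero] at h2
    simp only [FD, Pi.mul_apply, Pi.neg_apply]
    linear_combination (1 + La θ (u i)) * h2 - (fr θ (u i) j (1 + La θ (u i))) * h1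
  have h4 : ∀ j, B4 (FD θ u j fun i => 1 + La θ (u i)) := fun j => by
    rw [h]
    exact ((H.bA.mul H.bA).mul_B4 (hm.b4 j)).neg
  refine ⟨H.bA, h4, fun j k => ?_⟩
  rw [h k, FD_neg, FD_mul, FD_mul]
  refine B2.neg (((H.bA.mul H.bA).mul_B2 (hm.b2 j k)).add ?_)
  rw [mul_add]
  have h5 : FD θ u k (fun i => mInv θ (u i)) * ((fun i => 1 + La θ (u i)) *
      FD θ u j fun i => 1 + La θ (u i)) = (fun i => 1 + La θ (u i)) *
      (FD θ u k (fun i => mInv θ (u i)) * FD θ u j fun i => 1 + La θ (u i)) := by ring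
  rw [h5]
  have h6 := H.bA.mul_B2 ((hm.b4 k).mul (h4 j))
  exact h6.add h6

lemma GG_C : GG θ u fun i => Lc θ (u i) := by
  have h : (fun i => Lc θ (u i)) = -((fun i => 1 + La θ (u i)) * fun i => rr θ (u i) 1) := by
    funext i
    simp only [rr, Pi.mul_apply, Pi.neg_apply, Matrix.cons_val]
    linear_combination -Lc θ (u i) * (H.sol i).mul_mInv
  rw [h]
  exact (H.GG_A.mul (H.GG_rr 1)).neg

lemma GG_D : GG θ u fun i => Ld θ (u i) := by
  have h : (fun i => Ld θ (u i)) = -((fun i => 1 + La θ (u i)) * fun i => rr θ (u i) 2) := by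
    funext i
    simp only [rr, Pi.mul_apply, Pi.neg_apply, Matrix.cons_val]
    linear_combination -Ld θ (u i) * (H.sol i).mul_mInv
  rw [h]
  exact (H.GG_A.mul (H.GG_rr 2)).neg

lemma GG_B : GG θ u fun i => 1 + Lb θ (u i) := by
  have h : (fun i => 1 + Lb θ (u i)) = E * (fun i => mInv θ (u i)) + (fun i => mInv θ (u i)) *
      ((fun i => Lc θ (u i)) * (fun i => Lc θ (u i)) +
        (fun i => Ld θ (u i)) * (fun i => Ld θ (u i))) := by
    funext i
    simp only [Pi.mul_apply, Pi.add_apply]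
    linear_combination -(H.sol i).mul_mInv_eq
  rw [h]
  exact (H.GG_E.mul H.GG_m).add (H.GG_m.mul ((H.GG_C.mul H.GG_C).add (H.GG_D.mul H.GG_D)))

omit H in
/-- Derivations with controlled coefficients in the adapted frame. -/
def Good (θ : ℝ) (u : ι → TF) (δ : Derivation ℝ TF TF) : Prop :=
  ∃ c : Fin 3 → ι → TF, (∀ k, GG θ u (c k)) ∧ ∀ f : ι → TF, (fun i => δ (f i)) =
    c 0 * FD θ u 0 f + c 1 * FD θ u 1 f + c 2 * FD θ u 2 f

section
omit H

lemma Good.b4 {δ : Derivation ℝ TF TF} (h : Good θ u δ) {f : ι → TF} (hf : GG θ u f) :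
    B4 fun i => δ (f i) := by
  obtain ⟨c, hc, h⟩ := h
  rw [h]
  exact (((hc 0).inf.mul_B4 (hf.b4 0)).add ((hc 1).inf.mul_B4 (hf.b4 1))).add
    ((hc 2).inf.mul_B4 (hf.b4 2))

lemma Good.b2 {δ δ' : Derivation ℝ TF TF} (h : Good θ u δ) (h' : Good θ u δ') {f : ι → TF}
    (hf : GG θ u f) : B2 fun i => δ' (δ (f i)) := by
  obtain ⟨c, hc, h⟩ := h
  obtain ⟨c', hc', h'⟩ := h'
  have h1 : ∀ j, B2 (FD θ u j fun i => δ (f i)) := fun j => by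
    have h2 : ∀ k, B2 (FD θ u j (c k * FD θ u k f)) := fun k => by
      rw [FD_mul]
      exact ((hc k).inf.mul_B2 (hf.b2 j k)).add ((hf.b4 k).mul ((hc k).b4 j))
    rw [h, FD_add, FD_add]
    exact ((h2 0).add (h2 1)).add (h2 2)
  rw [h' fun i => δ (f i)]
  exact (((hc' 0).inf.mul_B2 (h1 0)).add ((hc' 1).inf.mul_B2 (h1 1))).add
    ((hc' 2).inf.mul_B2 (h1 2))

lemma GG_const (a : ℝ) : GG θ u fun _ => algebraMap ℝ TF a where
  inf := BInf.const _
  b4 j := ⟨0, fun i => by simp [FD]⟩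
  b2 j k := ⟨0, fun i => by simp [FD, N_zero]⟩
end

lemma good_DX : Good θ u (DX θ) := by
  refine ⟨![fun i => 1 + La θ (u i), fun _ => algebraMap ℝ TF 0, fun _ => algebraMap ℝ TF 0],
    fun k => ?_, fun f => ?_⟩
  · fin_cases k
    exacts [H.GG_A, GG_const _, GG_const _]
  · funext i
    simp only [Matrix.cons_val, Pi.mul_apply, Pi.add_apply, FD, fr_zero, map_zero]
    linear_combination -(DX θ (f i)) * (H.sol i).mul_mInv

lemma good_DY : Good θ u (DY θ) := by
  refine ⟨![fun i => Lc θ (u i), fun _ => algebraMap ℝ TF 1, fun _ => algebraMap ℝ TF 0],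
    fun k => ?_, fun f => ?_⟩
  · fin_cases k
    exacts [H.GG_C, GG_const _, GG_const _]
  · funext i
    simp only [Matrix.cons_val, Pi.mul_apply, Pi.add_apply, FD, fr_zero, fr_one, map_zero, map_one]
    ring

lemma good_DT : Good θ u DT := by
  refine ⟨![fun i => Ld θ (u i), fun _ => algebraMap ℝ TF 0, fun _ => algebraMap ℝ TF 1],
    fun k => ?_, fun f => ?_⟩
  · fin_cases k
    exacts [H.GG_D, GG_const _, GG_const _]
  · funext i
    simp only [Matrix.cons_val, Pi.mul_apply, Pi.add_apply, FD, fr_zero, fr_two, map_zero, map_one]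
    ring

end Fam

end TF
end KodairaThurston

namespace KodairaThurston

open Filter Topology Set

namespace TF

/-! ### Second derivatives and the Laplacian -/

lemma I_sq_DD (θ : ℝ) (h : TF) : I (lap h * lap h) =
    I (DX θ (DX θ h) * DX θ (DX θ h)) + I (DY θ (DY θ h) * DY θ (DY θ h)) +
    I (DT (DT h) * DT (DT h)) + 2 * I (DX θ (DY θ h) * DX θ (DY θ h)) +
    2 * I (DX θ (DT h) * DX θ (DT h)) + 2 * I (DY θ (DT h) * DY θ (DT h)) := by
  have key : ∀ e e' : E3, I (d e (d e h) * d e' (d e' h)) = I (d e (d e' h) * d e (d e' h)) := by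
    intro e e'
    rw [I_parts, mul_comm, d_comm e e', I_parts, neg_neg, d_comm e' e]
  have h1 := key (eX θ) (eY θ)
  have h2 := key (eX θ) eT
  have h3 := key (eY θ) eT
  have h4 : lap h * lap h = DX θ (DX θ h) * DX θ (DX θ h) + DY θ (DY θ h) * DY θ (DY θ h) +
      DT (DT h) * DT (DT h) + (2 : ℝ) • (DX θ (DX θ h) * DY θ (DY θ h)) +
      (2 : ℝ) • (DX θ (DX θ h) * DT (DT h)) + (2 : ℝ) • (DY θ (DY θ h) * DT (DT h)) := by
    rw [lap_eq θ]
    ext x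
    simp only [mul_apply, add_apply, smul_apply]
    ring
  rw [h4]
  simp only [map_add, map_smul, smul_eq_mul]
  rw [show I (DX θ (DX θ h) * DY θ (DY θ h)) = _ from h1,
    show I (DX θ (DX θ h) * DT (DT h)) = _ from h2, show I (DY θ (DY θ h) * DT (DT h)) = _ from h3]
  rfl

lemma N_second_le (θ : ℝ) (h : TF) : N (DX θ (DX θ h)) ≤ N (lap h) ∧
    N (DY θ (DY θ h)) ≤ N (lap h) ∧ N (DT (DT h)) ≤ N (lap h) ∧ N (DX θ (DY θ h)) ≤ N (lap h) ∧
    N (DX θ (DT h)) ≤ N (lap h) ∧ N (DT h) ≤ N (lap h) := by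
  have h1 := I_sq_DD θ h
  have a1 := I_sq_nonneg (DX θ (DX θ h))
  have a2 := I_sq_nonneg (DY θ (DY θ h))
  have a3 := I_sq_nonneg (DT (DT h))
  have a4 := I_sq_nonneg (DX θ (DY θ h))
  have a5 := I_sq_nonneg (DX θ (DT h))
  have a6 := I_sq_nonneg (DY θ (DT h))
  have h2 := poincare (f := DT h) (I_d _ _)
  rw [← map_sum, sum_d_mul_d θ, map_add, map_add] at h2
  refine ⟨?_, ?_, ?_, ?_, ?_, ?_⟩ <;> refine Real.sqrt_le_sqrt ?_ <;> linarith

lemma lap_La (θ : ℝ) (h : TF) : lap (La θ h) = La θ (lap h) := by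
  simp only [La_apply, DX, d_lap]
lemma lap_Lb (θ : ℝ) (h : TF) : lap (Lb θ h) = Lb θ (lap h) := by
  simp only [Lb_apply, DY, DT, d_lap, map_add]
lemma lap_Lc (θ : ℝ) (h : TF) : lap (Lc θ h) = Lc θ (lap h) := by
  simp only [Lc_apply, DX, DY, d_lap]
lemma lap_Ld (θ : ℝ) (h : TF) : lap (Ld θ h) = Ld θ (lap h) := by
  simp only [Ld_apply, DX, DT, d_lap]

lemma N_La_le (θ : ℝ) (h : TF) : N (La θ h) ≤ 3 * N (lap h) := by
  rw [La_apply]; linarith [(N_second_le θ h).1, N_nonneg (lap h)]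
lemma N_Lb_le (θ : ℝ) (h : TF) : N (Lb θ h) ≤ 3 * N (lap h) := by
  obtain ⟨-, h1, h2, -, -, h3⟩ := N_second_le θ h
  rw [Lb_apply]
  linarith [N_add_le (DY θ (DY θ h) + DT (DT h)) (DT h), N_add_le (DY θ (DY θ h)) (DT (DT h))]
lemma N_Lc_le (θ : ℝ) (h : TF) : N (Lc θ h) ≤ 3 * N (lap h) := by
  rw [Lc_apply]; linarith [(N_second_le θ h).2.2.2.1, N_nonneg (lap h)]
lemma N_Ld_le (θ : ℝ) (h : TF) : N (Ld θ h) ≤ 3 * N (lap h) := by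
  rw [Ld_apply]; linarith [(N_second_le θ h).2.2.2.2.1, N_nonneg (lap h)]

variable {ι κ : Type*}

lemma bil_algebraMap (θ : ℝ) (u : TF) (c : ℝ) : bil θ u (algebraMap ℝ TF c) = 0 := by
  simp [bil, La_apply, Lb_apply, Lc_apply, Ld_apply]

namespace Fam

variable {θ : ℝ} {E u : ι → TF} (H : Fam θ E u)
include H

/-! ### The linearised equation: first derivatives -/

lemma energy_identity (i : ι) (h : TF) :
    mu θ (u i) (E i * (fr θ (u i) 0 h * fr θ (u i) 0 h) + fr θ (u i) 1 h * fr θ (u i) 1 h +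
      fr θ (u i) 2 h * fr θ (u i) 2 h) = -I (h * bil θ (u i) h) := by
  have h1 : mu θ (u i) (Lop θ (E i) (u i) h * h) = I (h * bil θ (u i) h) := by
    rw [mu_apply, ← (H.sol i).mul_Lop]; congr 1; ring
  have h4 : mu θ (u i) (fr θ (u i) 2 h * h) = 0 := by
    have := functional_parts (H.mu_fr i 2) h h
    rw [mul_comm h] at this
    linarith
  rw [← h1, Lop]
  simp only [add_mul, map_add]
  rw [functional_parts (H.mu_fr i 0), functional_parts (H.mu_fr i 1),
    functional_parts (H.mu_fr i 2), h4, mul_assoc]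
  ring_nf

lemma first_order : ∃ K, 0 ≤ K ∧ ∀ i (h : TF), I h = 0 → N h ≤ K * N (bil θ (u i) h) ∧
    ∀ j, N (fr θ (u i) j h) ≤ K * N (bil θ (u i) h) := by
  obtain ⟨l, hl, hl1, hlE⟩ := H.low
  obtain ⟨M₁, hM₁, hcmp⟩ := H.mu_compare
  obtain ⟨M₂, hM₂, hcoef⟩ := H.coeff_bounds
  have hd : ∀ i (h : TF) j, I (fr θ (u i) j h * fr θ (u i) j h) ≤
      M₁ / l * (N h * N (bil θ (u i) h)) := by
    intro i h j
    have e1 := H.energy_identity i h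
    have e2 : mu θ (u i) (l • (fr θ (u i) j h * fr θ (u i) j h)) ≤ N h * N (bil θ (u i) h) := by
      have e3 := (abs_le.1 (I_cauchy h (bil θ (u i) h))).1
      refine (functional_mono (H.mu_nonneg i) (g := E i * (fr θ (u i) 0 h * fr θ (u i) 0 h) +
        fr θ (u i) 1 h * fr θ (u i) 1 h + fr θ (u i) 2 h * fr θ (u i) 2 h) fun x => ?_).trans
        (by linarith)
      have e4 := le_sum_three (F := fun k => fr θ (u i) k h x * fr θ (u i) k h x)
        (fun k => mul_self_nonneg (fr θ (u i) k h x)) j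
      simp only [smul_apply, add_apply, mul_apply]
      nlinarith [mul_le_mul_of_nonneg_left e4 hl.le,
        mul_le_mul_of_nonneg_right (hlE i x) (mul_self_nonneg (fr θ (u i) 0 h x)),
        mul_le_mul_of_nonneg_right hl1 (mul_self_nonneg (fr θ (u i) 1 h x)),
        mul_le_mul_of_nonneg_right hl1 (mul_self_nonneg (fr θ (u i) 2 h x))]
    rw [map_smul, smul_eq_mul] at e2
    have e5 := (hcmp i (fr θ (u i) j h * fr θ (u i) j h)
      fun x => mul_self_nonneg (fr θ (u i) j h x)).2
    calc _ ≤ _ := e5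
      _ = M₁ / l * (l * mu θ (u i) (fr θ (u i) j h * fr θ (u i) j h)) := by field_simp
      _ ≤ _ := mul_le_mul_of_nonneg_left e2 (by positivity)
  set K := M₁ / l with hK
  have hK0 : 0 ≤ K := by positivity
  have hN : ∀ i (h : TF), I h = 0 → N h ≤ (9 * M₂ ^ 2 * K) * N (bil θ (u i) h) := by
    intro i h hh
    set n := N h with hn
    set f := N (bil θ (u i) h) with hf
    set Q := √(K * (n * f)) with hQ
    have hn0 : 0 ≤ n := N_nonneg h
    have hf0 : 0 ≤ f := N_nonneg _
    have hQ0 : 0 ≤ Q := Real.sqrt_nonneg _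
    have hQ2 : Q ^ 2 = K * (n * f) := Real.sq_sqrt (by positivity)
    have hj : ∀ j, N (fr θ (u i) j h) ≤ Q := fun j => Real.sqrt_le_sqrt (hd i h j)
    have eX' : DX θ h = (1 + La θ (u i)) * fr θ (u i) 0 h := by
      rw [fr_zero]; linear_combination -(DX θ h) * (H.sol i).mul_mInv
    have eY' : DY θ h = fr θ (u i) 1 h + Lc θ (u i) * fr θ (u i) 0 h := by
      rw [fr_zero, fr_one]; ring
    have eT' : DT h = fr θ (u i) 2 h + Ld θ (u i) * fr θ (u i) 0 h := by
      rw [fr_zero, fr_two]; ring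
    have bX : N (DX θ h) ≤ M₂ * Q := by
      rw [eX']
      refine (N_mul_le fun x => (abs_of_pos ((H.sol i).pos x)).trans_le (hcoef i x).1).trans ?_
      exact mul_le_mul_of_nonneg_left (hj 0) (by linarith)
    have bY : N (DY θ h) ≤ 2 * M₂ * Q := by
      rw [eY']
      have e1 := N_mul_le (f := Lc θ (u i)) (g := fr θ (u i) 0 h) fun x => (hcoef i x).2.1
      nlinarith [N_add_le (fr θ (u i) 1 h) (Lc θ (u i) * fr θ (u i) 0 h), hj 0, hj 1]
    have bT : N (DT h) ≤ 2 * M₂ * Q := by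
      rw [eT']
      have e1 := N_mul_le (f := Ld θ (u i)) (g := fr θ (u i) 0 h) fun x => (hcoef i x).2.2.1
      nlinarith [N_add_le (fr θ (u i) 2 h) (Ld θ (u i) * fr θ (u i) 0 h), hj 0, hj 2]
    have h2 := poincare hh
    rw [← map_sum, sum_d_mul_d θ, map_add, map_add, ← N_sq, ← N_sq, ← N_sq, ← N_sq] at h2
    have h3 : n ^ 2 ≤ 9 * M₂ ^ 2 * (K * (n * f)) := by
      rw [← hQ2]
      have c1 := pow_le_pow_left₀ (N_nonneg _) bX 2
      have c2 := pow_le_pow_left₀ (N_nonneg _) bY 2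
      have c3 := pow_le_pow_left₀ (N_nonneg _) bT 2
      linarith
    rcases hn0.eq_or_lt with h0 | h0
    · rw [← h0]; positivity
    · refine le_of_mul_le_mul_left ?_ h0
      linarith
  have hM2 : (1 : ℝ) ≤ 9 * M₂ ^ 2 := by nlinarith
  refine ⟨9 * M₂ ^ 2 * K, by positivity, fun i h hh => ⟨hN i h hh, fun j => ?_⟩⟩
  have hf0 := N_nonneg (bil θ (u i) h)
  refine Real.sqrt_le_iff.2 ⟨by positivity, (hd i h j).trans ?_⟩
  have h1 := mul_le_mul_of_nonneg_right (hN i h hh) hf0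
  calc K * (N h * N (bil θ (u i) h)) ≤
        K * (9 * M₂ ^ 2 * K * N (bil θ (u i) h) * N (bil θ (u i) h)) :=
          mul_le_mul_of_nonneg_left h1 hK0
    _ = 9 * M₂ ^ 2 * (K * N (bil θ (u i) h)) ^ 2 := by ring
    _ ≤ (9 * M₂ ^ 2) ^ 2 * (K * N (bil θ (u i) h)) ^ 2 := by
        refine mul_le_mul_of_nonneg_right ?_ (sq_nonneg _)
        nlinarith
    _ = _ := by ring

/-! ### The linearised equation: second derivatives -/

lemma B2_lap {h : ι → TF} (hI : ∀ i, I (h i) = 0) (hb : BInf h)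
    (hf : B2 fun i => bil θ (u i) (h i)) : B2 fun i => lap (h i) := by
  obtain ⟨K, hK0, hK⟩ := H.first_order
  obtain ⟨C, hC⟩ := hf
  have h1 : ∀ j, B2 (FD θ u j h) := fun j =>
    ⟨K * C, fun i => ((hK i (h i) (hI i)).2 j).trans (mul_le_mul_of_nonneg_left (hC i) hK0)⟩
  have hG : GG θ u h := by
    refine H.GG_of hb fun j k => H.energy_B2 k
      (γ := (fun i => mInv θ (u i)) * fun i => bil θ (u i) (h i))
      (β := -(FD θ u k E * FD θ u 0 h)) (fun i => ?_)
      (H.bm.mul_B2 ⟨C, hC⟩) ((H.bFD_E k).mul_B2 (h1 0)).neg j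
    have e1 : Lop θ (E i) (u i) (h i) = mInv θ (u i) * bil θ (u i) (h i) := by
      rw [← (H.sol i).mul_Lop]
      linear_combination -(Lop θ (E i) (u i) (h i)) * (H.sol i).mul_mInv
    simp only [FD, Pi.mul_apply, Pi.neg_apply]
    rw [(H.sol i).fr_Lop, e1]
  have e : (fun i => lap (h i)) = (fun i => DX θ (DX θ (h i))) + (fun i => DY θ (DY θ (h i))) +
      fun i => DT (DT (h i)) := funext fun i => lap_eq θ (h i)
  rw [e]
  exact ((H.good_DX.b2 H.good_DX hG).add (H.good_DY.b2 H.good_DY hG)).add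
    (H.good_DT.b2 H.good_DT hG)

lemma N_lap_le_sn : ∃ K, 0 ≤ K ∧ ∀ i (h : TF), I h = 0 →
    N (lap h) ≤ K * (N (bil θ (u i) h) + sn h) := by
  have H' := H.comp fun p : {p : ι × TF // I p.2 = 0 ∧ N (bil θ (u p.1) p.2) ≤ 1 ∧ sn p.2 ≤ 1} =>
    p.1.1
  obtain ⟨K, hK⟩ := H'.B2_lap (h := fun p => p.1.2) (fun p => p.2.1)
    ⟨1, fun p x => (abs_le_sn _ x).trans p.2.2.2⟩ ⟨1, fun p => p.2.2.1⟩
  refine ⟨|K|, abs_nonneg K, fun i h hh => ?_⟩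
  have hb := N_nonneg (bil θ (u i) h)
  have hs := sn_nonneg h
  rcases (add_nonneg hb hs).eq_or_lt with h0 | h0
  · have h1 : h = 0 := by
      ext x
      have := abs_le_sn h x
      exact abs_eq_zero.1 (le_antisymm (by linarith) (abs_nonneg _))
    rw [h1, map_zero, N_zero]
    exact mul_nonneg (abs_nonneg _) (add_nonneg (N_nonneg _) (sn_nonneg _))
  · set c := N (bil θ (u i) h) + sn h with hc
    have h1 := hK ⟨(i, c⁻¹ • h), by rw [map_smul, hh, smul_zero], by
      rw [bil_smul, N_smul, abs_of_pos (inv_pos.2 h0), inv_mul_le_one₀ h0]; linarith, by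
      refine sn_le fun x => ?_
      rw [smul_apply, abs_mul, abs_of_pos (inv_pos.2 h0), inv_mul_le_one₀ h0]
      linarith [abs_le_sn h x]⟩
    simp only [map_smul, N_smul, abs_of_pos (inv_pos.2 h0)] at h1
    rw [inv_mul_le_iff₀ h0] at h1
    calc _ ≤ _ := h1
      _ ≤ _ := by rw [mul_comm]; exact mul_le_mul_of_nonneg_right (le_abs_self K) h0.le

lemma second_order : ∃ K, 0 ≤ K ∧ ∀ i (h : TF), I h = 0 →
    N (lap h) ≤ K * N (bil θ (u i) h) := by
  obtain ⟨K, hK0, hK⟩ := H.N_lap_le_sn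
  obtain ⟨K₁, hK₁0, hK₁⟩ := H.first_order
  obtain ⟨C, hC0, hC⟩ := exists_abs_le_eps (ε := 1 / (2 * (K + 1))) (by positivity)
  refine ⟨2 * (K * (1 + C * K₁)), by positivity, fun i h hh => ?_⟩
  have h1 := hK i h hh
  have h2 := (hK₁ i h hh).1
  have h3 : sn h ≤ 1 / (2 * (K + 1)) * N (lap h) + C * (K₁ * N (bil θ (u i) h)) :=
    sn_le fun x => (hC h x).trans (by gcongr)
  have h4 : K * (1 / (2 * (K + 1))) * N (lap h) ≤ 1 / 2 * N (lap h) := by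
    refine mul_le_mul_of_nonneg_right ?_ (N_nonneg _)
    rw [mul_one_div, div_le_div_iff₀ (by positivity) (by positivity)]
    linarith
  have h5 := mul_le_mul_of_nonneg_left h3 hK0
  linarith

end Fam

/-! ### The linearised equation: fourth derivatives -/

lemma exists_N_mul_d_le {F : ι → TF} (hF : B4 F) (e : E3) {ε : ℝ} (hε : 0 < ε) :
    ∃ C, 0 ≤ C ∧ ∀ i (k : TF), N (F i * d e k) ≤ C * sn k + ε * N (d e (d e k)) := by
  obtain ⟨K, hK⟩ := B4_iff.1 hF
  refine ⟨3 * |K| / (2 * ε), by positivity, fun i k => ?_⟩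
  have hs := sn_nonneg k
  have hn := N_nonneg (d e (d e k))
  refine Real.sqrt_le_iff.2 ⟨by positivity, ?_⟩
  have h1 : I (F i * d e k * (F i * d e k)) ≤ N (F i * F i) * N (d e k * d e k) := by
    rw [mul_mul_mul_comm]
    exact (le_abs_self _).trans (I_cauchy _ _)
  have h2 : N (d e k * d e k) ≤ 3 * sn k * N (d e (d e k)) := by
    refine Real.sqrt_le_iff.2 ⟨by positivity, ?_⟩
    refine (interpolation (μ := I) (fun f hf => I_nonneg hf) (I_d e) k.abs_le_sn).trans ?_
    rw [← N_sq]
    exact le_of_eq (by ring)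
  have h3 : N (F i * F i) ≤ |K| := (hK i).trans (le_abs_self K)
  have h4 : N (F i * F i) * N (d e k * d e k) ≤ |K| * (3 * sn k * N (d e (d e k))) :=
    mul_le_mul h3 h2 (N_nonneg _) (abs_nonneg _)
  have h5 : |K| * (3 * sn k * N (d e (d e k))) =
      2 * (3 * |K| / (2 * ε) * sn k) * (ε * N (d e (d e k))) := by field_simp
  have h6 : 0 ≤ (3 * |K| / (2 * ε) * sn k) ^ 2 + (ε * N (d e (d e k))) ^ 2 := by positivity
  rw [add_sq]
  linarith

/-- Families of operators of lower order than the bi-Laplacian. -/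
def Small (T : ι → TF → TF) : Prop :=
  ∀ ε > 0, ∃ C, 0 ≤ C ∧ ∀ i h, N (T i h) ≤ ε * N (lap (lap h)) + C * N (lap h)

lemma Small.add {S T : ι → TF → TF} (hS : Small S) (hT : Small T) :
    Small fun i h => S i h + T i h := fun ε hε => by
  obtain ⟨C, hC0, hC⟩ := hS (ε / 2) (by positivity)
  obtain ⟨K, hK0, hK⟩ := hT (ε / 2) (by positivity)
  exact ⟨C + K, by positivity, fun i h => by linarith [N_add_le (S i h) (T i h), hC i h, hK i h]⟩

lemma Small.smul {T : ι → TF → TF} (hT : Small T) (c : ℝ) :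
    Small fun i h => c • T i h := fun ε hε => by
  obtain ⟨K, hK0, hK⟩ := hT (ε / (|c| + 1)) (by positivity)
  refine ⟨|c| * K, by positivity, fun i h => ?_⟩
  have h1 := mul_le_mul_of_nonneg_left (hK i h) (abs_nonneg c)
  have h2 : |c| * (ε / (|c| + 1)) * N (lap (lap h)) ≤ ε * N (lap (lap h)) := by
    refine mul_le_mul_of_nonneg_right ?_ (N_nonneg _)
    rw [mul_div_assoc', div_le_iff₀ (by positivity)]
    nlinarith
  rw [N_smul]
  linarith

lemma Small.of_ops {L : TF →ₗ[ℝ] TF} (hL : ∀ h, lap (L h) = L (lap h))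
    (hN : ∀ h, N (L h) ≤ 3 * N (lap h)) {e : E3} (he : ∀ f, N (d e (d e f)) ≤ N (lap f))
    {w : ι → TF} (h4 : B4 fun i => d e (w i)) (h2 : B2 fun i => d e (d e (w i))) :
    Small fun i h => d e (d e (w i)) * L h + (2 : ℝ) • (d e (w i) * d e (L h)) := fun ε hε => by
  obtain ⟨K, hK⟩ := h2
  obtain ⟨C, hC0, hC⟩ := exists_N_mul_d_le h4 e (ε := ε / 12) (by positivity)
  have hK1 : 0 < |K| + 2 * C + 1 := by positivity
  obtain ⟨C', hC'0, hC'⟩ := exists_abs_le_eps (ε := ε / (6 * (|K| + 2 * C + 1))) (by positivity)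
  refine ⟨(|K| + 2 * C + 1) * (3 * C'), by positivity, fun i h => ?_⟩
  have a1 : N (d e (d e (w i)) * L h) ≤ sn (L h) * |K| := by
    rw [mul_comm]
    exact (N_mul_le (L h).abs_le_sn).trans
      (mul_le_mul_of_nonneg_left ((hK i).trans (le_abs_self K)) (sn_nonneg _))
  have a2 := hC i (L h)
  have n1 : N (lap (L h)) ≤ 3 * N (lap (lap h)) := by rw [hL]; exact hN _
  have a3 : sn (L h) ≤ ε / (6 * (|K| + 2 * C + 1)) * (3 * N (lap (lap h))) +
      C' * (3 * N (lap h)) := sn_le fun x => (hC' _ x).trans (by gcongr; exact hN h)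
  have a4 := mul_le_mul_of_nonneg_left a3 hK1.le
  have a5 : (|K| + 2 * C + 1) * (ε / (6 * (|K| + 2 * C + 1)) * (3 * N (lap (lap h)))) =
      ε / 2 * N (lap (lap h)) := by field_simp; norm_num
  have a6 : ε / 12 * N (d e (d e (L h))) ≤ ε / 12 * (3 * N (lap (lap h))) :=
    mul_le_mul_of_nonneg_left ((he _).trans n1) (by positivity)
  have a7 := N_add_le (d e (d e (w i)) * L h) ((2 : ℝ) • (d e (w i) * d e (L h)))
  rw [N_smul, abs_two] at a7
  have := sn_nonneg (L h)
  linarith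

namespace Fam

variable {θ : ℝ} {E u : ι → TF} (H : Fam θ E u)
include H

omit H in
/-- The commutator of the linearised operator with a second derivative. -/
noncomputable def comm (θ : ℝ) (e : E3) (u h : TF) : TF :=
  (d e (d e (Lb θ u)) * La θ h + (2 : ℝ) • (d e (Lb θ u) * d e (La θ h))) +
  (d e (d e (La θ u)) * Lb θ h + (2 : ℝ) • (d e (La θ u) * d e (Lb θ h))) +
  (-2 : ℝ) • (d e (d e (Lc θ u)) * Lc θ h + (2 : ℝ) • (d e (Lc θ u) * d e (Lc θ h))) +
  (-2 : ℝ) • (d e (d e (Ld θ u)) * Ld θ h + (2 : ℝ) • (d e (Ld θ u) * d e (Ld θ h)))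

omit H in
lemma dd_bil (e : E3) (u h : TF) :
    d e (d e (bil θ u h)) = bil θ u (d e (d e h)) + comm θ e u h := by
  have h2 : d e (2 : TF) = 0 := by exact_mod_cast (d e).map_natCast 2
  have hs : ∀ (c : ℝ) (f : TF), c • f = algebraMap ℝ TF c * f := Algebra.smul_def
  have c2 : algebraMap ℝ TF 2 = 2 := map_ofNat _ 2
  simp only [d_bil, map_add, map_sub, comm, Derivation.leibniz, smul_eq_mul, La_d, Lb_d, Lc_d,
    Ld_d, h2, hs, map_neg, c2]
  ring

lemma small_comm {e : E3} (he : ∀ f, N (d e (d e f)) ≤ N (lap f)) (hg : Good θ u (d e)) :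
    Small fun i h => comm θ e (u i) h := by
  have key : ∀ {w : ι → TF}, GG θ u w → B4 (fun i => d e (w i)) ∧ B2 fun i => d e (d e (w i)) :=
    fun hw => ⟨hg.b4 hw, hg.b2 hg hw⟩
  have hA := key H.GG_A
  have hB := key H.GG_B
  have hC := key H.GG_C
  have hD := key H.GG_D
  simp only [map_add, Derivation.map_one_eq_zero, zero_add] at hA hB
  exact (((Small.of_ops (lap_La θ) (N_La_le θ) he hB.1 hB.2).add
    (Small.of_ops (lap_Lb θ) (N_Lb_le θ) he hA.1 hA.2)).add
    ((Small.of_ops (lap_Lc θ) (N_Lc_le θ) he hC.1 hC.2).smul _)).add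
    ((Small.of_ops (lap_Ld θ) (N_Ld_le θ) he hD.1 hD.2).smul _)

lemma fourth_order : ∃ K, 0 ≤ K ∧ ∀ i (h : TF), I h = 0 →
    N (lap (lap h)) ≤ K * (N (lap (bil θ (u i) h)) + N (bil θ (u i) h)) := by
  obtain ⟨K, hK0, hK⟩ := H.second_order
  have hS := ((H.small_comm (e := eX θ) (fun f => (N_second_le θ f).1) H.good_DX).add
    (H.small_comm (e := eY θ) (fun f => (N_second_le θ f).2.1) H.good_DY)).add
    (H.small_comm (e := eT) (fun f => (N_second_le θ f).2.2.1) H.good_DT)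
  obtain ⟨C, hC0, hC⟩ := hS (1 / (2 * (K + 1))) (by positivity)
  refine ⟨2 * K * (1 + C * K), by positivity, fun i h hh => ?_⟩
  have e : bil θ (u i) (lap h) = lap (bil θ (u i) h) -
      (comm θ (eX θ) (u i) h + comm θ (eY θ) (u i) h + comm θ eT (u i) h) := by
    rw [lap_eq θ, lap_eq θ, bil_add, bil_add, DX, DY, DT, dd_bil, dd_bil, dd_bil]
    ring
  have h1 := hK i (lap h) (I_lap h)
  have h2 := hC i h
  have h3 := hK i h hh
  rw [e] at h1
  have h4 := N_sub_le (lap (bil θ (u i) h))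
    (comm θ (eX θ) (u i) h + comm θ (eY θ) (u i) h + comm θ eT (u i) h)
  have h5 : K * (1 / (2 * (K + 1))) * N (lap (lap h)) ≤ 1 / 2 * N (lap (lap h)) := by
    refine mul_le_mul_of_nonneg_right ?_ (N_nonneg _)
    rw [mul_one_div, div_le_div_iff₀ (by positivity) (by positivity)]
    linarith
  have h6 := mul_le_mul_of_nonneg_left (h4.trans (add_le_add_right h2 _)) hK0
  have h7 := mul_le_mul_of_nonneg_left h3 (mul_nonneg hK0 hC0)
  have h8 := N_nonneg (lap (bil θ (u i) h))
  have h9 := N_nonneg (bil θ (u i) h)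
  have h10 : 0 ≤ K * (C * K) * N (lap (bil θ (u i) h)) := by positivity
  have h11 : 0 ≤ K * N (bil θ (u i) h) := by positivity
  linarith

lemma a_priori : ∃ K, 0 < K ∧ ∀ i (h : TF), N (Lam (Lam h)) ≤
    K * N (Lam (bil θ (u i) h + algebraMap ℝ TF (I h))) := by
  obtain ⟨K, hK0, hK⟩ := H.fourth_order
  obtain ⟨K₂, hK₂0, hK₂⟩ := H.second_order
  refine ⟨1 + 3 * (2 * K₂) + 3 * K, by positivity, fun i h => ?_⟩
  set c := algebraMap ℝ TF (I h) with hc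
  set f := bil θ (u i) h with hf
  set G := f + c with hG
  have lc : lap c = 0 := by simp [hc, lap_apply]
  set k := h - c with hk
  have hIk : I k = 0 := by rw [hk, map_sub, hc, I_algebraMap, sub_self]
  have hfk : bil θ (u i) k = f := by rw [hk, bil_sub, hc, bil_algebraMap, sub_zero]
  have hlk : lap k = lap h := by rw [hk, map_sub, lc, sub_zero]
  have a1 := hK i k hIk
  have a2 := hK₂ i k hIk
  rw [hfk, hlk] at a1 a2
  have a3 := N_le_N_lap hIk
  rw [hlk] at a3
  have hIG : I G = I h := by rw [hG, map_add, hf, I_bil, hc, I_algebraMap, zero_add]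
  have b1 : |I h| ≤ N G := by rw [← hIG]; exact I_le_N G
  have b2 : N c ≤ N G := by rw [hc, N_algebraMap]; exact b1
  have b3 : N f ≤ 2 * N G := by
    have : f = G - c := by rw [hG]; ring
    rw [this]
    linarith [N_sub_le G c]
  have b4 : lap f = lap G := by rw [hG, map_add, lc, add_zero]
  have b5 : N G ≤ N (Lam G) ∧ N (lap G) ≤ N (Lam G) := by
    have e1 : I (G * lap G) ≤ 0 := by
      rw [lap_eq θ, mul_add, mul_add, map_add, map_add]
      have : ∀ e, I (G * d e (d e G)) = -I (d e G * d e G) := fun e => by rw [I_parts, neg_neg]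
      rw [DX, DY, DT, this, this, this]
      linarith [I_sq_nonneg (d (eX θ) G), I_sq_nonneg (d (eY θ) G), I_sq_nonneg (d eT G)]
    have e2 : I (Lam G * Lam G) = I (G * G) - 2 * I (G * lap G) + I (lap G * lap G) := by
      have : Lam G * Lam G = G * G - (2 : ℝ) • (G * lap G) + lap G * lap G := by
        ext x; simp only [Lam_apply, mul_apply, sub_apply, add_apply, smul_apply]; ring
      rw [this, map_add, map_sub, map_smul, smul_eq_mul]
    constructor <;> refine Real.sqrt_le_sqrt ?_ <;>
      linarith [I_sq_nonneg G, I_sq_nonneg (lap G)]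
  have c1 : Lam (Lam h) = c + (k - lap h - lap h + lap (lap h)) := by
    simp only [Lam_apply, map_sub, hk]; ring
  rw [b4] at a1
  have c2 : N (Lam (Lam h)) ≤ N c + 3 * N (lap h) + N (lap (lap h)) := by
    rw [c1]
    linarith [N_add_le c (k - lap h - lap h + lap (lap h)),
      N_add_le (k - lap h - lap h) (lap (lap h)), N_sub_le (k - lap h) (lap h),
      N_sub_le k (lap h)]
  have d1 := mul_le_mul_of_nonneg_left (b3.trans (by linarith [b5.1] : _ ≤ 2 * N (Lam G))) hK₂0
  have d2 : K * (N (lap G) + N f) ≤ K * (3 * N (Lam G)) :=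
    mul_le_mul_of_nonneg_left (by linarith [b5.1, b5.2]) hK0
  linarith [b5.1]

end Fam

end TF
end KodairaThurston

namespace KodairaThurston

open Filter Topology Set Metric
open scoped ContDiff NNReal

/-- The linear coefficients of a quadratic operator of Monge–Ampère type between a Banach space
and a Banach algebra. -/
structure QuadOp (X Y : Type*) [NormedAddCommGroup X] [NormedSpace ℝ X] [NormedCommRing Y]
    [NormedAlgebra ℝ Y] where
  /-- the first diagonal coefficient -/
  a : X →L[ℝ] Y
  /-- the second diagonal coefficient -/
  b : X →L[ℝ] Y
  /-- the first off-diagonal coefficient -/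
  c : X →L[ℝ] Y
  /-- the second off-diagonal coefficient -/
  d : X →L[ℝ] Y
  /-- an additional linear term -/
  l : X →L[ℝ] Y

namespace QuadOp

variable {X Y : Type*} [NormedAddCommGroup X] [NormedSpace ℝ X] [NormedCommRing Y]
  [NormedAlgebra ℝ Y] (q : QuadOp X Y)

/-- The quadratic operator `(1 + a u)(1 + b u) - (c u)² - (d u)² + l u`. -/
noncomputable def Phi (u : X) : Y := (1 + q.a u) * (1 + q.b u) - q.c u * q.c u - q.d u * q.d u + q.l u

/-- The derivative of `Phi`. -/
noncomputable def DPhi (u : X) : X →L[ℝ] Y :=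
  (1 + q.b u) • q.a + (1 + q.a u) • q.b - (2 * q.c u) • q.c - (2 * q.d u) • q.d + q.l

lemma DPhi_apply (u h : X) : q.DPhi u h = (1 + q.b u) * q.a h + (1 + q.a u) * q.b h -
    2 * (q.c u * q.c h) - 2 * (q.d u * q.d h) + q.l h := by
  simp [DPhi, mul_assoc]

/-- A Lipschitz constant for `DPhi`. -/
noncomputable def lip : ℝ := 2 * (‖q.a‖ * ‖q.b‖ + ‖q.c‖ ^ 2 + ‖q.d‖ ^ 2)

lemma lip_nonneg : 0 ≤ q.lip := by unfold lip; positivity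

lemma norm_mul_le_mul {a b : X →L[ℝ] Y} (v h : X) : ‖a v * b h‖ ≤ ‖a‖ * ‖b‖ * (‖v‖ * ‖h‖) := by
  calc ‖a v * b h‖ ≤ ‖a v‖ * ‖b h‖ := norm_mul_le _ _
    _ ≤ (‖a‖ * ‖v‖) * (‖b‖ * ‖h‖) := by gcongr <;> exact ContinuousLinearMap.le_opNorm _ _
    _ = _ := by ring

lemma norm_DPhi_sub_le (u v h : X) :
    ‖q.DPhi u h - q.DPhi v h‖ ≤ q.lip * ‖u - v‖ * ‖h‖ := by
  have e : q.DPhi u h - q.DPhi v h = (q.b (u - v) * q.a h + q.a (u - v) * q.b h) -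
      (q.c (u - v) * q.c h + q.c (u - v) * q.c h) -
      (q.d (u - v) * q.d h + q.d (u - v) * q.d h) := by
    simp only [DPhi_apply, map_sub]; ring
  rw [e]
  have h1 := norm_mul_le_mul (a := q.b) (b := q.a) (u - v) h
  have h2 := norm_mul_le_mul (a := q.a) (b := q.b) (u - v) h
  have h3 := norm_mul_le_mul (a := q.c) (b := q.c) (u - v) h
  have h4 := norm_mul_le_mul (a := q.d) (b := q.d) (u - v) h
  refine ((norm_sub_le _ _).trans (add_le_add ((norm_sub_le _ _).trans
    (add_le_add (norm_add_le _ _) (norm_add_le _ _))) (norm_add_le _ _))).trans ?_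
  unfold lip
  linarith

lemma approximatesLinearOn (u₀ : X) {r : ℝ} (hr : 0 ≤ r) :
    ApproximatesLinearOn q.Phi (q.DPhi u₀) (closedBall u₀ r)
      (NNReal.mk (q.lip * r) (mul_nonneg q.lip_nonneg hr) : ℝ≥0) := by
  intro x hx y hy
  have e : q.Phi x - q.Phi y = q.DPhi ((2⁻¹ : ℝ) • (x + y)) (x - y) := by
    rw [DPhi_apply]
    simp only [Phi, map_sub, map_smul, map_add, Algebra.smul_def]
    have : (2 : Y) * algebraMap ℝ Y 2⁻¹ = 1 := by
      rw [← map_ofNat (algebraMap ℝ Y) 2, ← map_mul]; norm_num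
    linear_combination (-(q.a x * q.b x - q.c x ^ 2 - q.d x ^ 2 - q.a y * q.b y + q.c y ^ 2 +
      q.d y ^ 2)) * this
  rw [e]
  refine (q.norm_DPhi_sub_le _ _ _).trans ?_
  rw [NNReal.coe_mk]
  gcongr
  · exact q.lip_nonneg
  have hb := convex_closedBall u₀ r hx hy (show (0 : ℝ) ≤ 2⁻¹ by norm_num)
    (show (0 : ℝ) ≤ 2⁻¹ by norm_num) (by norm_num)
  rw [← smul_add] at hb
  exact mem_closedBall_iff_norm.1 hb

lemma contDiff_Phi : ContDiff ℝ ∞ q.Phi := by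
  unfold Phi
  fun_prop

lemma hasFDerivAt_Phi (u : X) : HasFDerivAt q.Phi (q.DPhi u) u := by
  have ha := (q.a.hasFDerivAt (x := u)).const_add 1
  have hb := (q.b.hasFDerivAt (x := u)).const_add 1
  have hc := q.c.hasFDerivAt (x := u)
  have hd := q.d.hasFDerivAt (x := u)
  refine ((((ha.mul hb).sub (hc.mul hc)).sub (hd.mul hd)).add q.l.hasFDerivAt).congr_fderiv ?_
  ext h
  rw [DPhi_apply]
  simp
  ring

variable {u₀ : X} {K : ℝ}

/-- A right inverse with an explicit bound of an injective surjective derivative. -/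
lemma exists_rightInverse (hK : 0 ≤ K) (hb : ∀ h, ‖h‖ ≤ K * ‖q.DPhi u₀ h‖)
    (hs : Function.Surjective (q.DPhi u₀)) :
    ∃ g : (q.DPhi u₀).NonlinearRightInverse, (g.nnnorm : ℝ) = K := by
  choose g hg using hs
  exact ⟨⟨g, NNReal.mk K hK, fun y => by simpa only [hg] using! hb (g y), hg⟩, rfl⟩

variable [CompleteSpace X]

/-- Quantitative solvability of the quadratic equation near a point with invertible derivative. -/
lemma exists_solution (hK : 0 < K) (hb : ∀ h, ‖h‖ ≤ K * ‖q.DPhi u₀ h‖)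
    (hs : Function.Surjective (q.DPhi u₀)) {r : ℝ} (hr : 0 < r) (hrK : q.lip * r * K ≤ 1 / 2)
    {y : Y} (hy : ‖y - q.Phi u₀‖ ≤ r / (2 * K)) : ∃ u, ‖u - u₀‖ ≤ r ∧ q.Phi u = y ∧
      Function.Surjective (q.DPhi u) ∧ ∀ h, ‖h‖ ≤ 2 * K * ‖q.DPhi u h‖ := by
  obtain ⟨g, hg⟩ := q.exists_rightInverse hK.le hb hs
  have hKi : (2 * K)⁻¹ ≤ K⁻¹ - q.lip * r := by
    have : q.lip * r ≤ 1 / 2 / K := by rwa [le_div_iff₀ hK]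
    have h2 : (2 * K)⁻¹ = 1 / 2 / K := by field_simp
    have h3 : K⁻¹ = 1 / 2 / K + 1 / 2 / K := by field_simp; norm_num
    linarith
  obtain ⟨u, hu, huy⟩ := (q.approximatesLinearOn u₀ hr.le).surjOn_closedBall_of_nonlinearRightInverse
    g hr.le subset_rfl (show y ∈ _ by
      rw [mem_closedBall_iff_norm, hg, NNReal.coe_mk]
      refine hy.trans ?_
      rw [div_eq_inv_mul]
      exact mul_le_mul_of_nonneg_right hKi hr.le)
  rw [mem_closedBall_iff_norm] at hu
  have hd : ∀ h, ‖q.DPhi u h - q.DPhi u₀ h‖ ≤ q.lip * r * ‖h‖ := fun h =>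
    (q.norm_DPhi_sub_le _ _ _).trans (by gcongr; exact q.lip_nonneg)
  refine ⟨u, hu, huy, fun z => ?_, fun h => ?_⟩
  · have ha : ApproximatesLinearOn (q.DPhi u) (q.DPhi u₀) univ
        (NNReal.mk (q.lip * r) (mul_nonneg q.lip_nonneg hr.le) : ℝ≥0) := fun x _ y _ => by
      rw [← map_sub]; exact hd _
    obtain ⟨x, -, hx⟩ := ha.surjOn_closedBall_of_nonlinearRightInverse (b := 0)
      (ε := 2 * K * ‖z‖) g (by positivity) (subset_univ _) (show z ∈ _ by
        rw [mem_closedBall_iff_norm, hg, NNReal.coe_mk, map_zero, sub_zero]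
        calc ‖z‖ = (2 * K)⁻¹ * (2 * K * ‖z‖) := by field_simp
          _ ≤ _ := mul_le_mul_of_nonneg_right hKi (by positivity))
    exact ⟨x, hx⟩
  · have h1 : ‖q.DPhi u₀ h‖ ≤ ‖q.DPhi u h‖ + q.lip * r * ‖h‖ := by
      have := norm_sub_le (q.DPhi u h) (q.DPhi u h - q.DPhi u₀ h)
      rw [sub_sub_cancel] at this
      linarith [hd h]
    have h2 := (hb h).trans (mul_le_mul_of_nonneg_left h1 hK.le)
    nlinarith [mul_le_mul_of_nonneg_right hrK (norm_nonneg h)]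

/-- A continuous solution curve with smooth right-hand side is smooth. -/
lemma contDiffAt_of_Phi [CompleteSpace Y] {S : Type*} [NormedAddCommGroup S] [NormedSpace ℝ S]
    {s₀ : S} {σ : S → X} (hσ : ContinuousAt σ s₀) (hs : Function.Surjective (q.DPhi (σ s₀)))
    (hb : ∀ h, ‖h‖ ≤ K * ‖q.DPhi (σ s₀) h‖) (hτ : ContDiffAt ℝ ∞ (fun s => q.Phi (σ s)) s₀) :
    ContDiffAt ℝ ∞ σ s₀ := by
  have hinj : Function.Injective (q.DPhi (σ s₀)) := by
    refine (injective_iff_map_eq_zero _).2 fun h hh => ?_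
    have := hb h
    rw [hh, norm_zero, mul_zero] at this
    exact norm_le_zero_iff.1 this
  set e : X ≃L[ℝ] Y := ContinuousLinearEquiv.ofBijective (q.DPhi (σ s₀))
    (LinearMap.ker_eq_bot.2 hinj) (LinearMap.range_eq_top.2 hs)
  have hc : ContDiffAt ℝ ∞ q.Phi (σ s₀) := q.contDiff_Phi.contDiffAt
  have hf : HasFDerivAt q.Phi (e : X →L[ℝ] Y) (σ s₀) :=
    (q.hasFDerivAt_Phi _).congr_fderiv (by ext; rfl)
  have h1 := hc.to_localInverse hf (by simp)
  have h2 := (hc.hasStrictFDerivAt' hf (by simp)).eventually_left_inverse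
  have h3 : ContDiffAt ℝ ∞ (fun s => hc.localInverse hf (by simp) (q.Phi (σ s))) s₀ :=
    h1.comp s₀ hτ
  exact h3.congr_of_eventuallyEq ((hσ.eventually h2).mono fun s hs => hs.symm)

end QuadOp

end KodairaThurston

namespace KodairaThurston

open Filter Topology Set
open scoped ContDiff

namespace TF

/-! ### The graph norms -/

lemma I_mul_lap_nonpos (f : TF) : I (f * lap f) ≤ 0 := by
  rw [lap_apply, Finset.mul_sum, map_sum]
  refine Finset.sum_nonpos fun i _ => ?_
  have h := I_parts (EuclideanSpace.single i 1) f (d (EuclideanSpace.single i 1) f)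
  linarith [I_sq_nonneg (d (EuclideanSpace.single i 1) f)]

lemma I_Lam_sq (f : TF) : I (Lam f * Lam f) = I (f * f) - 2 * I (f * lap f) + I (lap f * lap f) := by
  have : Lam f * Lam f = f * f - (2 : ℝ) • (f * lap f) + lap f * lap f := by
    ext x
    simp only [Lam_apply, mul_apply, add_apply, sub_apply, smul_apply]
    ring
  rw [this, map_add, map_sub, map_smul, smul_eq_mul]

lemma N_le_N_Lam (f : TF) : N f ≤ N (Lam f) :=
  Real.sqrt_le_sqrt (by linarith [I_Lam_sq f, I_mul_lap_nonpos f, I_sq_nonneg (lap f)])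

lemma N_lap_le_N_Lam (f : TF) : N (lap f) ≤ N (Lam f) :=
  Real.sqrt_le_sqrt (by linarith [I_Lam_sq f, I_mul_lap_nonpos f, I_sq_nonneg f])

lemma N_mul_sq_le (f g : TF) : N (f * g) ^ 2 ≤ N (f * f) * N (g * g) := by
  rw [N_sq]
  calc I (f * g * (f * g)) = I (f * f * (g * g)) := by congr 1; ring
    _ ≤ _ := (le_abs_self _).trans (I_cauchy _ _)

lemma N_d_sq_le {e : E3} {f : TF} {s : ℝ} (hs : 0 ≤ s) (hf : ∀ x, |f x| ≤ s) :
    N (d e f * d e f) ≤ 3 * s * N (d e (d e f)) := by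
  have h := interpolation (μ := I) (fun f hf => I_nonneg hf) (D := d e) (fun f => I_d e f) hf
  refine Real.sqrt_le_iff.2 ⟨by have := N_nonneg (d e (d e f)); positivity, ?_⟩
  calc _ ≤ _ := h
    _ = (3 * s * N (d e (d e f))) ^ 2 := by rw [← N_sq]; ring

lemma N_d_mul_d_le {C : ℝ} (hC : 0 ≤ C) (hs : ∀ (f : TF) x, |f x| ≤ C * N (Lam f)) {e : E3}
    (he : ∀ f, N (d e (d e f)) ≤ N (lap f)) (f g : TF) :
    N (d e f * d e g) ≤ 3 * C * (N (Lam f) * N (Lam g)) := by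
  have key : ∀ f, N (d e f * d e f) ≤ 3 * C * N (Lam f) ^ 2 := fun f => by
    have h1 := N_d_sq_le (e := e) (mul_nonneg hC (N_nonneg _)) (hs f)
    have h2 := (he f).trans (N_lap_le_N_Lam f)
    have h3 := N_nonneg (Lam f)
    calc _ ≤ _ := h1
      _ ≤ 3 * (C * N (Lam f)) * N (Lam f) := by gcongr
      _ = _ := by ring
  refine abs_le_of_sq_le_sq' ?_ (by have := N_nonneg (Lam f); have := N_nonneg (Lam g); positivity) |>.2
  calc _ ≤ _ := N_mul_sq_le _ _
    _ ≤ (3 * C * N (Lam f) ^ 2) * (3 * C * N (Lam g) ^ 2) :=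
        mul_le_mul (key f) (key g) (N_nonneg _) (by positivity)
    _ = _ := by ring

/-- The graph norm of the Laplacian is submultiplicative up to a constant. -/
lemma exists_N_Lam_mul_le : ∃ C, 0 < C ∧ ∀ f g, N (Lam (f * g)) ≤ C * (N (Lam f) * N (Lam g)) := by
  obtain ⟨C, hC, hs⟩ := exists_abs_le_N_Lam
  refine ⟨20 * C, by positivity, fun f g => ?_⟩
  have e : Lam (f * g) = f * Lam g - g * lap f - (2 : ℝ) • (DX 0 f * DX 0 g) -
      (2 : ℝ) • (DY 0 f * DY 0 g) - (2 : ℝ) • (DT f * DT g) := by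
    rw [Lam_apply, Lam_apply, lap_eq 0, lap_eq 0 f, lap_eq 0 g]
    simp only [Derivation.leibniz, smul_eq_mul, map_add]
    ext x
    simp only [mul_apply, add_apply, sub_apply, smul_apply]
    ring
  have n1 : N (f * Lam g) ≤ C * (N (Lam f) * N (Lam g)) := by
    rw [← mul_assoc]; exact N_mul_le (hs f)
  have n2 : N (g * lap f) ≤ C * (N (Lam f) * N (Lam g)) := by
    refine (N_mul_le (hs g)).trans ?_
    rw [mul_comm (N (Lam f)), ← mul_assoc]
    exact mul_le_mul_of_nonneg_left (N_lap_le_N_Lam f) (mul_nonneg hC.le (N_nonneg _))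
  have n3 := N_d_mul_d_le hC.le hs (e := eX 0) (fun h => (N_second_le 0 h).1) f g
  have n4 := N_d_mul_d_le hC.le hs (e := eY 0) (fun h => (N_second_le 0 h).2.1) f g
  have n5 := N_d_mul_d_le hC.le hs (e := eT) (fun h => (N_second_le 0 h).2.2.1) f g
  rw [e]
  refine (N_sub_le _ _).trans ((add_le_add ((N_sub_le _ _).trans (add_le_add ((N_sub_le _ _).trans
    (add_le_add (N_sub_le _ _) le_rfl)) le_rfl)) le_rfl).trans ?_)
  rw [N_smul, N_smul, N_smul, abs_two]
  change _ + _ + 2 * N (d (eX 0) f * d (eX 0) g) + 2 * N (d (eY 0) f * d (eY 0) g) +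
    2 * N (d eT f * d eT g) ≤ _
  linarith

lemma Lam_algebraMap (c : ℝ) : Lam (algebraMap ℝ TF c) = algebraMap ℝ TF c := by
  simp [Lam_apply, lap_apply]

lemma Lam_tr (s : E3) (f : TF) : Lam (tr s f) = tr s (Lam f) := by
  simp only [Lam_apply, lap_tr, map_sub]

lemma d_Lam (e : E3) (f : TF) : d e (Lam f) = Lam (d e f) := by
  simp only [Lam_apply, d_lap, map_sub]

lemma I_Lam_mul (f g : TF) : I (Lam f * g) = I (f * Lam g) := by
  simp only [Lam_apply, sub_mul, mul_sub, map_sub, I_lap_mul]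

lemma eq_zero_of_N_Lam {f : TF} (h : N (Lam f) = 0) : f = 0 :=
  eq_zero_of_N (le_antisymm (h ▸ N_le_N_Lam f) (N_nonneg f))

lemma N_Lam_comm_le {L : TF →ₗ[ℝ] TF} (hL : ∀ h, lap (L h) = L (lap h))
    (hN : ∀ h, N (L h) ≤ 3 * N (lap h)) (h : TF) : N (Lam (L h)) ≤ 3 * N (Lam (Lam h)) := by
  have : Lam (L h) = L (Lam h) := by simp only [Lam_apply, hL, map_sub]
  rw [this]
  linarith [hN (Lam h), N_lap_le_N_Lam (Lam h)]

/-- The map sending a function to its mean, as a constant function. -/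
noncomputable def meanConst : TF →ₗ[ℝ] TF := (Algebra.linearMap ℝ TF) ∘ₗ I

lemma meanConst_apply (h : TF) : meanConst h = algebraMap ℝ TF (I h) := rfl

lemma N_Lam_meanConst_le (h : TF) : N (Lam (meanConst h)) ≤ 1 * N (Lam (Lam h)) := by
  rw [meanConst_apply, Lam_algebraMap, N_algebraMap, one_mul]
  have : |I h| ≤ N h := by
    have := I_cauchy 1 h
    rwa [one_mul, show N 1 = 1 by rw [← map_one (algebraMap ℝ TF), N_algebraMap, abs_one],
      one_mul] at this
  exact this.trans ((N_le_N_Lam h).trans (N_le_N_Lam _))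

/-- The norm `N ∘ Lam ∘ Lam`. -/
noncomputable def nrmX : AddGroupNorm TF where
  toFun f := N (Lam (Lam f))
  map_zero' := by rw [map_zero, map_zero, N_zero]
  add_le' f g := by
    rw [map_add, map_add]
    exact N_add_le _ _
  neg' f := by rw [map_neg, map_neg, N_neg]
  eq_zero_of_map_eq_zero' f h := eq_zero_of_N_Lam
    (le_antisymm (h ▸ N_le_N_Lam (Lam f)) (N_nonneg _))

lemma nrmX_smul_le (c : ℝ) (f : TF) : nrmX (c • f) ≤ |c| * nrmX f := by
  change N (Lam (Lam (c • f))) ≤ |c| * N (Lam (Lam f))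
  rw [map_smul, map_smul, N_smul]

/-- A constant making the graph norm of the Laplacian submultiplicative. -/
noncomputable def cst : ℝ := exists_N_Lam_mul_le.choose

lemma cst_pos : 0 < cst := exists_N_Lam_mul_le.choose_spec.1

/-- The submultiplicative multiple of the norm `N ∘ Lam`. -/
noncomputable def nrmY : RingNorm TF where
  toFun f := cst * N (Lam f)
  map_zero' := by rw [map_zero, N_zero, mul_zero]
  add_le' f g := by
    rw [map_add, ← mul_add]
    exact mul_le_mul_of_nonneg_left (N_add_le _ _) cst_pos.le
  neg' f := by rw [map_neg, N_neg]
  mul_le' f g := by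
    refine (mul_le_mul_of_nonneg_left (exists_N_Lam_mul_le.choose_spec.2 f g) cst_pos.le).trans_eq ?_
    change cst * (cst * _) = _
    ring
  eq_zero_of_map_eq_zero' f h := eq_zero_of_N_Lam ((mul_eq_zero.1 h).resolve_left cst_pos.ne')

lemma nrmY_smul_le (c : ℝ) (f : TF) : nrmY (c • f) ≤ |c| * nrmY f := by
  change cst * N (Lam (c • f)) ≤ |c| * (cst * N (Lam f))
  rw [map_smul, N_smul, mul_left_comm]

end TF

/-! ### The Banach spaces -/

/-- Smooth periodic functions with the norm `N ∘ Lam ∘ Lam`. -/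
def XS : Type := TF

/-- Smooth periodic functions with a multiple of the norm `N ∘ Lam`. -/
def YS : Type := TF

namespace XS

noncomputable instance : AddCommGroup XS := inferInstanceAs (AddCommGroup TF)
noncomputable instance : Module ℝ XS := inferInstanceAs (Module ℝ TF)

/-- The norm on `XS`. -/
noncomputable def nrm : AddGroupNorm XS := TF.nrmX

noncomputable instance : NormedAddCommGroup XS := nrm.toNormedAddCommGroup

noncomputable instance : NormedSpace ℝ XS where
  norm_smul_le c f := TF.nrmX_smul_le c f

end XS

namespace YS

noncomputable instance : CommRing YS := inferInstanceAs (CommRing TF)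
noncomputable instance : Algebra ℝ YS := inferInstanceAs (Algebra ℝ TF)

/-- The norm on `YS`. -/
noncomputable def nrm : RingNorm YS := TF.nrmY

noncomputable instance : NormedCommRing YS :=
  { nrm.toNormedRing, (inferInstance : CommRing YS) with }

noncomputable instance : NormedAlgebra ℝ YS where
  norm_smul_le c f := TF.nrmY_smul_le c f

end YS

/-- The completion of `XS`. -/
abbrev Xh := UniformSpace.Completion XS

/-- The completion of `YS`. -/
abbrev Yh := UniformSpace.Completion YS

/-- The inclusion of smooth functions in `Xh`. -/
noncomputable def jX : TF →ₗ[ℝ] Xh :=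
  (UniformSpace.Completion.toComplL : XS →L[ℝ] Xh).toLinearMap

/-- The inclusion of smooth functions in `Yh`. -/
noncomputable def jY : TF →ₗ[ℝ] Yh :=
  (UniformSpace.Completion.toComplL : YS →L[ℝ] Yh).toLinearMap

lemma norm_jX (f : TF) : ‖jX f‖ = TF.N (TF.Lam (TF.Lam f)) :=
  UniformSpace.Completion.norm_coe (E := XS) f

lemma norm_jY (f : TF) : ‖jY f‖ = TF.cst * TF.N (TF.Lam f) :=
  UniformSpace.Completion.norm_coe (E := YS) f

lemma denseRange_jX : DenseRange jX := UniformSpace.Completion.denseRange_coe (α := XS)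
lemma denseRange_jY : DenseRange jY := UniformSpace.Completion.denseRange_coe (α := YS)

lemma jY_mul (f g : TF) : jY (f * g) = jY f * jY g :=
  UniformSpace.Completion.coe_mul (α := YS) f g

lemma jY_one : jY 1 = 1 := UniformSpace.Completion.coe_one (α := YS)

lemma jY_injective : Function.Injective jY := UniformSpace.Completion.coe_injective YS

end KodairaThurston

namespace KodairaThurston

open Filter Topology Set
open scoped ContDiff

namespace TF

/-! ### Translations -/

lemma abs_taylor_le (f : TF) (x e : E3) : |f (x + e) - f x - d e f x| ≤ sn (d e (d e f)) := by
  have h1 : ∀ t ∈ Icc (0 : ℝ) 1, |d e f (x + t • e) - d e f x| ≤ sn (d e (d e f)) := by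
    intro t ht
    have h := norm_image_sub_le_of_norm_deriv_le_segment' (f := fun s => d e f (x + s • e))
      (f' := fun s => d e (d e f) (x + s • e)) (C := sn (d e (d e f))) (a := 0) (b := 1)
      (fun s _ => (hasDerivAt_line _ _ _ _).hasDerivWithinAt)
      (fun s _ => (d e (d e f)).abs_le_sn _) t ht
    simp only [zero_smul, add_zero, sub_zero, Real.norm_eq_abs] at h
    exact h.trans (mul_le_of_le_one_right (sn_nonneg _) ht.2)
  have h := norm_image_sub_le_of_norm_deriv_le_segment' (f := fun s => f (x + s • e) - s * d e f x)
    (f' := fun s => d e f (x + s • e) - 1 * d e f x) (C := sn (d e (d e f))) (a := 0) (b := 1)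
    (fun s _ => ((hasDerivAt_line _ _ _ _).sub
      ((hasDerivAt_id s).mul_const (d e f x))).hasDerivWithinAt)
    (fun s hs => by rw [one_mul]; exact h1 s ⟨hs.1, hs.2.le⟩) 1 (by simp)
  simp only [one_smul, one_mul, zero_smul, add_zero, zero_mul, sub_zero, mul_one,
    Real.norm_eq_abs] at h
  rwa [sub_right_comm]

lemma d_eq_sum (e : E3) (f : TF) : d e f = ∑ i : Fin 3, e i • d (EuclideanSpace.single i 1) f := by
  have he : e = ∑ i : Fin 3, e i • EuclideanSpace.single i (1 : ℝ) := by
    ext j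
    simp [Fin.sum_univ_three]
    fin_cases j <;> simp
  conv_lhs => rw [he, Fin.sum_univ_three, d_add_dir, d_add_dir]
  simp only [d_smul_dir, Fin.sum_univ_three]

lemma exists_sn_dd_le (f : TF) : ∃ C, 0 ≤ C ∧ ∀ e : E3, sn (d e (d e f)) ≤ C * ‖e‖ ^ 2 := by
  have hc : ∀ (e : E3) i, |e i| ≤ ‖e‖ := fun e i => PiLp.norm_apply_le e i
  refine ⟨∑ i : Fin 3, ∑ j : Fin 3,
    sn (d (EuclideanSpace.single i 1) (d (EuclideanSpace.single j 1) f)),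
    Finset.sum_nonneg fun i _ => Finset.sum_nonneg fun j _ => sn_nonneg _,
    fun e => sn_le fun x => ?_⟩
  rw [d_eq_sum e (d e f), d_eq_sum e f, sum_apply, Finset.sum_mul]
  refine (Finset.abs_sum_le_sum_abs _ _).trans (Finset.sum_le_sum fun i _ => ?_)
  rw [map_sum, smul_apply, sum_apply, Finset.mul_sum, Finset.sum_mul]
  refine (Finset.abs_sum_le_sum_abs _ _).trans (Finset.sum_le_sum fun j _ => ?_)
  rw [Derivation.map_smul, smul_apply, abs_mul, abs_mul]
  have h1 := (d (EuclideanSpace.single i 1) (d (EuclideanSpace.single j 1) f)).abs_le_sn x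
  calc _ ≤ ‖e‖ * (‖e‖ * sn (d (EuclideanSpace.single i 1) (d (EuclideanSpace.single j 1) f))) := by
        gcongr <;> exact hc _ _
    _ = _ := by ring

section

variable {V : Type*} [NormedAddCommGroup V] [NormedSpace ℝ V] {j : TF →ₗ[ℝ] V} {C : ℝ}

lemma hasFDerivAt_tr (hC : 0 ≤ C) (hj : ∀ f, ‖j f‖ ≤ C * N (Lam (Lam f))) (f : TF) (s : E3) :
    HasFDerivAt (fun s => j (tr s f)) (∑ i : Fin 3, (EuclideanSpace.proj i : E3 →L[ℝ] ℝ).smulRight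
      (j (tr s (d (EuclideanSpace.single i 1) f)))) s := by
  have e0 : ∀ e : E3, (∑ i : Fin 3, (EuclideanSpace.proj i : E3 →L[ℝ] ℝ).smulRight
      (j (tr s (d (EuclideanSpace.single i 1) f)))) e = j (d e (tr s f)) := fun e => by
    rw [d_eq_sum]
    simp [d_tr]
  obtain ⟨B, hB0, hB⟩ := exists_sn_dd_le (Lam (Lam (tr s f)))
  have h1 : ∀ e : E3, ‖j (tr (s + e) f) - j (tr s f) - j (d e (tr s f))‖ ≤ C * B * ‖e‖ ^ 2 := by
    intro e
    rw [← map_sub, ← map_sub, mul_assoc]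
    refine (hj _).trans (mul_le_mul_of_nonneg_left (N_le_of_abs_le fun x => ?_) hC)
    rw [add_comm s e, ← tr_add]
    simp only [map_sub, Lam_tr e, ← d_Lam]
    exact (abs_taylor_le _ x e).trans (hB e)
  rw [hasFDerivAt_iff_isLittleO_nhds_zero]
  simp only [e0]
  refine (Asymptotics.IsBigO.of_bound (C * B) (Eventually.of_forall fun e => ?_)).trans_isLittleO
    (g := fun e : E3 => ‖e‖ ^ 2) ?_
  · rw [norm_pow, norm_norm]; exact h1 e
  · exact Asymptotics.isLittleO_norm_pow_id one_lt_two

/-- Translation is smooth in every weaker norm. -/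
lemma contDiff_tr (hC : 0 ≤ C) (hj : ∀ f, ‖j f‖ ≤ C * N (Lam (Lam f))) (f : TF) :
    ContDiff ℝ ∞ fun s => j (tr s f) := by
  refine contDiff_infty.2 fun n => ?_
  induction n generalizing f with
  | zero =>
    exact contDiff_zero.2 (continuous_iff_continuousAt.2 fun s =>
      (hasFDerivAt_tr hC hj f s).continuousAt)
  | succ n ih =>
    refine contDiff_succ_iff_hasFDerivAt.2 ⟨_, ?_, hasFDerivAt_tr hC hj f⟩
    exact ContDiff.sum fun i _ => contDiff_const.smulRight (ih _)

end

end TF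

open TF

/-! ### Extension of operators to the completions -/

/-- Extension of a linear operator to the completions. -/
noncomputable def extXY (L : TF →ₗ[ℝ] TF) : Xh →L[ℝ] Yh := (jY ∘ₗ L).extendOfNorm jX

lemma extXY_jX {L : TF →ₗ[ℝ] TF} {C : ℝ} (hL : ∀ h, N (Lam (L h)) ≤ C * N (Lam (Lam h))) (h : TF) :
    extXY L (jX h) = jY (L h) := by
  refine LinearMap.extendOfNorm_eq denseRange_jX ⟨cst * C, fun h => ?_⟩ h
  rw [norm_jX, LinearMap.comp_apply, norm_jY, mul_assoc]
  exact mul_le_mul_of_nonneg_left (hL h) cst_pos.le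

/-- Translation on `Xh`. -/
noncomputable def trX (s : E3) : Xh →L[ℝ] Xh := (jX ∘ₗ (tr s).toLinearMap).extendOfNorm jX

lemma norm_jX_tr (s : E3) (h : TF) : ‖jX (tr s h)‖ = ‖jX h‖ := by
  rw [norm_jX, norm_jX, Lam_tr, Lam_tr, N_tr]

lemma norm_jY_tr (s : E3) (h : TF) : ‖jY (tr s h)‖ = ‖jY h‖ := by
  rw [norm_jY, norm_jY, Lam_tr, N_tr]

lemma trX_jX (s : E3) (h : TF) : trX s (jX h) = jX (tr s h) :=
  LinearMap.extendOfNorm_eq (f := jX ∘ₗ (tr s).toLinearMap) denseRange_jX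
    ⟨1, fun h => by rw [one_mul]; exact (norm_jX_tr s h).le⟩ h

lemma norm_trX_le (s : E3) (u : Xh) : ‖trX s u‖ ≤ ‖u‖ := by
  have := LinearMap.norm_extendOfNorm_apply_le (f := jX ∘ₗ (tr s).toLinearMap) denseRange_jX 1
    (fun h => by rw [one_mul]; exact (norm_jX_tr s h).le) u
  rwa [one_mul] at this

lemma eq_on_Xh {Z : Type*} [TopologicalSpace Z] [T2Space Z] {f g : Xh → Z} (hf : Continuous f)
    (hg : Continuous g) (h : ∀ k : TF, f (jX k) = g (jX k)) (u : Xh) : f u = g u :=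
  congrFun (denseRange_jX.equalizer hf hg (funext h)) u

lemma trX_zero (u : Xh) : trX 0 u = u :=
  eq_on_Xh (trX 0).continuous continuous_id (fun k => by rw [trX_jX, tr_zero]; rfl) u

lemma trX_add (s s' : E3) (u : Xh) : trX (s + s') u = trX s (trX s' u) :=
  eq_on_Xh (trX _).continuous ((trX s).continuous.comp (trX s').continuous)
    (fun k => by simp only [Function.comp, trX_jX, tr_add]) u

lemma trX_periodic (s a : E3) (ha : ∀ i, ∃ k : ℤ, a i = (k : ℝ)) (u : Xh) :
    trX (s + a) u = trX s u :=
  eq_on_Xh (trX _).continuous (trX s).continuous (fun k => by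
    rw [trX_jX, trX_jX]
    congr 1
    ext x
    rw [tr_apply, tr_apply, ← add_assoc, k.periodic _ _ ha]) u

lemma le_zero_of_forall_jX {A B : ℝ} (hB : 0 ≤ B) (w : Xh) (h : ∀ k : TF, A ≤ B * ‖w - jX k‖) :
    A ≤ 0 := by
  refine le_of_forall_pos_le_add fun ε hε => ?_
  obtain ⟨k, hk⟩ := denseRange_jX.exists_dist_lt w (ε := ε / (B + 1)) (by positivity)
  rw [dist_eq_norm] at hk
  have h1 := (h k).trans (mul_le_mul_of_nonneg_left hk.le hB)
  have h2 : B * (ε / (B + 1)) ≤ ε := by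
    rw [mul_div_assoc', div_le_iff₀ (by positivity)]
    nlinarith
  linarith

lemma continuousAt_trX (u : Xh) : ContinuousAt (fun s => trX s u) 0 := by
  rw [Metric.continuousAt_iff']
  intro ε hε
  obtain ⟨k, hk⟩ := denseRange_jX.exists_dist_lt u (ε := ε / 3) (by positivity)
  have hc : ContinuousAt (fun s => jX (tr s k)) 0 :=
    (contDiff_tr zero_le_one (fun f => by rw [norm_jX, one_mul]) k).continuous.continuousAt
  filter_upwards [Metric.continuousAt_iff'.1 hc (ε / 3) (by positivity)] with s hs
  rw [tr_zero] at hs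
  rw [trX_zero]
  have h1 : dist (trX s u) (jX (tr s k)) < ε / 3 := by
    rw [← trX_jX, dist_eq_norm, ← map_sub]
    exact (norm_trX_le _ _).trans_lt (by rwa [← dist_eq_norm])
  have h2 := dist_triangle4 (trX s u) (jX (tr s k)) (jX k) u
  rw [dist_comm (jX k)] at h2
  linarith

/-- Evaluation at a point on `Xh`. -/
noncomputable def evX (x : E3) : Xh →L[ℝ] ℝ := (ev x).toLinearMap.extendOfNorm jX

lemma exists_abs_le_norm_jX : ∃ C, 0 < C ∧ ∀ x (h : TF), |h x| ≤ C * ‖jX h‖ := by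
  obtain ⟨C, hC, h⟩ := exists_abs_le_N_Lam
  refine ⟨C, hC, fun x f => (h f x).trans ?_⟩
  rw [norm_jX]
  exact mul_le_mul_of_nonneg_left (N_le_N_Lam _) hC.le

lemma evX_jX (x : E3) (h : TF) : evX x (jX h) = h x := by
  obtain ⟨C, -, hC⟩ := exists_abs_le_norm_jX
  exact LinearMap.extendOfNorm_eq (f := (ev x).toLinearMap) denseRange_jX ⟨C, hC x⟩ h

lemma exists_evX_le : ∃ C, 0 < C ∧ ∀ x u, |evX x u| ≤ C * ‖u‖ := by
  obtain ⟨C, hC0, hC⟩ := exists_abs_le_norm_jX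
  exact ⟨C, hC0, fun x u => LinearMap.norm_extendOfNorm_apply_le (f := (ev x).toLinearMap)
    denseRange_jX C (hC x) u⟩

lemma evX_trX (x : E3) (u : Xh) : evX 0 (trX x u) = evX x u :=
  eq_on_Xh ((evX 0).continuous.comp (trX x).continuous) (evX x).continuous (fun k => by
    simp only [Function.comp, trX_jX, evX_jX, tr_apply, zero_add]) u

/-- Elements of `Xh` are determined by their point values. -/
lemma eq_zero_of_evX {w : Xh} (hw : ∀ x, evX x w = 0) : w = 0 := by
  obtain ⟨C, hC0, hC⟩ := exists_evX_le
  have key : ∀ k h : TF, |I (Lam (Lam h) * Lam (Lam k))| ≤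
      C * N (Lam (Lam (Lam (Lam k)))) * ‖w - jX h‖ := by
    intro k h
    have h1 : ∀ x, |h x| ≤ C * ‖w - jX h‖ := fun x => by
      have := hC x (w - jX h)
      rwa [map_sub, hw, zero_sub, abs_neg, evX_jX] at this
    rw [I_Lam_mul, I_Lam_mul]
    refine (I_cauchy _ _).trans ?_
    rw [mul_right_comm]
    exact mul_le_mul_of_nonneg_right (N_le_of_abs_le h1) (N_nonneg _)
  have h2 : ∀ k : TF, ‖jX k‖ ≤ ‖w - jX k‖ := by
    intro k
    have h3 : ‖jX k‖ * (‖jX k‖ - ‖w - jX k‖) ≤ 0 := by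
      refine le_zero_of_forall_jX
        (B := C * N (Lam (Lam (Lam (Lam k)))) + ‖jX k‖)
        (by have := N_nonneg (Lam (Lam (Lam (Lam k)))); positivity) w fun h => ?_
      have e : I (Lam (Lam k) * Lam (Lam k)) =
          I (Lam (Lam (k - h)) * Lam (Lam k)) + I (Lam (Lam h) * Lam (Lam k)) := by
        rw [← map_add, ← add_mul, ← map_add, ← map_add, sub_add_cancel]
      have h4 := (le_abs_self _).trans (I_cauchy (Lam (Lam (k - h))) (Lam (Lam k)))
      have h5 := (le_abs_self _).trans (key k h)
      rw [← norm_jX, ← norm_jX, map_sub jX k h] at h4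
      have h6 : ‖jX k - jX h‖ ≤ ‖w - jX k‖ + ‖w - jX h‖ := by
        have := norm_sub_le (w - jX h) (w - jX k)
        rw [sub_sub_sub_cancel_left] at this
        linarith
      have h7 : ‖jX k‖ * ‖jX k‖ = I (Lam (Lam k) * Lam (Lam k)) := by
        rw [norm_jX, ← N_sq, sq]
      nlinarith [mul_le_mul_of_nonneg_right h6 (norm_nonneg (jX k))]
    by_contra! hlt
    nlinarith [norm_nonneg (w - jX k)]
  refine norm_le_zero_iff.1 (le_zero_of_forall_jX (B := 2) (by norm_num) w fun k => ?_)
  have := norm_add_le (w - jX k) (jX k)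
  rw [sub_add_cancel] at this
  linarith [h2 k]

end KodairaThurston

namespace KodairaThurston

open Filter Topology Set
open scoped ContDiff

open TF

/-- The extension of the Monge–Ampère operator to the completions. -/
noncomputable def qop (θ : ℝ) : QuadOp Xh Yh :=
  ⟨extXY (La θ), extXY (Lb θ), extXY (Lc θ), extXY (Ld θ), extXY meanConst⟩

variable {θ : ℝ}

lemma qop_a (h : TF) : (qop θ).a (jX h) = jY (La θ h) :=
  extXY_jX (N_Lam_comm_le (lap_La θ) (N_La_le θ)) h
lemma qop_b (h : TF) : (qop θ).b (jX h) = jY (Lb θ h) :=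
  extXY_jX (N_Lam_comm_le (lap_Lb θ) (N_Lb_le θ)) h
lemma qop_c (h : TF) : (qop θ).c (jX h) = jY (Lc θ h) :=
  extXY_jX (N_Lam_comm_le (lap_Lc θ) (N_Lc_le θ)) h
lemma qop_d (h : TF) : (qop θ).d (jX h) = jY (Ld θ h) :=
  extXY_jX (N_Lam_comm_le (lap_Ld θ) (N_Ld_le θ)) h
lemma qop_l (h : TF) : (qop θ).l (jX h) = jY (meanConst h) :=
  extXY_jX N_Lam_meanConst_le h

lemma Phi_jX (u : TF) : (qop θ).Phi (jX u) = jY (MA θ u + meanConst u) := by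
  simp only [QuadOp.Phi, qop_a, qop_b, qop_c, qop_d, qop_l, MA, map_add, map_sub, jY_mul, jY_one]

lemma DPhi_jX (u h : TF) : (qop θ).DPhi (jX u) (jX h) = jY (bil θ u h + meanConst h) := by
  simp only [QuadOp.DPhi_apply, qop_a, qop_b, qop_c, qop_d, qop_l, bil, two_mul, map_add, map_sub,
    jY_mul, jY_one]

lemma MA_tr (s : E3) (u : TF) : MA θ (tr s u) = tr s (MA θ u) := by
  simp only [MA, La_apply, Lb_apply, Lc_apply, Ld_apply, DX, DY, DT, d_tr, map_add, map_sub,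
    map_mul, map_one]

lemma meanConst_tr (s : E3) (u : TF) : meanConst (tr s u) = tr s (meanConst u) := by
  rw [meanConst_apply, meanConst_apply, I_tr, AlgHom.commutes]

/-- Equivariance of the equation under translations. -/
lemma Phi_trX {v : Xh} {E : TF} (hv : (qop θ).Phi v = jY E) (s : E3) :
    (qop θ).Phi (trX s v) = jY (tr s E) := by
  have hc := (qop θ).contDiff_Phi.continuous
  have h : ‖(qop θ).Phi (trX s v) - jY (tr s E)‖ = ‖(qop θ).Phi v - jY E‖ :=
    eq_on_Xh (f := fun v => ‖(qop θ).Phi (trX s v) - jY (tr s E)‖)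
      (g := fun v => ‖(qop θ).Phi v - jY E‖)
      ((hc.comp (trX s).continuous).sub continuous_const).norm (hc.sub continuous_const).norm
      (fun k => by
        rw [trX_jX, Phi_jX, Phi_jX, MA_tr, meanConst_tr, ← map_add, ← map_sub, ← map_sub,
          ← map_sub, norm_jY_tr]) v
  rw [hv, sub_self, norm_zero] at h
  exact sub_eq_zero.1 (norm_eq_zero.1 h)

/-- Elliptic regularity: a solution in the completion with invertible linearisation is smooth. -/
lemma exists_smooth {v : Xh} {E : TF} {K : ℝ} (hv : (qop θ).Phi v = jY E)
    (hs : Function.Surjective ((qop θ).DPhi v)) (hb : ∀ h, ‖h‖ ≤ K * ‖(qop θ).DPhi v h‖) :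
    ∃ U : TF, jX U = v := by
  have h0 : ContDiffAt ℝ ∞ (fun s => trX s v) 0 := by
    refine (qop θ).contDiffAt_of_Phi (K := K) (continuousAt_trX v) ?_ ?_ ?_
    · rwa [trX_zero]
    · rwa [trX_zero]
    · simp only [Phi_trX hv]
      refine (contDiff_tr (j := jY) cst_pos.le (fun f => ?_) E).contDiffAt
      rw [norm_jY]
      exact mul_le_mul_of_nonneg_left (N_le_N_Lam _) cst_pos.le
  have h1 : ContDiff ℝ ∞ fun s => trX s v := by
    refine contDiff_iff_contDiffAt.2 fun s => ?_
    have e : (fun s' => trX s' v) = fun s' => trX s (trX (s' - s) v) := by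
      funext s'
      rw [← trX_add, add_sub_cancel]
    rw [e]
    refine (trX s).contDiff.contDiffAt.comp s ?_
    refine ContDiffAt.comp (g := fun s => trX s v) (f := fun s' => s' - s) s ?_ (by fun_prop)
    rwa [sub_self]
  let U : TF := ⟨fun x => evX 0 (trX x v), (evX 0).contDiff.comp h1, fun x a ha => by
    simp only [trX_periodic x a ha]⟩
  refine ⟨U, sub_eq_zero.1 (eq_zero_of_evX fun x => ?_)⟩
  rw [map_sub, evX_jX, sub_eq_zero]
  exact evX_trX x v

lemma I_MA (u : TF) : I (MA θ u) = 1 := by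
  have h1 := I_bil θ u u
  have h2 : I (2 + La θ u + Lb θ u) = 2 := by
    have h3 : (2 : TF) = algebraMap ℝ TF 2 := by rw [map_ofNat]
    rw [h3, map_add, map_add, I_algebraMap, La_apply, Lb_apply, map_add, map_add]
    simp only [DX, DY, DT, I_d, add_zero]
  rw [bil_self, map_sub, h2, two_mul, map_add] at h1
  linarith

/-- The right-hand side of the continuity method. -/
noncomputable def Et (E : TF) (τ : ℝ) : TF := 1 + τ • (E - 1)

/-- Solvability at a parameter of the continuity method. -/
def Solvable (θ : ℝ) (E : TF) (τ : ℝ) : Prop :=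
  ∃ u, IsSol θ (Et E τ) u ∧ Function.Surjective ((qop θ).DPhi (jX u))

/-- The index set of all solutions along the continuity path. -/
def PathSol (θ : ℝ) (E : TF) : Type := {p : ℝ × TF // p.1 ∈ Icc (0 : ℝ) 1 ∧ IsSol θ (Et E p.1) p.2}

lemma fam_path {E : TF} (hE : ∀ x, 0 < E x) :
    Fam θ (fun i : PathSol θ E => Et E i.1.1) (fun i => i.1.2) where
  sol i := i.2.2
  low := by
    obtain ⟨x₀, hx₀⟩ := exists_max (-E)
    refine ⟨min 1 (E x₀), lt_min one_pos (hE _), min_le_left _ _, fun i x => ?_⟩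
    have h1 := hx₀ x
    simp only [neg_apply, neg_le_neg_iff] at h1
    obtain ⟨h2, h3⟩ := i.2.1
    simp only [Et, add_apply, one_apply, smul_apply, sub_apply]
    nlinarith [mul_nonneg h2 (sub_nonneg.2 ((min_le_right 1 (E x₀)).trans h1)),
      mul_nonneg (sub_nonneg.2 h3) (sub_nonneg.2 (min_le_left 1 (E x₀)))]
  b0 := by
    refine ⟨1 + sn (E - 1), fun i x => ?_⟩
    obtain ⟨h2, h3⟩ := i.2.1
    simp only [Et, add_apply, one_apply, smul_apply]
    refine (abs_add_le _ _).trans ?_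
    rw [abs_one, abs_mul, abs_of_nonneg h2]
    have := (E - 1).abs_le_sn x
    nlinarith [abs_nonneg ((E - 1) x)]
  b1 e := by
    refine ⟨sn (d e E), fun i x => ?_⟩
    obtain ⟨h2, h3⟩ := i.2.1
    simp only [Et, map_add, map_sub, Derivation.map_smul, Derivation.map_one_eq_zero, zero_add,
      sub_zero, smul_apply]
    rw [abs_mul, abs_of_nonneg h2]
    nlinarith [abs_nonneg (d e E x), (d e E).abs_le_sn x]
  b2 e e' := by
    refine ⟨sn (d e (d e' E)), fun i x => ?_⟩
    obtain ⟨h2, h3⟩ := i.2.1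
    simp only [Et, map_add, map_sub, Derivation.map_smul, Derivation.map_one_eq_zero, zero_add,
      sub_zero, smul_apply]
    rw [abs_mul, abs_of_nonneg h2]
    nlinarith [abs_nonneg (d e (d e' E) x), (d e (d e' E)).abs_le_sn x]

lemma bound_of_smooth {u : TF} {K : ℝ} (hb : ∀ h, N (Lam (Lam h)) ≤
    K * N (Lam (bil θ u h + algebraMap ℝ TF (I h)))) (h : Xh) :
    ‖h‖ ≤ K / cst * ‖(qop θ).DPhi (jX u) h‖ := by
  refine denseRange_jX.induction_on h (isClosed_le continuous_norm
    (continuous_const.mul ((qop θ).DPhi (jX u)).continuous.norm)) fun k => ?_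
  rw [DPhi_jX, norm_jX, norm_jY, meanConst_apply, ← mul_assoc, div_mul_cancel₀ _ cst_pos.ne']
  exact hb k

/-- The continuity method advances by a uniform step. -/
lemma exists_step {E : TF} (hE : ∀ x, 0 < E x) (hI : I E = 1) : ∃ δ, 0 < δ ∧
    ∀ τ ∈ Icc (0 : ℝ) 1, ∀ τ' ∈ Icc (0 : ℝ) 1, |τ' - τ| ≤ δ → Solvable θ E τ → Solvable θ E τ' := by
  have H := fam_path (θ := θ) hE
  obtain ⟨K₀, hK₀, hap⟩ := H.a_priori
  obtain ⟨M, hM, hco⟩ := H.coeff_bounds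
  obtain ⟨C, hC, hsup⟩ := exists_abs_le_N_Lam
  set K := K₀ / cst
  have hK : 0 < K := div_pos hK₀ cst_pos
  have hlip := (qop θ).lip_nonneg
  obtain ⟨r, hr, hr1, hr2⟩ : ∃ r, 0 < r ∧ (qop θ).lip * r * K ≤ 1 / 2 ∧ 3 * C * r < 1 / M := by
    have hM0 : 0 < M := by linarith
    refine ⟨min (1 / (2 * ((qop θ).lip + 1) * K)) (1 / (6 * C * M)), by positivity, ?_, ?_⟩
    · calc _ ≤ (qop θ).lip * (1 / (2 * ((qop θ).lip + 1) * K)) * K := by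
            gcongr; exact min_le_left _ _
        _ = (qop θ).lip / ((qop θ).lip + 1) * (1 / 2) := by field_simp
        _ ≤ 1 * (1 / 2) := by
            gcongr
            rw [div_le_one (by positivity)]
            linarith
        _ = _ := one_mul _
    · calc _ ≤ 3 * C * (1 / (6 * C * M)) := by gcongr; exact min_le_right _ _
        _ = 1 / M * (1 / 2) := by field_simp; norm_num
        _ < 1 / M := by
            have : 0 < 1 / M := by positivity
            linarith
  refine ⟨r / (2 * K) / (‖jY (E - 1)‖ + 1), by positivity, ?_⟩
  rintro τ hτ τ' hτ' hd ⟨u, hu, hus⟩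
  set i : PathSol θ E := ⟨(τ, u), hτ, hu⟩
  have hb := bound_of_smooth (hap i)
  have hE0 : ∀ x, 0 < Et E τ' x := fun x => by
    simp only [Et, add_apply, one_apply, smul_apply, sub_apply]
    nlinarith [mul_nonneg hτ'.1 (hE x).le, hτ'.1, hτ'.2, hE x]
  have hPu : (qop θ).Phi (jX u) = jY (Et E τ) := by
    rw [Phi_jX, hu.eq, meanConst_apply, hu.mean, map_zero, add_zero]
  have hdist : ‖jY (Et E τ') - (qop θ).Phi (jX u)‖ ≤ r / (2 * K) := by
    have e : Et E τ' - Et E τ = (τ' - τ) • (E - 1) := by simp only [Et, sub_smul]; abel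
    rw [hPu, ← map_sub, e, map_smul, norm_smul, Real.norm_eq_abs]
    calc _ ≤ r / (2 * K) / (‖jY (E - 1)‖ + 1) * (‖jY (E - 1)‖ + 1) := by
          gcongr; linarith
      _ = _ := div_mul_cancel₀ _ (by positivity)
  obtain ⟨v, hv1, hv2, hv3, hv4⟩ := (qop θ).exists_solution hK hb hus hr hr1 hdist
  obtain ⟨U, rfl⟩ := exists_smooth hv2 hv3 hv4
  rw [Phi_jX] at hv2
  have hU := jY_injective hv2
  have hIU : I U = 0 := by
    have := congrArg I hU
    rw [map_add, I_MA, meanConst_apply, I_algebraMap, Et, map_add, map_smul, map_sub, hI, I_one,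
      sub_self, smul_zero] at this
    linarith
  rw [meanConst_apply, hIU, map_zero, add_zero] at hU
  refine ⟨U, ⟨hU, fun x => ?_, hIU⟩, hv3⟩
  have h1 : |La θ (U - u) x| ≤ 3 * C * r := by
    refine (hsup _ x).trans ?_
    rw [mul_comm 3 C, mul_assoc]
    refine mul_le_mul_of_nonneg_left ?_ hC.le
    refine (N_Lam_comm_le (lap_La θ) (N_La_le θ) _).trans ?_
    rw [← norm_jX, map_sub]
    linarith
  have h2 : 1 / M ≤ (1 + La θ u) x := by
    obtain ⟨-, -, -, hm, hmM⟩ := hco i x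
    have h3 := DFunLike.congr_fun hu.mul_mInv x
    rw [mul_apply, one_apply] at h3
    rw [div_le_iff₀ (by linarith), ← h3]
    exact mul_le_mul_of_nonneg_left hmM (hu.pos x).le
  have h3 : (1 + La θ U) x = (1 + La θ u) x + La θ (U - u) x := by
    rw [map_sub]
    simp only [add_apply, sub_apply]
    ring
  rw [h3]
  linarith [neg_le_of_abs_le h1]

lemma isSol_zero (E : TF) : IsSol θ (Et E 0) 0 := by
  refine ⟨?_, fun x => ?_, map_zero _⟩
  · simp [MA, Et]
  · rw [map_zero, add_zero, one_apply]
    exact one_pos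

lemma bil_zero (h : TF) : bil θ 0 h = lap h + DT h := by
  simp only [bil, map_zero, add_zero, one_mul, zero_mul, mul_zero, sub_zero, lap_eq θ, La_apply,
    Lb_apply]
  ring

lemma solvable_zero {E : TF} (hE : ∀ x, 0 < E x) : Solvable θ E 0 := by
  refine ⟨0, isSol_zero E, ?_⟩
  obtain ⟨K₀, hK₀, hap⟩ := (fam_path (θ := θ) hE).a_priori
  have hb := bound_of_smooth (hap ⟨(0, 0), ⟨le_rfl, zero_le_one⟩, isSol_zero E⟩)
  set A := (qop θ).DPhi (jX 0)
  have hcl : IsClosed (range A) :=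
    (AddMonoidHomClass.antilipschitz_of_bound A (K := ⟨K₀ / cst, (div_pos hK₀ cst_pos).le⟩)
      hb).isClosed_range A.uniformContinuous
  have hd : ∀ f : TF, jY f ∈ range A := by
    intro f
    rw [← hcl.closure_eq, Metric.mem_closure_iff]
    intro ε hε
    have hc := cst_pos
    obtain ⟨s, hs⟩ := exists_partialSum f (ε := ε / (2 * cst)) (by positivity)
    obtain ⟨h, hh⟩ := exists_solve_partialSum eT s f
    refine ⟨_, ⟨jX h, rfl⟩, ?_⟩
    have e : A (jX h) = jY (partialSum s f) := by
      rw [DPhi_jX, bil_zero, ← hh]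
      rfl
    rw [e, dist_eq_norm, ← map_sub, norm_jY]
    calc _ ≤ cst * (ε / (2 * cst)) := mul_le_mul_of_nonneg_left hs hc.le
      _ = ε / 2 := by field_simp
      _ < ε := half_lt_self hε
  intro y
  have : closure (range jY) ⊆ range A := hcl.closure_subset_iff.2 (by rintro _ ⟨f, rfl⟩; exact hd f)
  exact this (denseRange_jY y)

/-- The continuity method reaches the end of the path. -/
lemma exists_isSol (θ : ℝ) {E : TF} (hE : ∀ x, 0 < E x) (hI : I E = 1) : ∃ u, IsSol θ E u := by
  obtain ⟨δ, hδ, hstep⟩ := exists_step (θ := θ) hE hI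
  have key : ∀ n : ℕ, Solvable θ E (min 1 (n * δ)) := by
    intro n
    induction n with
    | zero =>
      rw [Nat.cast_zero, zero_mul, min_eq_right zero_le_one]
      exact solvable_zero hE
    | succ n ih =>
      refine hstep _ ⟨by positivity, min_le_left _ _⟩ _ ⟨by positivity, min_le_left _ _⟩ ?_ ih
      have h := abs_min_sub_min_le_max 1 (((n + 1 : ℕ) : ℝ) * δ) 1 (n * δ)
      refine h.trans (max_le (by simpa using hδ.le) ?_)
      push_cast
      rw [add_mul, one_mul, add_sub_cancel_left, abs_of_pos hδ]
  obtain ⟨n, hn⟩ := exists_nat_gt (1 / δ)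
  obtain ⟨u, hu, -⟩ := key n
  rw [min_eq_left ((div_lt_iff₀ hδ).1 hn).le] at hu
  have : Et E 1 = E := by simp [Et]
  exact ⟨u, this ▸ hu⟩

end KodairaThurston

namespace KodairaThurston

open TF

lemma Xd_eq (θ : ℝ) (f : TF) : Xd θ f = DX θ f := by
  funext x
  simp only [Xd, pd, DX, d_apply, eX, map_add, map_smul, smul_eq_mul]
  ring

lemma Yd_eq (θ : ℝ) (f : TF) : Yd θ f = DY θ f := by
  funext x
  simp only [Yd, pd, DY, d_apply, eY, map_add, map_smul, smul_eq_mul]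

lemma pd_two_eq (f : TF) : pd 2 f = DT f := rfl

lemma exists_solution (θ : ℝ) {E : TF} (hE : ∀ x, 0 < E x) (hI : I E = 1) :
    ∃ u : TF, (∀ x, (Xd θ (Xd θ u) x + 1) *
            (Yd θ (Yd θ u) x + pd 2 (pd 2 u) x + pd 2 u x + 1) -
          (Yd θ (Xd θ u) x) ^ 2 - (pd 2 (Xd θ u) x) ^ 2 = E x) ∧
      (∀ x, 0 < Xd θ (Xd θ u) x + 1) ∧
      (∀ x, 0 < Yd θ (Yd θ u) x + pd 2 (pd 2 u) x + pd 2 u x + 1) := by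
  obtain ⟨u, hu⟩ := exists_isSol θ hE hI
  refine ⟨u, ?_, ?_, ?_⟩ <;> intro x <;>
    simp only [Xd_eq, Yd_eq, pd_two_eq, DY_DX, DT_DX]
  · rw [← hu.eq, ← MA_apply]
    simp only [La_apply, Lb_apply, Lc_apply, Ld_apply, add_apply, one_apply]
    ring
  · have h := hu.pos x
    rw [La_apply, add_apply, one_apply] at h
    linarith
  · have h := hu.pos' hE x
    simp only [Lb_apply, add_apply, one_apply] at h
    linarith

end KodairaThurston

/-- The scalar PDE form of Theorem 1.1: for any `θ` and any smooth `ℤ³`-periodic `F` with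
`∫_{[0,1]³} (e^F − 1) = 0`, the reduced Calabi–Yau equation
`(u_XX + 1)(u_YY + u_tt + u_t + 1) − u_XY² − u_Xt² = e^F` admits a smooth `ℤ³`-periodic
solution satisfying the ellipticity conditions. -/
theorem solvability_kodaira_thurston (θ : ℝ)
    (F : EuclideanSpace ℝ (Fin 3) → ℝ) (hF : ContDiff ℝ (⊤ : ℕ∞) F)
    (hFper : ∀ (x a : EuclideanSpace ℝ (Fin 3)), (∀ i, ∃ k : ℤ, a i = (k : ℝ)) →
      F (x + a) = F x)
    (hnorm : ∫ x in {x : EuclideanSpace ℝ (Fin 3) | ∀ i, 0 ≤ x i ∧ x i ≤ 1},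
      (Real.exp (F x) - 1) = 0) :
    ∃ u : EuclideanSpace ℝ (Fin 3) → ℝ,
      ContDiff ℝ (⊤ : ℕ∞) u ∧
      (∀ (x a : EuclideanSpace ℝ (Fin 3)), (∀ i, ∃ k : ℤ, a i = (k : ℝ)) →
        u (x + a) = u x) ∧
      (∀ x, (Xd θ (Xd θ u) x + 1) *
            (Yd θ (Yd θ u) x + pd 2 (pd 2 u) x + pd 2 u x + 1) -
          (Yd θ (Xd θ u) x) ^ 2 - (pd 2 (Xd θ u) x) ^ 2 = Real.exp (F x)) ∧
      (∀ x, 0 < Xd θ (Xd θ u) x + 1) ∧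
      (∀ x, 0 < Yd θ (Yd θ u) x + pd 2 (pd 2 u) x + pd 2 u x + 1) := by
  let E : KodairaThurston.TF := .comp Real.exp Real.contDiff_exp ⟨F, hF, hFper⟩
  have hI : KodairaThurston.TF.I E = 1 := by
    have h : KodairaThurston.TF.I (E - 1) = 0 :=
      (KodairaThurston.TF.I_eq_integral _).trans hnorm
    rwa [map_sub, KodairaThurston.TF.I_one, sub_eq_zero] at h
  obtain ⟨u, h⟩ := KodairaThurston.exists_solution θ (E := E) (fun x => Real.exp_pos (F x)) hI
  exact ⟨u, u.smooth, u.periodic, h⟩
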